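/- arXiv:2005.11249 — 2 statements merged into one kernel-verified Lean document; each statement's English description precedes it below -/
import Mathlib

section
/- Let X be a centered Gaussian process on [A,B] with almost surely twice continuously differentiable sample paths and twice continuously differentiable covariance. Assume the variance σ²(t) attains its maximum S at a unique point t₀ ∈ [A,B], that t₀ = A or t₀ = B, and that (σ²)′(t₀) ≠ 0. Then there exist χ > 0, C > 0 and u₀ > 0 such that for all u ≥ u₀, |ℙ(max_{t∈[A,B]} |X(t)| ≥ u) − 2 ℙ(X(t₀) ≥ u)| ≤ C e^{−u²(1+χ)/(2S)}. -/
open MeasureTheory ProbabilityTheory Set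
open scoped NNReal

/-!
By symmetry it suffices to show that `{X t₀ < u ≤ X t for some t}` has probability
`O(exp (-(1 + χ) u² / (2 S)))`. By Fernique's theorem the oscillation of a Gaussian process on a
small neighbourhood has a Gaussian tail of arbitrarily large rate, so the supremum over such a
neighbourhood behaves like a single point; by compactness only the variance at each point matters.
Away from `t₀` the variance is less than `S`. Near `t₀`, the event forces a positive slope
`(X t - X t₀) / |t - t₀|`, so `X t` may be replaced by `X t + θ (X t - X t₀) / |t - t₀|`; since the
variance of `X` drops linearly away from `t₀`, this modified process has variance less than `S` for
small `θ > 0`. Differentiability of the paths makes the modified process converge at `t₀`, so the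
estimate by a single point applies there as well.
-/

open Filter Topology Asymptotics
open scoped ENNReal

section CenteredGaussianProcess

variable {Ω T : Type*} [MeasurableSpace Ω] {P : Measure Ω} {X : T → Ω → ℝ}

/-- A real Gaussian process indexed by `T`, all of whose members have mean zero. -/
structure IsCenteredGaussianProcess (X : T → Ω → ℝ) (P : Measure Ω) : Prop where
  isGaussianProcess : IsGaussianProcess X P
  integral_eq_zero (t : T) : ∫ ω, X t ω ∂P = 0

namespace IsCenteredGaussianProcess

lemma hasGaussianLaw (hX : IsCenteredGaussianProcess X P) (t : T) : HasGaussianLaw (X t) P :=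
  hX.isGaussianProcess.hasGaussianLaw_eval t

lemma aemeasurable (hX : IsCenteredGaussianProcess X P) (t : T) : AEMeasurable (X t) P :=
  (hX.hasGaussianLaw t).aemeasurable

lemma integrable (hX : IsCenteredGaussianProcess X P) (t : T) : Integrable (X t) P :=
  (hX.hasGaussianLaw t).integrable

lemma memLp_two (hX : IsCenteredGaussianProcess X P) (t : T) : MemLp (X t) 2 P :=
  (hX.hasGaussianLaw t).memLp_two

lemma integrable_sq (hX : IsCenteredGaussianProcess X P) (t : T) :
    Integrable (fun ω ↦ X t ω ^ 2) P :=
  (hX.memLp_two t).integrable_sq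

lemma map_eq_gaussianReal (hX : IsCenteredGaussianProcess X P) (t : T) :
    P.map (X t) = gaussianReal 0 (∫ ω, X t ω ^ 2 ∂P).toNNReal := by
  rw [(hX.hasGaussianLaw t).map_eq_gaussianReal,
    variance_of_integral_eq_zero (hX.aemeasurable t) (hX.integral_eq_zero t), hX.integral_eq_zero t]

lemma of_mem_span {T' : Type*} {Y : T' → Ω → ℝ} (hX : IsCenteredGaussianProcess X P)
    (hY : ∀ s, Y s ∈ Submodule.span ℝ (range X)) : IsCenteredGaussianProcess Y P := by
  simp only [Finsupp.mem_span_range_iff_exists_finsupp] at hY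
  choose c hc using hY
  have hY_eq (s : T') (ω : Ω) : Y s ω = ∑ t ∈ (c s).support, c s t * X t ω := by
    simp [← hc s, Finsupp.sum]
  refine ⟨hX.isGaussianProcess.of_isGaussianProcess fun s ↦ ⟨(c s).support,
    ∑ t : (c s).support, c s t • ContinuousLinearMap.proj t, fun ω ↦ ?_⟩, fun s ↦ ?_⟩
  · rw [hY_eq, ← Finset.sum_coe_sort]
    simp
  · simp only [hY_eq]
    rw [integral_finsetSum _ fun t _ ↦ (hX.integrable t).const_mul _]
    simp [integral_const_mul, hX.integral_eq_zero]

lemma comp {T' : Type*} (hX : IsCenteredGaussianProcess X P) (f : T' → T) :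
    IsCenteredGaussianProcess (fun s ↦ X (f s)) P :=
  hX.of_mem_span fun s ↦ Submodule.subset_span ⟨f s, rfl⟩

lemma neg (hX : IsCenteredGaussianProcess X P) :
    IsCenteredGaussianProcess (fun t ω ↦ -X t ω) P :=
  hX.of_mem_span fun t ↦ neg_mem (Submodule.subset_span ⟨t, rfl⟩)

lemma sub_const (hX : IsCenteredGaussianProcess X P) (t₀ : T) :
    IsCenteredGaussianProcess (fun t ω ↦ X t ω - X t₀ ω) P :=
  hX.of_mem_span fun t ↦
    sub_mem (Submodule.subset_span ⟨t, rfl⟩) (Submodule.subset_span ⟨t₀, rfl⟩)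

end IsCenteredGaussianProcess

lemma isCenteredGaussianProcess_of_forall_map_sum
    (h : ∀ (n : ℕ) (c : Fin n → ℝ) (t : Fin n → T),
      ∃ v : ℝ≥0, P.map (fun ω ↦ ∑ i, c i * X (t i) ω) = gaussianReal 0 v) :
    IsCenteredGaussianProcess X P := by
  classical
  have hX (t : T) : ∃ v : ℝ≥0, P.map (X t) = gaussianReal 0 v := by
    simpa using h 1 (fun _ ↦ 1) (fun _ ↦ t)
  have hX_meas (t : T) : AEMeasurable (X t) P :=
    aemeasurable_of_map_neZero (by rw [(hX t).choose_spec]; infer_instance)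
  refine ⟨⟨fun I ↦ ⟨isGaussian_of_map_eq_gaussianReal fun L ↦ ?_⟩⟩, fun t ↦ ?_⟩
  · let e := I.equivFin
    obtain ⟨v, hv⟩ := h _ (fun i ↦ L (Pi.single (e.symm i) 1)) (fun i ↦ e.symm i)
    refine ⟨0, v, ?_⟩
    rw [AEMeasurable.map_map_of_aemeasurable (by fun_prop)
      (aemeasurable_pi_lambda (fun ω ↦ I.restrict (X · ω)) fun t ↦ hX_meas t), ← hv]
    congr with ω
    have hL := L.toLinearMap.pi_apply_eq_sum_univ (I.restrict (X · ω))
    simp only [ContinuousLinearMap.coe_coe, Finset.restrict_def, smul_eq_mul] at hL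
    rw [Function.comp_apply, Finset.restrict_def, hL, ← e.symm.sum_comp]
    refine Finset.sum_congr rfl fun i _ ↦ ?_
    rw [mul_comm]
    congr 2
    ext j
    simp [Pi.single_apply, eq_comm]
  · obtain ⟨v, hv⟩ := hX t
    rw [← integral_map (f := fun x ↦ x) (hX_meas t) (by fun_prop), hv, integral_id_gaussianReal]

end CenteredGaussianProcess

section Tails

lemma hasSubgaussianMGF_of_map_eq_gaussianReal {Ω : Type*} [MeasurableSpace Ω] {P : Measure Ω}
    {G : Ω → ℝ} {v w : ℝ≥0} (hG : P.map G = gaussianReal 0 v) (hvw : v ≤ w) :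
    HasSubgaussianMGF G w P where
  integrable_exp_mul s := by
    have hG_meas : AEMeasurable G P := aemeasurable_of_map_neZero (by rw [hG]; infer_instance)
    have h_int := integrable_exp_mul_gaussianReal (μ := 0) (v := v) s
    rw [← hG] at h_int
    exact h_int.comp_aemeasurable hG_meas
  mgf_le s := by
    rw [mgf_gaussianReal hG, zero_mul, zero_add]
    gcongr

/-- Fernique's bound for the exponential square moment of a centered Gaussian measure which puts
mass at least `c` on the ball of radius `a`, uniformly in `a`; the formula is the one in
`lintegral_exp_mul_sq_norm_le_of_map_rotation_eq_self`. -/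
noncomputable def ferniqueBound (c : ℝ≥0∞) : ℝ≥0∞ :=
  ENNReal.ofReal (Real.exp (Fernique.logRatio c)) +
    ∑' n : ℕ, ENNReal.ofReal (Real.exp (-2⁻¹ * Real.log (c / (1 - c)).toReal * 2 ^ n))

lemma ferniqueBound_lt_top {c : ℝ≥0∞} (hc : 2⁻¹ < c) (hc_lt : c < 1) : ferniqueBound c < ⊤ := by
  have hc_sub : 1 - c < c := by
    refine (ENNReal.sub_lt_iff_lt_right hc_lt.ne_top hc_lt.le).2 ?_
    calc (1 : ℝ≥0∞) = 2⁻¹ + 2⁻¹ := ENNReal.inv_two_add_inv_two.symm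
      _ < c + c := ENNReal.add_lt_add hc hc
  have h_ratio : 1 < (c / (1 - c)).toReal := by
    rw [ENNReal.toReal_div, one_lt_div
      (ENNReal.toReal_pos (tsub_pos_of_lt hc_lt).ne' (by finiteness))]
    exact (ENNReal.toReal_lt_toReal (by finiteness) hc_lt.ne_top).2 hc_sub
  refine ENNReal.add_lt_top.2 ⟨ENNReal.ofReal_lt_top, Summable.tsum_ofReal_lt_top ?_⟩
  exact Real.summable_exp_nat_mul_of_ge
    (mul_neg_of_neg_of_pos (by norm_num) (Real.log_pos h_ratio))
    fun n ↦ mod_cast (Nat.lt_pow_self one_lt_two).le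

/-- Fernique's theorem. As the constant does not depend on `a`, the rate is arbitrarily large for
small `a`. -/
lemma measure_lt_norm_le_of_isGaussian {E : Type*} [NormedAddCommGroup E] [NormedSpace ℝ E]
    [SecondCountableTopology E] [CompleteSpace E] [MeasurableSpace E] [BorelSpace E]
    {μ : Measure E} [IsGaussian μ] (hμ : μ[id] = 0) {c : ℝ≥0∞} (hc : 2⁻¹ < c) (hc_lt : c < 1)
    {a b : ℝ} (ha : c ≤ μ {x | ‖x‖ ≤ a}) (hb : 0 ≤ b) :
    μ {x | b < ‖x‖} ≤
      ferniqueBound c * ENNReal.ofReal (Real.exp (-(Fernique.logRatio c * (b / a) ^ 2))) := by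
  set f : ℝ → ℝ≥0∞ :=
    fun y ↦ ENNReal.ofReal (Real.exp (Fernique.logRatio c * a⁻¹ ^ 2 * y ^ 2)) with hf
  have hf_mono {y : ℝ} (hy : b ≤ y) : f b ≤ f y := by
    have := Fernique.logRatio_pos hc hc_lt
    simp only [hf]
    gcongr
  calc μ {x | b < ‖x‖} ≤ μ {x | f b ≤ f ‖x‖} := measure_mono fun x hx ↦ hf_mono (le_of_lt hx)
    _ ≤ (∫⁻ x, f ‖x‖ ∂μ) / f b :=
      meas_ge_le_lintegral_div (by fun_prop) (by simp [hf, Real.exp_pos]) (by simp [hf])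
    _ ≤ ferniqueBound c / f b := by
      gcongr
      exact lintegral_exp_mul_sq_norm_le_of_map_rotation_eq_self
        (IsGaussian.map_rotation_eq_self hμ _) ha hc
    _ = _ := by
      rw [div_eq_mul_inv, ← ENNReal.ofReal_inv_of_pos (Real.exp_pos _), ← Real.exp_neg]
      ring_nf

namespace IsCenteredGaussianProcess

variable {Ω T : Type*} [MeasurableSpace Ω] {P : Measure Ω} {X : T → Ω → ℝ}

lemma measureReal_ge_le (hX : IsCenteredGaussianProcess X P) {t : T} {w x : ℝ}
    (hw : ∫ ω, X t ω ^ 2 ∂P ≤ w) (hx : 0 ≤ x) :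
    P.real {ω | x ≤ X t ω} ≤ Real.exp (-x ^ 2 / (2 * w)) := by
  have h := (hasSubgaussianMGF_of_map_eq_gaussianReal (hX.map_eq_gaussianReal t)
    (Real.toNNReal_mono hw)).measure_ge_le hx
  rwa [Real.coe_toNNReal w ((integral_nonneg fun ω ↦ sq_nonneg _).trans hw)] at h

lemma measure_exists_mem_finset_lt_abs_le (hX : IsCenteredGaussianProcess X P) {c : ℝ≥0∞}
    (hc : 2⁻¹ < c) (hc_lt : c < 1) (I : Finset T) {a b : ℝ} (ha₀ : 0 ≤ a)
    (ha : c ≤ P {ω | ∀ t ∈ I, |X t ω| ≤ a}) (hb : 0 ≤ b) :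
    P {ω | ∃ t ∈ I, b < |X t ω|} ≤
      ferniqueBound c * ENNReal.ofReal (Real.exp (-(Fernique.logRatio c * (b / a) ^ 2))) := by
  have hI := hX.isGaussianProcess.hasGaussianLaw I
  have hI_meas : AEMeasurable (fun ω ↦ I.restrict (X · ω)) P := hI.aemeasurable
  have := hI.isGaussian_map
  have h_mean : (P.map fun ω ↦ I.restrict (X · ω))[id] = 0 := by
    rw [integral_map hI_meas (by fun_prop)]
    ext t
    exact (eval_integral (fun s : I ↦ hX.integrable s) t).trans (hX.integral_eq_zero t)
  have h_norm_le (ω : Ω) : ‖I.restrict (X · ω)‖ ≤ a ↔ ∀ t ∈ I, |X t ω| ≤ a := by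
    simp [pi_norm_le_iff_of_nonneg ha₀]
  have h_lt_norm (ω : Ω) : b < ‖I.restrict (X · ω)‖ ↔ ∃ t ∈ I, b < |X t ω| := by
    simp [← not_le, pi_norm_le_iff_of_nonneg hb]
  have key := measure_lt_norm_le_of_isGaussian (a := a) (b := b) h_mean hc hc_lt ?_ hb
  · rw [Measure.map_apply_of_aemeasurable hI_meas
      (measurableSet_lt measurable_const measurable_norm)] at key
    simpa only [preimage_ofPred_eq, h_lt_norm] using key
  · rw [Measure.map_apply_of_aemeasurable hI_meas
      (measurableSet_le measurable_norm measurable_const)]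
    simpa only [preimage_ofPred_eq, h_norm_le] using ha

lemma measure_exists_lt_abs_le [Countable T] (hX : IsCenteredGaussianProcess X P) {c : ℝ≥0∞}
    (hc : 2⁻¹ < c) (hc_lt : c < 1) {a b : ℝ} (ha₀ : 0 ≤ a)
    (ha : c ≤ P {ω | ∀ t, |X t ω| ≤ a}) (hb : 0 ≤ b) :
    P {ω | ∃ t, b < |X t ω|} ≤
      ferniqueBound c * ENNReal.ofReal (Real.exp (-(Fernique.logRatio c * (b / a) ^ 2))) := by
  have h_union : {ω | ∃ t, b < |X t ω|} = ⋃ I : Finset T, {ω | ∃ t ∈ I, b < |X t ω|} := by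
    ext ω
    simp only [mem_ofPred_eq, mem_iUnion]
    exact ⟨fun ⟨t, ht⟩ ↦ ⟨{t}, t, by simp, ht⟩, fun ⟨_, t, _, ht⟩ ↦ ⟨t, ht⟩⟩
  have h_mono : Monotone fun I : Finset T ↦ {ω | ∃ t ∈ I, b < |X t ω|} :=
    fun I J hIJ ω ⟨t, ht, h⟩ ↦ ⟨t, hIJ ht, h⟩
  rw [h_union, h_mono.directed_le.measure_iUnion]
  exact iSup_le fun I ↦ hX.measure_exists_mem_finset_lt_abs_le hc hc_lt I ha₀
    (ha.trans (measure_mono fun ω h t _ ↦ h t)) hb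

lemma measure_exists_lt_abs_le_of_continuous [TopologicalSpace T]
    [TopologicalSpace.SeparableSpace T] (hX : IsCenteredGaussianProcess X P)
    (hX_cont : ∀ᵐ ω ∂P, Continuous (X · ω)) {c : ℝ≥0∞} (hc : 2⁻¹ < c) (hc_lt : c < 1) {a b : ℝ}
    (ha₀ : 0 ≤ a) (ha : c ≤ P {ω | ∀ t, |X t ω| ≤ a}) (hb : 0 ≤ b) :
    P {ω | ∃ t, b < |X t ω|} ≤
      ferniqueBound c * ENNReal.ofReal (Real.exp (-(Fernique.logRatio c * (b / a) ^ 2))) := by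
  obtain ⟨D, hD_countable, hD_dense⟩ := TopologicalSpace.exists_countable_dense T
  have := hD_countable.to_subtype
  calc P {ω | ∃ t, b < |X t ω|} ≤ P {ω | ∃ t : D, b < |X t ω|} := by
        refine measure_mono_ae ?_
        filter_upwards [hX_cont] with ω hω ⟨t, ht⟩
        obtain ⟨s, hs, hsD⟩ :=
          hD_dense.exists_mem_open (isOpen_lt continuous_const hω.abs) ⟨t, ht⟩
        exact ⟨⟨s, hs⟩, hsD⟩
    _ ≤ _ := (hX.comp ((↑) : D → T)).measure_exists_lt_abs_le hc hc_lt ha₀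
        (ha.trans (measure_mono fun ω h t ↦ h t)) hb

end IsCenteredGaussianProcess

end Tails

section LocalEstimate

/-- Functions which decay at infinity faster than `exp (-c u²)`, with a strictly better rate. -/
def IsGaussianNegligible (c : ℝ) (f : ℝ → ℝ) : Prop :=
  ∃ c' > c, f =O[atTop] fun u ↦ Real.exp (-(c' * u ^ 2))

namespace IsGaussianNegligible

variable {c : ℝ} {f g : ℝ → ℝ}

lemma zero : IsGaussianNegligible c fun _ ↦ 0 :=
  ⟨c + 1, lt_add_one c, isBigO_zero _ _⟩

lemma mono (hg : IsGaussianNegligible c g) (hfg : ∀ᶠ u in atTop, |f u| ≤ g u) :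
    IsGaussianNegligible c f :=
  let ⟨c', hc', hgO⟩ := hg
  ⟨c', hc', (IsBigO.of_bound' (hfg.mono fun _ h ↦ h.trans (le_abs_self _))).trans hgO⟩

lemma mono_of_nonneg (hg : IsGaussianNegligible c g) (hf : ∀ u, 0 ≤ f u) (hfg : ∀ u, f u ≤ g u) :
    IsGaussianNegligible c f :=
  hg.mono (Eventually.of_forall fun u ↦ (abs_of_nonneg (hf u)).trans_le (hfg u))

lemma add (hf : IsGaussianNegligible c f) (hg : IsGaussianNegligible c g) :
    IsGaussianNegligible c (f + g) := by
  obtain ⟨c₁, hc₁, hfO⟩ := hf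
  obtain ⟨c₂, hc₂, hgO⟩ := hg
  refine ⟨min c₁ c₂, lt_min hc₁ hc₂, (hfO.trans ?_).add (hgO.trans ?_)⟩ <;>
  · refine IsBigO.of_bound' (Eventually.of_forall fun u ↦ ?_)
    simp only [Real.norm_eq_abs, Real.abs_exp]
    gcongr
    simp

lemma exists_abs_le {S : ℝ} (hS : 0 < S) (hf : IsGaussianNegligible (1 / (2 * S)) f) :
    ∃ χ > 0, ∃ C > 0, ∃ u₀ > 0, ∀ u ≥ u₀,
      |f u| ≤ C * Real.exp (-(u ^ 2) * (1 + χ) / (2 * S)) := by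
  obtain ⟨c', hc', hfO⟩ := hf
  obtain ⟨C, hC, hfC⟩ := hfO.exists_pos
  obtain ⟨u₁, hu₁⟩ := eventually_atTop.1 hfC.bound
  refine ⟨c' * (2 * S) - 1, sub_pos.2 ((div_lt_iff₀ (by positivity)).1 hc'), C, hC,
    max u₁ 1, by positivity, fun u hu ↦ ?_⟩
  have h := hu₁ u ((le_max_left _ _).trans hu)
  rw [Real.norm_eq_abs, Real.norm_eq_abs, Real.abs_exp] at h
  convert h using 3
  field_simp
  ring

end IsGaussianNegligible

variable {Ω T : Type*} [MeasurableSpace Ω] {P : Measure Ω} [IsProbabilityMeasure P]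
  {X : T → Ω → ℝ} {l : Filter T} [l.IsCountablyGenerated]

lemma exists_mem_lt_measure_forall_abs_sub_le
    (hX_lim : ∀ᵐ ω ∂P, ∃ y, Tendsto (X · ω) l (𝓝 y)) {a : ℝ} (ha : 0 < a) {c : ℝ≥0∞} (hc : c < 1) :
    ∃ U ∈ l, c < P {ω | ∀ s ∈ U, ∀ t ∈ U, |X s ω - X t ω| ≤ a} := by
  obtain ⟨U, hU⟩ := l.exists_antitone_basis
  let E (n : ℕ) : Set Ω := {ω | ∀ s ∈ U n, ∀ t ∈ U n, |X s ω - X t ω| ≤ a}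
  have hE_mono : Monotone E := fun m n hmn ω hω s hs t ht ↦
    hω s (hU.antitone hmn hs) t (hU.antitone hmn ht)
  have hE_ae : ∀ᵐ ω ∂P, ω ∈ ⋃ n, E n := by
    filter_upwards [hX_lim] with ω ⟨y, hy⟩
    obtain ⟨n, -, hn⟩ := hU.toHasBasis.mem_iff.1 (hy (Metric.closedBall_mem_nhds y (half_pos ha)))
    refine mem_iUnion.2 ⟨n, fun s hs t ht ↦ ?_⟩
    calc |X s ω - X t ω| = dist (X s ω) (X t ω) := (Real.dist_eq _ _).symm
      _ ≤ dist (X s ω) y + dist (X t ω) y := dist_triangle_right _ _ _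
      _ ≤ a / 2 + a / 2 := add_le_add (hn hs) (hn ht)
      _ = a := add_halves a
  have hE_one : P (⋃ n, E n) = 1 :=
    (measure_congr (eventuallyEq_univ.2 hE_ae)).trans measure_univ
  have hE_lim := tendsto_measure_iUnion_atTop (μ := P) hE_mono
  rw [hE_one] at hE_lim
  obtain ⟨n, hn⟩ := (hE_lim.eventually_const_lt hc).exists
  exact ⟨U n, hU.mem n, hn⟩

namespace IsCenteredGaussianProcess

/-- In a small neighbourhood the oscillation is at most a small `a` with probability `3/4`, so
Fernique's theorem gives it a Gaussian tail of rate proportional to `a⁻²`. -/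
lemma exists_mem_isBigO_oscillation [TopologicalSpace T] [SecondCountableTopology T]
    (hX : IsCenteredGaussianProcess X P) (hX_cont : ∀ᵐ ω ∂P, Continuous (X · ω))
    (hX_lim : ∀ᵐ ω ∂P, ∃ y, Tendsto (X · ω) l (𝓝 y)) {ε c : ℝ} (hε : 0 < ε) (hc : 0 < c) :
    ∃ U ∈ l, ∀ t ∈ U, (fun u ↦ P.real {ω | ∃ s ∈ U, ε * u < |X s ω - X t ω|}) =O[atTop]
      fun u ↦ Real.exp (-(c * u ^ 2)) := by
  have h_half : (2⁻¹ : ℝ≥0∞) < 3 / 4 := by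
    rw [← ENNReal.toReal_lt_toReal (by finiteness) (by finiteness)]
    norm_num
  have h_one : (3 / 4 : ℝ≥0∞) < 1 := by
    rw [← ENNReal.toReal_lt_toReal (by finiteness) (by finiteness)]
    norm_num
  set γ := Fernique.logRatio (3 / 4)
  have hγ : 0 < γ := Fernique.logRatio_pos h_half h_one
  set a := ε * √(γ / c)
  have ha : 0 < a := by positivity
  have h_rate (u : ℝ) : γ * (ε * u / a) ^ 2 = c * u ^ 2 := by
    simp only [a, div_pow, mul_pow, Real.sq_sqrt (by positivity : 0 ≤ γ / c)]
    field_simp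
  obtain ⟨U, hU, hUa⟩ := exists_mem_lt_measure_forall_abs_sub_le hX_lim ha h_one
  refine ⟨U, hU, fun t ht ↦ IsBigO.of_bound (ferniqueBound (3 / 4)).toReal ?_⟩
  filter_upwards [eventually_ge_atTop 0] with u hu
  have hU_proc := (hX.sub_const t).comp ((↑) : U → T)
  have h_tail := hU_proc.measure_exists_lt_abs_le_of_continuous (b := ε * u)
    (hX_cont.mono fun ω hω ↦ (hω.comp continuous_subtype_val).sub continuous_const) h_half h_one
    ha.le (hUa.le.trans (measure_mono fun ω hω s ↦ hω s s.2 t ht)) (by positivity)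
  have h_tail_real := ENNReal.toReal_mono
    (ENNReal.mul_ne_top (ferniqueBound_lt_top h_half h_one).ne ENNReal.ofReal_ne_top) h_tail
  rw [ENNReal.toReal_mul, ENNReal.toReal_ofReal (Real.exp_nonneg _), h_rate] at h_tail_real
  simpa [measureReal_def, abs_of_nonneg] using h_tail_real

/-- One point of small variance suffices, as the oscillation around it is negligible. -/
lemma exists_mem_isGaussianNegligible_of_frequently [TopologicalSpace T]
    [SecondCountableTopology T] (hX : IsCenteredGaussianProcess X P)
    (hX_cont : ∀ᵐ ω ∂P, Continuous (X · ω))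
    (hX_lim : ∀ᵐ ω ∂P, ∃ y, Tendsto (X · ω) l (𝓝 y)) {w S : ℝ} (hwS : w < S)
    (hw : ∃ᶠ t in l, ∫ ω, X t ω ^ 2 ∂P ≤ w) :
    ∃ U ∈ l, IsGaussianNegligible (1 / (2 * S)) fun u ↦ P.real {ω | ∃ s ∈ U, u ≤ X s ω} := by
  have hw₀ : 0 ≤ w :=
    let ⟨t, ht⟩ := hw.exists
    (integral_nonneg fun ω ↦ sq_nonneg _).trans ht
  obtain ⟨w', hww', hw'S⟩ := exists_between hwS
  have hw' : 0 < w' := hw₀.trans_lt hww'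
  have hS : 0 < S := hw'.trans hw'S
  obtain ⟨ρ, hρw, hρ1⟩ : ∃ ρ, √(w' / S) < ρ ∧ ρ < 1 :=
    exists_between (by rwa [Real.sqrt_lt' one_pos, one_pow, div_lt_one hS])
  have hρ : 0 < ρ := (Real.sqrt_nonneg _).trans_lt hρw
  rw [Real.sqrt_lt' hρ, div_lt_iff₀ hS] at hρw
  set c' := ρ ^ 2 / (2 * w')
  have hc' : 1 / (2 * S) < c' := by
    rw [div_lt_div_iff₀ (by positivity) (by positivity)]
    linarith
  obtain ⟨U, hU, h_osc⟩ := hX.exists_mem_isBigO_oscillation hX_cont hX_lim (sub_pos.2 hρ1)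
    ((by positivity : 0 < 1 / (2 * S)).trans hc')
  obtain ⟨t, ht, htU⟩ := (hw.and_eventually hU).exists
  have h_tail : (fun u ↦ P.real {ω | ρ * u ≤ X t ω}) =O[atTop]
      fun u ↦ Real.exp (-(c' * u ^ 2)) := by
    refine IsBigO.of_bound' ?_
    filter_upwards [eventually_ge_atTop 0] with u hu
    have h := hX.measureReal_ge_le (ht.trans hww'.le) (mul_nonneg hρ.le hu)
    rw [Real.norm_eq_abs, Real.norm_eq_abs, Real.abs_exp, abs_of_nonneg measureReal_nonneg]
    convert h using 2
    simp only [c']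
    ring
  refine ⟨U, hU, IsGaussianNegligible.mono_of_nonneg ⟨c', hc', (h_osc t htU).add h_tail⟩
    (fun u ↦ measureReal_nonneg) fun u ↦ (measureReal_mono ?_).trans (measureReal_union_le _ _)⟩
  rintro ω ⟨s, hs, hus⟩
  by_cases h : (1 - ρ) * u < |X s ω - X t ω|
  · exact Or.inl ⟨s, hs, h⟩
  · right
    have := (abs_le.1 (not_lt.1 h)).2
    simp only [mem_ofPred_eq]
    linarith

end IsCenteredGaussianProcess

end LocalEstimate

section SecondMoments

variable {Ω T : Type*} [MeasurableSpace Ω] {P : Measure Ω} {X : T → Ω → ℝ} {l : Filter T}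

lemma integral_cos_of_map_eq_gaussianReal {G : Ω → ℝ} {v : ℝ≥0}
    (hG : P.map G = gaussianReal 0 v) : ∫ ω, Real.cos (G ω) ∂P = Real.exp (-v / 2) := by
  have hG_meas : AEMeasurable G P := aemeasurable_of_map_neZero (by rw [hG]; infer_instance)
  have h_int : Integrable (fun x : ℝ ↦ Complex.exp (x * Complex.I)) (gaussianReal 0 v) :=
    Integrable.of_bound (by fun_prop) 1 (ae_of_all _ fun x ↦ (Complex.norm_exp_ofReal_mul_I x).le)
  calc ∫ ω, Real.cos (G ω) ∂P = ∫ x, Real.cos x ∂gaussianReal 0 v := by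
        rw [← hG, integral_map hG_meas (by fun_prop)]
    _ = (charFun (gaussianReal 0 v) 1).re := by
        rw [charFun_apply_real]
        simpa [Complex.exp_ofReal_mul_I_re] using integral_re h_int
    _ = Real.exp (-v / 2) := by
        rw [charFun_gaussianReal, ← Complex.exp_ofReal_re]
        simp [neg_div]

namespace IsCenteredGaussianProcess

variable [IsProbabilityMeasure P] [l.IsCountablyGenerated]

/-- By dominated convergence `∫ cos (X t) → 1`, and this integral is `exp (-(∫ X t ^ 2) / 2)`. -/
lemma tendsto_integral_sq_zero (hX : IsCenteredGaussianProcess X P)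
    (hX_lim : ∀ᵐ ω ∂P, Tendsto (X · ω) l (𝓝 0)) :
    Tendsto (fun t ↦ ∫ ω, X t ω ^ 2 ∂P) l (𝓝 0) := by
  have h_cos : Tendsto (fun t ↦ ∫ ω, Real.cos (X t ω) ∂P) l (𝓝 (∫ _, Real.cos 0 ∂P)) := by
    refine tendsto_integral_filter_of_dominated_convergence (fun _ ↦ 1)
      (Eventually.of_forall fun t ↦
        (Real.measurable_cos.comp_aemeasurable (hX.aemeasurable t)).aestronglyMeasurable)
      (Eventually.of_forall fun t ↦ ae_of_all _ fun ω ↦ Real.abs_cos_le_one _)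
      (integrable_const 1) ?_
    filter_upwards [hX_lim] with ω hω
    exact (Real.continuous_cos.tendsto 0).comp hω
  have h_log := (h_cos.log (by simp)).const_mul (-2)
  simp only [Real.cos_zero, integral_const, probReal_univ, one_smul, Real.log_one, mul_zero]
    at h_log
  refine h_log.congr fun t ↦ ?_
  rw [integral_cos_of_map_eq_gaussianReal (hX.map_eq_gaussianReal t), Real.log_exp,
    Real.coe_toNNReal _ (integral_nonneg fun ω ↦ sq_nonneg _)]
  ring

lemma exists_eventually_integral_sq_le (hX : IsCenteredGaussianProcess X P)
    (hX_lim : ∀ᵐ ω ∂P, ∃ y, Tendsto (X · ω) l (𝓝 y)) :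
    ∃ w, ∀ᶠ t in l, ∫ ω, X t ω ^ 2 ∂P ≤ w := by
  have h_diff : IsCenteredGaussianProcess (fun (p : T × T) ω ↦ X p.1 ω - X p.2 ω) P :=
    hX.of_mem_span fun p ↦
      sub_mem (Submodule.subset_span ⟨p.1, rfl⟩) (Submodule.subset_span ⟨p.2, rfl⟩)
  have h_zero := h_diff.tendsto_integral_sq_zero (l := l ×ˢ l) <| by
    filter_upwards [hX_lim] with ω ⟨y, hy⟩
    simpa using (hy.comp tendsto_fst).sub (hy.comp tendsto_snd)
  obtain ⟨U, hU, hU_lt⟩ :=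
    (eventually_prod_self_iff (r := fun s t ↦ ∫ ω, (X s ω - X t ω) ^ 2 ∂P < 1)).1
      (h_zero.eventually_lt_const one_pos)
  obtain rfl | ⟨s, hs⟩ := U.eq_empty_or_nonempty
  · exact ⟨0, mem_of_superset hU (empty_subset _)⟩
  refine ⟨2 * 1 + 2 * ∫ ω, X s ω ^ 2 ∂P, mem_of_superset hU fun t ht ↦ ?_⟩
  calc ∫ ω, X t ω ^ 2 ∂P
      ≤ ∫ ω, (2 * (X t ω - X s ω) ^ 2 + 2 * X s ω ^ 2) ∂P :=
        integral_mono (hX.integrable_sq t) (((h_diff.integrable_sq (t, s)).const_mul 2).add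
          ((hX.integrable_sq s).const_mul 2)) fun ω ↦ by
            nlinarith only [sq_nonneg (X t ω - 2 * X s ω)]
    _ = 2 * ∫ ω, (X t ω - X s ω) ^ 2 ∂P + 2 * ∫ ω, X s ω ^ 2 ∂P := by
        rw [integral_add ((h_diff.integrable_sq (t, s)).const_mul 2)
          ((hX.integrable_sq s).const_mul 2), integral_const_mul, integral_const_mul]
    _ ≤ 2 * 1 + 2 * ∫ ω, X s ω ^ 2 ∂P := by
        gcongr
        exact (hU_lt t ht s hs).le

end IsCenteredGaussianProcess

lemma integral_add_mul_slope_sq {Y Z : Ω → ℝ} (hY : MemLp Y 2 P) (hZ : MemLp Z 2 P) {d : ℝ}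
    (hd : d ≠ 0) (θ : ℝ) :
    ∫ ω, (Y ω + θ * ((Y ω - Z ω) / d)) ^ 2 ∂P =
      ∫ ω, Y ω ^ 2 ∂P + θ / d * (∫ ω, Y ω ^ 2 ∂P - ∫ ω, Z ω ^ 2 ∂P) +
        (θ * d + θ ^ 2) * ∫ ω, ((Y ω - Z ω) / d) ^ 2 ∂P := by
  have h_diff : Integrable (fun ω ↦ θ / d * (Y ω ^ 2 - Z ω ^ 2)) P :=
    (hY.integrable_sq.sub hZ.integrable_sq).const_mul _
  have h_slope : Integrable (fun ω ↦ (θ * d + θ ^ 2) * ((Y ω - Z ω) / d) ^ 2) P := by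
    simp only [div_pow]
    exact ((hY.sub hZ).integrable_sq.div_const (d ^ 2)).const_mul _
  rw [← integral_sub hY.integrable_sq hZ.integrable_sq, ← integral_const_mul,
    ← integral_const_mul, ← integral_add hY.integrable_sq h_diff,
    ← integral_add (f := fun ω ↦ Y ω ^ 2 + θ / d * (Y ω ^ 2 - Z ω ^ 2))
      (hY.integrable_sq.add h_diff) h_slope]
  congr with ω
  field_simp
  ring

end SecondMoments

section Maximum

variable {Ω T : Type*} [MeasurableSpace Ω] {P : Measure Ω} [MetricSpace T]
  {X : T → Ω → ℝ} {t₀ : T}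

namespace IsCenteredGaussianProcess

lemma slope_dist (hX : IsCenteredGaussianProcess X P) (t₀ : T) :
    IsCenteredGaussianProcess (fun t ω ↦ (X t ω - X t₀ ω) / dist t t₀) P :=
  hX.of_mem_span fun t ↦ by
    have h (s : T) : X s ∈ Submodule.span ℝ (range X) := Submodule.subset_span ⟨s, rfl⟩
    convert Submodule.smul_mem _ (dist t t₀)⁻¹ (Submodule.sub_mem _ (h t) (h t₀)) using 1
    ext ω
    simp [div_eq_inv_mul]

lemma add_mul_slope_dist (hX : IsCenteredGaussianProcess X P) (t₀ : T) (θ : ℝ) :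
    IsCenteredGaussianProcess (fun t ω ↦ X t ω + θ * ((X t ω - X t₀ ω) / dist t t₀)) P :=
  hX.of_mem_span fun t ↦ by
    have h (s : T) : X s ∈ Submodule.span ℝ (range X) := Submodule.subset_span ⟨s, rfl⟩
    convert Submodule.add_mem _ (h t)
      (Submodule.smul_mem _ (θ / dist t t₀) (Submodule.sub_mem _ (h t) (h t₀))) using 1
    ext ω
    simp [div_mul_eq_mul_div, mul_div_assoc]

variable [IsProbabilityMeasure P]

/-- Adding a small multiple `θ` of the slope lowers the variance near `t₀`: the covariance of `X t`
with the slope is asymptotically half the (negative) slope of the variance. -/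
lemma exists_eventually_integral_add_mul_slope_sq_le (hX : IsCenteredGaussianProcess X P)
    (hX_slope : ∀ᵐ ω ∂P, ∃ y, Tendsto (fun t ↦ (X t ω - X t₀ ω) / dist t t₀) (𝓝[≠] t₀) (𝓝 y))
    {S κ : ℝ} (hS : ∫ ω, X t₀ ω ^ 2 ∂P = S) (hκ : 0 < κ)
    (hvar : ∀ᶠ t in 𝓝[≠] t₀, ∫ ω, X t ω ^ 2 ∂P ≤ S - κ * dist t t₀) :
    ∃ θ > 0, ∃ w < S, ∀ᶠ t in 𝓝[≠] t₀,
      ∫ ω, (X t ω + θ * ((X t ω - X t₀ ω) / dist t t₀)) ^ 2 ∂P ≤ w := by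
  obtain ⟨w₀, hw₀⟩ := (hX.slope_dist t₀).exists_eventually_integral_sq_le hX_slope
  set w := max w₀ 1
  have hw : 0 < w := lt_max_of_lt_right one_pos
  set θ := κ / (3 * w)
  have hθ : 0 < θ := by positivity
  have hθw : θ * w = κ / 3 := by
    simp only [θ]
    field_simp
  refine ⟨θ, hθ, S - θ * κ / 3, sub_lt_self S (by positivity), ?_⟩
  have h_dist : ∀ᶠ t in 𝓝[≠] t₀, dist t t₀ < θ :=
    nhdsWithin_le_nhds (Metric.ball_mem_nhds t₀ hθ)
  filter_upwards [hw₀, hvar, h_dist, self_mem_nhdsWithin] with t ht_slope ht_var ht_dist ht_ne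
  have hd : 0 < dist t t₀ := dist_pos.2 ht_ne
  rw [integral_add_mul_slope_sq (hX.memLp_two t) (hX.memLp_two t₀) hd.ne', hS]
  calc _ ≤ S + θ / dist t t₀ * (-(κ * dist t t₀)) + (θ * θ + θ ^ 2) * w := by
        have : 0 ≤ ∫ ω, ((X t ω - X t₀ ω) / dist t t₀) ^ 2 ∂P :=
          integral_nonneg fun ω ↦ sq_nonneg _
        gcongr
        · exact ht_var.trans (sub_le_self S (by positivity))
        · linarith
        · exact ht_slope.trans (le_max_left _ _)
    _ = S - θ * κ + 2 * θ * (θ * w) := by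
        field_simp
        ring
    _ = S - θ * κ / 3 := by
        rw [hθw]
        ring

/-- When `X t₀ < u ≤ X t`, the slope from `t₀` to `t` is positive, so adding a multiple of it to
`X t` keeps the value above `u`. -/
lemma exists_mem_nhds_isGaussianNegligible_of_slope [SecondCountableTopology T]
    [(𝓝[≠] t₀).NeBot] (hX : IsCenteredGaussianProcess X P) (hX_cont : ∀ᵐ ω ∂P, Continuous (X · ω))
    (hX_slope : ∀ᵐ ω ∂P, ∃ y, Tendsto (fun t ↦ (X t ω - X t₀ ω) / dist t t₀) (𝓝[≠] t₀) (𝓝 y))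
    {S κ : ℝ} (hS : ∫ ω, X t₀ ω ^ 2 ∂P = S) (hκ : 0 < κ)
    (hvar : ∀ᶠ t in 𝓝[≠] t₀, ∫ ω, X t ω ^ 2 ∂P ≤ S - κ * dist t t₀) :
    ∃ U ∈ 𝓝 t₀,
      IsGaussianNegligible (1 / (2 * S)) fun u ↦ P.real {ω | ∃ t ∈ U, X t₀ ω < u ∧ u ≤ X t ω} := by
  obtain ⟨θ, hθ, w, hwS, hw⟩ :=
    hX.exists_eventually_integral_add_mul_slope_sq_le hX_slope hS hκ hvar
  let ι : ({t₀}ᶜ : Set T) → T := (↑)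
  let l := comap ι (𝓝 t₀)
  have hl : map ι l = 𝓝[≠] t₀ := map_comap_setCoe_val _ _
  rw [← hl, eventually_map] at hw
  have hl_neBot : l.NeBot := (map_neBot_iff ι).1 (hl ▸ inferInstance)
  have hZ := (hX.add_mul_slope_dist t₀ θ).comp ι
  have hZ_cont : ∀ᵐ ω ∂P,
      Continuous fun s ↦ X (ι s) ω + θ * ((X (ι s) ω - X t₀ ω) / dist (ι s) t₀) := by
    filter_upwards [hX_cont] with ω hω
    have h : Continuous fun s ↦ X (ι s) ω := hω.comp continuous_subtype_val
    exact h.add (((h.sub continuous_const).div (continuous_subtype_val.dist continuous_const)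
      fun s ↦ (dist_pos.2 s.2).ne').const_mul θ)
  have hZ_lim : ∀ᵐ ω ∂P, ∃ y,
      Tendsto (fun s ↦ X (ι s) ω + θ * ((X (ι s) ω - X t₀ ω) / dist (ι s) t₀)) l (𝓝 y) := by
    filter_upwards [hX_cont, hX_slope] with ω hω ⟨y, hy⟩
    rw [← hl] at hy
    exact ⟨X t₀ ω + θ * y,
      ((hω.tendsto t₀).comp tendsto_comap).add ((tendsto_map'_iff.1 hy).const_mul θ)⟩
  obtain ⟨U, ⟨V, hV, hVU⟩, hU⟩ := hZ.exists_mem_isGaussianNegligible_of_frequently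
    hZ_cont hZ_lim hwS hw.frequently
  refine ⟨V, hV, hU.mono_of_nonneg (fun u ↦ measureReal_nonneg) fun u ↦
    measureReal_mono fun ω ⟨t, htV, ht₀u, hut⟩ ↦ ?_⟩
  have ht : t ≠ t₀ := fun h ↦ (ht₀u.trans_le hut).ne (h ▸ rfl)
  have h_slope : 0 ≤ (X t ω - X t₀ ω) / dist t t₀ :=
    div_nonneg (sub_nonneg.2 (ht₀u.trans_le hut).le) dist_nonneg
  exact ⟨⟨t, ht⟩, hVU htV, hut.trans (le_add_of_nonneg_right (mul_nonneg hθ.le h_slope))⟩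

lemma isGaussianNegligible_exists_lt_le [CompactSpace T] [(𝓝[≠] t₀).NeBot]
    (hX : IsCenteredGaussianProcess X P) (hX_cont : ∀ᵐ ω ∂P, Continuous (X · ω))
    (hX_slope : ∀ᵐ ω ∂P, ∃ y, Tendsto (fun t ↦ (X t ω - X t₀ ω) / dist t t₀) (𝓝[≠] t₀) (𝓝 y))
    {S κ : ℝ} (hS : ∫ ω, X t₀ ω ^ 2 ∂P = S) (hS_lt : ∀ t ≠ t₀, ∫ ω, X t ω ^ 2 ∂P < S)
    (hκ : 0 < κ) (hvar : ∀ᶠ t in 𝓝[≠] t₀, ∫ ω, X t ω ^ 2 ∂P ≤ S - κ * dist t t₀) :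
    IsGaussianNegligible (1 / (2 * S)) fun u ↦ P.real {ω | ∃ t, X t₀ ω < u ∧ u ≤ X t ω} := by
  suffices IsGaussianNegligible (1 / (2 * S))
      fun u ↦ P.real {ω | ∃ t ∈ univ, X t₀ ω < u ∧ u ≤ X t ω} by simpa using this
  refine isCompact_univ.induction_on (p := fun U ↦ IsGaussianNegligible (1 / (2 * S))
    fun u ↦ P.real {ω | ∃ t ∈ U, X t₀ ω < u ∧ u ≤ X t ω}) ?_ ?_ ?_ ?_
  · simpa using IsGaussianNegligible.zero
  · exact fun U V hUV hV ↦ hV.mono_of_nonneg (fun u ↦ measureReal_nonneg) fun u ↦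
      measureReal_mono fun ω ⟨t, ht, h⟩ ↦ ⟨t, hUV ht, h⟩
  · refine fun U V hU hV ↦ (hU.add hV).mono_of_nonneg (fun u ↦ measureReal_nonneg) fun u ↦
      (measureReal_mono ?_).trans (measureReal_union_le _ _)
    rintro ω ⟨t, ht | ht, h⟩
    exacts [Or.inl ⟨t, ht, h⟩, Or.inr ⟨t, ht, h⟩]
  · intro t _
    rw [nhdsWithin_univ]
    obtain rfl | ht := eq_or_ne t t₀
    · exact hX.exists_mem_nhds_isGaussianNegligible_of_slope hX_cont hX_slope hS hκ hvar
    · obtain ⟨U, hU, hU_negl⟩ := hX.exists_mem_isGaussianNegligible_of_frequently (l := 𝓝 t) hX_cont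
        (hX_cont.mono fun ω hω ↦ ⟨X t ω, hω.tendsto t⟩) (hS_lt t ht)
        fun h ↦ h.self_of_nhds le_rfl
      exact ⟨U, hU, hU_negl.mono_of_nonneg (fun u ↦ measureReal_nonneg) fun u ↦
        measureReal_mono fun ω ⟨s, hs, _, hus⟩ ↦ ⟨s, hs, hus⟩⟩

end IsCenteredGaussianProcess

end Maximum

section AbsoluteMaximum

variable {Ω T : Type*} [MeasurableSpace Ω] {P : Measure Ω} {X : T → Ω → ℝ} {t₀ : T}

namespace IsCenteredGaussianProcess

lemma measureReal_le_neg (hX : IsCenteredGaussianProcess X P) (t : T) (u : ℝ) :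
    P.real {ω | u ≤ -X t ω} = P.real {ω | u ≤ X t ω} := by
  have h_map : P.map (fun ω ↦ -X t ω) = P.map (X t) := by
    rw [hX.neg.map_eq_gaussianReal, hX.map_eq_gaussianReal]
    simp only [neg_sq]
  have h := congrArg (fun μ : Measure ℝ ↦ μ.real (Ici u)) h_map
  rwa [map_measureReal_apply_of_aemeasurable (hX.neg.aemeasurable t) measurableSet_Ici,
    map_measureReal_apply_of_aemeasurable (hX.aemeasurable t) measurableSet_Ici] at h

lemma abs_measureReal_exists_le_abs_sub_le [IsProbabilityMeasure P]
    (hX : IsCenteredGaussianProcess X P) (t₀ : T) {u : ℝ} (hu : 0 < u) :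
    |P.real {ω | ∃ t, u ≤ |X t ω|} - 2 * P.real {ω | u ≤ X t₀ ω}| ≤
      P.real {ω | ∃ t, X t₀ ω < u ∧ u ≤ X t ω} +
        P.real {ω | ∃ t, -X t₀ ω < u ∧ u ≤ -X t ω} := by
  have h_two : P.real ({ω | u ≤ X t₀ ω} ∪ {ω | u ≤ -X t₀ ω}) = 2 * P.real {ω | u ≤ X t₀ ω} := by
    have h_disj : Disjoint {ω | u ≤ X t₀ ω} {ω | u ≤ -X t₀ ω} :=
      disjoint_left.2 fun ω (h : u ≤ X t₀ ω) (h' : u ≤ -X t₀ ω) ↦ by linarith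
    have h_meas : NullMeasurableSet {ω | u ≤ -X t₀ ω} P :=
      (hX.neg.aemeasurable t₀).nullMeasurableSet_preimage measurableSet_Ici
    rw [measureReal_union₀ h_meas h_disj.aedisjoint, hX.measureReal_le_neg, two_mul]
  have h_subset : {ω | u ≤ X t₀ ω} ∪ {ω | u ≤ -X t₀ ω} ⊆ {ω | ∃ t, u ≤ |X t ω|} := by
    rintro ω (h | h)
    exacts [⟨t₀, le_abs.2 (.inl h)⟩, ⟨t₀, le_abs.2 (.inr h)⟩]
  have h_cover : {ω | ∃ t, u ≤ |X t ω|} ⊆ ({ω | u ≤ X t₀ ω} ∪ {ω | u ≤ -X t₀ ω}) ∪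
      ({ω | ∃ t, X t₀ ω < u ∧ u ≤ X t ω} ∪ {ω | ∃ t, -X t₀ ω < u ∧ u ≤ -X t ω}) := by
    rintro ω ⟨t, ht⟩
    rcases le_abs.1 ht with h | h
    · exact (le_or_gt u (X t₀ ω)).imp .inl fun h₀ ↦ .inl ⟨t, h₀, h⟩
    · exact (le_or_gt u (-X t₀ ω)).imp .inr fun h₀ ↦ .inr ⟨t, h₀, h⟩
  rw [← h_two, abs_of_nonneg (sub_nonneg.2 (measureReal_mono h_subset)), sub_le_iff_le_add']
  exact (measureReal_mono h_cover).trans ((measureReal_union_le _ _).trans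
    (add_le_add_right (measureReal_union_le _ _) _))

lemma isGaussianNegligible_exists_le_abs_sub [IsProbabilityMeasure P] [MetricSpace T]
    [CompactSpace T] [(𝓝[≠] t₀).NeBot] (hX : IsCenteredGaussianProcess X P)
    (hX_cont : ∀ᵐ ω ∂P, Continuous (X · ω))
    (hX_slope : ∀ᵐ ω ∂P, ∃ y, Tendsto (fun t ↦ (X t ω - X t₀ ω) / dist t t₀) (𝓝[≠] t₀) (𝓝 y))
    {S κ : ℝ} (hS : ∫ ω, X t₀ ω ^ 2 ∂P = S) (hS_lt : ∀ t ≠ t₀, ∫ ω, X t ω ^ 2 ∂P < S)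
    (hκ : 0 < κ) (hvar : ∀ᶠ t in 𝓝[≠] t₀, ∫ ω, X t ω ^ 2 ∂P ≤ S - κ * dist t t₀) :
    IsGaussianNegligible (1 / (2 * S))
      fun u ↦ P.real {ω | ∃ t, u ≤ |X t ω|} - 2 * P.real {ω | u ≤ X t₀ ω} := by
  have h_pos := hX.isGaussianNegligible_exists_lt_le hX_cont hX_slope hS hS_lt hκ hvar
  have h_slope_neg : ∀ᵐ ω ∂P, ∃ y,
      Tendsto (fun t ↦ (-X t ω - -X t₀ ω) / dist t t₀) (𝓝[≠] t₀) (𝓝 y) := by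
    filter_upwards [hX_slope] with ω ⟨y, hy⟩
    exact ⟨-y, hy.neg.congr fun t ↦ by ring⟩
  have h_neg := hX.neg.isGaussianNegligible_exists_lt_le (hX_cont.mono fun ω hω ↦ hω.neg)
    h_slope_neg (by simpa only [neg_sq] using hS) (by simpa only [neg_sq] using hS_lt) hκ
    (by simpa only [neg_sq] using hvar)
  exact (h_pos.add h_neg).mono <|
    (eventually_gt_atTop 0).mono fun u hu ↦ hX.abs_measureReal_exists_le_abs_sub_le t₀ hu

end IsCenteredGaussianProcess

end AbsoluteMaximum

section Interval

lemma tendsto_div_dist_of_hasDerivWithinAt {f : ℝ → ℝ} {f' ε : ℝ} {s : Set ℝ} {t₀ : s}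
    (hf : HasDerivWithinAt f f' s t₀) (hs : ∀ t ∈ s, dist t t₀ = ε * (t - t₀)) :
    Tendsto (fun t : s ↦ (f t - f t₀) / dist t t₀) (𝓝[≠] t₀) (𝓝 (f' / ε)) := by
  have h_coe : Tendsto ((↑) : s → ℝ) (𝓝[≠] t₀) (𝓝[s \ {↑t₀}] t₀) :=
    tendsto_nhdsWithin_iff.2 ⟨continuous_subtype_val.continuousWithinAt,
      eventually_mem_nhdsWithin.mono fun t ht ↦ ⟨t.2, Subtype.coe_injective.ne ht⟩⟩
  refine (((hasDerivWithinAt_iff_tendsto_slope.1 hf).comp h_coe).div_const ε).congr fun t ↦ ?_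
  rw [Subtype.dist_eq, hs t t.2, Function.comp_apply, slope_def_field, div_div, mul_comm]

lemma exists_dist_eq_mul_sub {A B t₀ : ℝ} (ht₀ : t₀ = A ∨ t₀ = B) :
    ∃ ε ≠ 0, ∀ t ∈ Icc A B, dist t t₀ = ε * (t - t₀) := by
  obtain rfl | rfl := ht₀
  · exact ⟨1, one_ne_zero, fun t ht ↦ by
      rw [Real.dist_eq, abs_of_nonneg (sub_nonneg.2 ht.1), one_mul]⟩
  · exact ⟨-1, by norm_num, fun t ht ↦ by
      rw [Real.dist_eq, abs_of_nonpos (sub_nonpos.2 ht.2), neg_one_mul]⟩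

lemma eq_left_or_eq_right_of_derivWithin_ne_zero {f : ℝ → ℝ} {A B t₀ : ℝ} (ht₀ : t₀ ∈ Icc A B)
    (hmax : IsMaxOn f (Icc A B) t₀) (hder : derivWithin f (Icc A B) t₀ ≠ 0) :
    t₀ = A ∨ t₀ = B := by
  by_contra! h
  have h_nhds : Icc A B ∈ 𝓝 t₀ := Icc_mem_nhds (ht₀.1.lt_of_ne' h.1) (ht₀.2.lt_of_ne h.2)
  rw [derivWithin_of_mem_nhds h_nhds] at hder
  exact hder (hmax.isLocalMax h_nhds).deriv_eq_zero

lemma exists_eventually_le_sub_mul_dist {f : ℝ → ℝ} {f' ε : ℝ} {s : Set ℝ} {t₀ : s}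
    [(𝓝[≠] t₀).NeBot] (hf : HasDerivWithinAt f f' s t₀) (hf' : f' ≠ 0) (hε : ε ≠ 0)
    (hs : ∀ t ∈ s, dist t t₀ = ε * (t - t₀)) (hmax : IsMaxOn f s t₀) :
    ∃ κ > 0, ∀ᶠ t : s in 𝓝[≠] t₀, f t ≤ f t₀ - κ * dist t t₀ := by
  have h_lim := tendsto_div_dist_of_hasDerivWithinAt hf hs
  have h_neg : f' / ε < 0 := lt_of_le_of_ne (le_of_tendsto' h_lim fun t ↦
    div_nonpos_of_nonpos_of_nonneg (sub_nonpos.2 (hmax t.2)) dist_nonneg) (div_ne_zero hf' hε)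
  refine ⟨-(f' / ε / 2), by linarith, ?_⟩
  filter_upwards [h_lim.eventually_lt_const (by linarith : f' / ε < f' / ε / 2),
    self_mem_nhdsWithin] with t ht ht_ne
  rw [div_lt_iff₀ (dist_pos.2 ht_ne)] at ht
  linarith

lemma isGaussianNegligible_exists_mem_Icc_le_abs_sub {Ω : Type*} [MeasurableSpace Ω]
    {P : Measure Ω} [IsProbabilityMeasure P] {A B : ℝ} (hAB : A < B) {X : ℝ → Ω → ℝ}
    (hX : IsCenteredGaussianProcess (fun t : Icc A B ↦ X t) P)
    (hX_cont : ∀ᵐ ω ∂P, ContinuousOn (X · ω) (Icc A B)) {t₀ : Icc A B}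
    (hX_diff : ∀ᵐ ω ∂P, DifferentiableWithinAt ℝ (X · ω) (Icc A B) t₀)
    (hlt : ∀ t ∈ Icc A B, t ≠ t₀ → ∫ ω, X t ω ^ 2 ∂P < ∫ ω, X t₀ ω ^ 2 ∂P)
    (hder : derivWithin (fun t ↦ ∫ ω, X t ω ^ 2 ∂P) (Icc A B) t₀ ≠ 0) :
    IsGaussianNegligible (1 / (2 * ∫ ω, X t₀ ω ^ 2 ∂P))
      fun u ↦ P.real {ω | ∃ t ∈ Icc A B, u ≤ |X t ω|} - 2 * P.real {ω | u ≤ X t₀ ω} := by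
  have := Subtype.connectedSpace (isConnected_Icc hAB.le)
  have := (Icc_infinite hAB).nontrivial.coe_sort
  have hmax : IsMaxOn (fun t ↦ ∫ ω, X t ω ^ 2 ∂P) (Icc A B) t₀ := isMaxOn_iff.2 fun t ht ↦ by
    obtain h | h := eq_or_ne t t₀
    exacts [h ▸ le_rfl, (hlt t ht h).le]
  obtain ⟨ε, hε, h_dist⟩ :=
    exists_dist_eq_mul_sub (eq_left_or_eq_right_of_derivWithin_ne_zero t₀.2 hmax hder)
  obtain ⟨κ, hκ, hvar⟩ := exists_eventually_le_sub_mul_dist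
    (differentiableWithinAt_of_derivWithin_ne_zero hder).hasDerivWithinAt hder hε h_dist hmax
  have h_cont : ∀ᵐ ω ∂P, Continuous fun t : Icc A B ↦ X t ω :=
    hX_cont.mono fun ω hω ↦ continuousOn_iff_continuous_domRestrict.1 hω
  have h_slope : ∀ᵐ ω ∂P, ∃ y, Tendsto (fun t : Icc A B ↦ (X t ω - X t₀ ω) / dist t t₀)
      (𝓝[≠] t₀) (𝓝 y) :=
    hX_diff.mono fun ω hω ↦ ⟨_, tendsto_div_dist_of_hasDerivWithinAt hω.hasDerivWithinAt h_dist⟩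
  have key := hX.isGaussianNegligible_exists_le_abs_sub h_cont h_slope rfl
    (fun t ht ↦ hlt t t.2 (Subtype.coe_injective.ne ht)) hκ hvar
  simpa only [Subtype.exists, exists_prop] using key

end Interval

theorem statement0_general
    {Ω : Type*} [MeasurableSpace Ω] (P : Measure Ω) [IsProbabilityMeasure P]
    (A B : ℝ) (hAB : A < B) (X : ℝ → Ω → ℝ)
    (hGauss : ∀ (n : ℕ) (c : Fin n → ℝ) (t : Fin n → ℝ), (∀ i, t i ∈ Icc A B) →
      ∃ v : ℝ≥0, P.map (fun ω ↦ ∑ i, c i * X (t i) ω) = gaussianReal 0 v)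
    (hcont : ∀ᵐ ω ∂P, ContinuousOn (X · ω) (Icc A B))
    (t₀ : ℝ) (ht₀ : t₀ ∈ Icc A B)
    (hdiff : ∀ᵐ ω ∂P, DifferentiableWithinAt ℝ (X · ω) (Icc A B) t₀)
    (σsq : ℝ → ℝ) (hσsq : ∀ t, σsq t = ∫ ω, X t ω ^ 2 ∂P)
    (hlt : ∀ t ∈ Icc A B, t ≠ t₀ → σsq t < σsq t₀)
    (hder : derivWithin σsq (Icc A B) t₀ ≠ 0) :
    ∃ χ > (0 : ℝ), ∃ C > (0 : ℝ), ∃ u₀ > (0 : ℝ), ∀ u ≥ u₀,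
      |P.real {ω | ∃ t ∈ Icc A B, u ≤ |X t ω|} - 2 * P.real {ω | u ≤ X t₀ ω}| ≤
        C * Real.exp (-(u ^ 2) * (1 + χ) / (2 * σsq t₀)) := by
  obtain rfl : σsq = fun t ↦ ∫ ω, X t ω ^ 2 ∂P := funext hσsq
  obtain ⟨t, ht, ht_ne⟩ := (Icc_infinite hAB).nontrivial.exists_ne t₀
  have hS : 0 < ∫ ω, X t₀ ω ^ 2 ∂P :=
    (integral_nonneg fun ω ↦ sq_nonneg (X t ω)).trans_lt (hlt t ht ht_ne)
  have hX : IsCenteredGaussianProcess (fun t : Icc A B ↦ X t) P :=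
    isCenteredGaussianProcess_of_forall_map_sum fun n c t ↦ hGauss n c (t ·) fun i ↦ (t i).2
  exact (isGaussianNegligible_exists_mem_Icc_le_abs_sub hAB hX hcont (t₀ := ⟨t₀, ht₀⟩) hdiff hlt
    hder).exists_abs_le hS

/-- Let `X` be a centered Gaussian process on `[A,B]` with a.s. twice
continuously differentiable sample paths and twice continuously differentiable covariance.
If the variance `σ²(t) = r t t` attains its maximum `S` at a unique point `t₀ ∈ [A,B]`
which is an endpoint, and `(σ²)′(t₀) ≠ 0`, then there are `χ > 0`, `C > 0`, `u₀ > 0` with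
`|ℙ(max_{[A,B]} |X| ≥ u) − 2 ℙ(X(t₀) ≥ u)| ≤ C e^{−u²(1+χ)/(2S)}` for all `u ≥ u₀`. -/
theorem statement0
    {Ω : Type*} [MeasurableSpace Ω] (P : Measure Ω) [IsProbabilityMeasure P]
    (A B : ℝ) (hAB : A < B)
    (X : ℝ → Ω → ℝ)
    (hjm : Measurable (Function.uncurry X))
    (hGauss : ∀ (n : ℕ) (c : Fin n → ℝ) (t : Fin n → ℝ),
      (∀ i, t i ∈ Set.Icc A B) →
      ∃ v : ℝ≥0, Measure.map (fun ω => ∑ i, c i * X (t i) ω) P = gaussianReal 0 v)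
    (hpaths : ∀ᵐ ω ∂P, ContDiffOn ℝ 2 (fun t => X t ω) (Set.Icc A B))
    (r : ℝ → ℝ → ℝ)
    (hr : ∀ s t, r s t = ∫ ω, X s ω * X t ω ∂P)
    (hrC2 : ContDiffOn ℝ 2 (fun q : ℝ × ℝ => r q.1 q.2) (Set.Icc A B ×ˢ Set.Icc A B))
    (t₀ : ℝ) (ht₀ : t₀ ∈ Set.Icc A B)
    (hmax : ∀ t ∈ Set.Icc A B, r t t ≤ r t₀ t₀)
    (huniq : ∀ t ∈ Set.Icc A B, r t t = r t₀ t₀ → t = t₀)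
    (hend : t₀ = A ∨ t₀ = B)
    (hder : derivWithin (fun t => r t t) (Set.Icc A B) t₀ ≠ 0) :
    ∃ χ > (0:ℝ), ∃ C > (0:ℝ), ∃ u₀ > (0:ℝ), ∀ u ≥ u₀,
      |(P {ω | ∃ t ∈ Set.Icc A B, u ≤ |X t ω|}).toReal
          - 2 * (P {ω | u ≤ X t₀ ω}).toReal|
        ≤ C * Real.exp (-(u ^ 2) * (1 + χ) / (2 * r t₀ t₀)) := by
  exact statement0_general P A B hAB X hGauss (hpaths.mono fun ω hω ↦ hω.continuousOn) t₀ ht₀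
    (hpaths.mono fun ω hω ↦ hω.differentiableOn two_ne_zero t₀ ht₀) (fun t ↦ r t t)
    (fun t ↦ by simp only [hr, pow_two])
    (fun t ht h ↦ (hmax t ht).lt_of_ne fun h_eq ↦ h (huniq t ht h_eq)) hder
end

section
/- Let X be a centered Gaussian process on [A,B] with almost surely twice continuously differentiable sample paths and twice continuously differentiable covariance. Assume the variance σ²(t) attains its maximum S at a unique point t₀ ∈ (A,B], that (σ²)′(t₀) = 0, and that ℙ(∂ₜX(t₀) = 0) < 1. Then there exist δ > 0, χ > 0, C > 0 and u₀ > 0 such that for all u ≥ u₀, |ℙ(max_{t∈[A,B]} |X(t)| ≥ u) − 2 E[N_u^+(𝓜(δ))]| ≤ C e^{−u²(1+χ)/(2S)}. -/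
open MeasureTheory ProbabilityTheory Set
open scoped NNReal

/-! Away from `t₀` the variance stays below `S`, so exceeding `u` there is negligible. The variance
is maximal and stationary at `t₀`, hence `E[X(t₀) X''(t₀)] = -E[X'(t₀)²] < 0`, and so
`E[X(s) X''(t)] < 0` for `s, t` near `t₀`. Two up-crossings of `u` near `t₀` enclose a point where
`X'' > 0`, although `X(s) ≈ u` pushes `X''` down by an amount proportional to `u`. The part of
`X''` that is independent of `X(s)` has to make up for it, which costs a Gaussian factor on top of
`exp (-u² / (2 S))`. Up to negligible terms there is therefore at most one up-crossing, and the
expected number of up-crossings is the probability of having one, which is the probability that the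
maximum of `X` exceeds `u`. The symmetry `X ↦ -X` produces the factor `2`.

Rice's formula is not needed: expected numbers of crossings only have to be bounded from above, and
the density of the time spent near the level is such a bound. -/

section
open Filter Topology Metric
open scoped ENNReal

/-- `f` is twice continuously differentiable on `s`, with derivatives `f'` and `f''`. The
derivatives are carried along as functions so that, for a random `f`, they can be treated as
processes of their own. -/
structure HasContSecondDerivOn (f f' f'' : ℝ → ℝ) (s : Set ℝ) : Prop where
  hasDerivWithinAt : ∀ t ∈ s, HasDerivWithinAt f (f' t) s t
  hasDerivWithinAt_deriv : ∀ t ∈ s, HasDerivWithinAt f' (f'' t) s t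
  continuousOn_secondDeriv : ContinuousOn f'' s

namespace HasContSecondDerivOn

variable {f f' f'' : ℝ → ℝ} {s t : Set ℝ} {a b : ℝ}

lemma of_contDiffOn (hs : UniqueDiffOn ℝ s) (hf : ContDiffOn ℝ 2 f s) :
    HasContSecondDerivOn f (derivWithin f s) (derivWithin (derivWithin f s) s) s := by
  have h2 : ContDiffOn ℝ (1 + 1) f s := by norm_num; exact hf
  obtain ⟨hd, -, h1⟩ := (contDiffOn_succ_iff_derivWithin hs).1 h2
  obtain ⟨hd', -, h0⟩ := (contDiffOn_succ_iff_derivWithin (n := 0) hs).1 (by simpa using h1)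
  exact ⟨fun x hx => (hd x hx).hasDerivWithinAt, fun x hx => (hd' x hx).hasDerivWithinAt,
    h0.continuousOn⟩

lemma mono (h : HasContSecondDerivOn f f' f'' s) (hts : t ⊆ s) : HasContSecondDerivOn f f' f'' t :=
  ⟨fun x hx => (h.hasDerivWithinAt x (hts hx)).mono hts,
    fun x hx => (h.hasDerivWithinAt_deriv x (hts hx)).mono hts,
    h.continuousOn_secondDeriv.mono hts⟩

lemma continuousOn (h : HasContSecondDerivOn f f' f'' s) : ContinuousOn f s :=
  fun x hx => (h.hasDerivWithinAt x hx).continuousWithinAt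

lemma continuousOn_deriv (h : HasContSecondDerivOn f f' f'' s) : ContinuousOn f' s :=
  fun x hx => (h.hasDerivWithinAt_deriv x hx).continuousWithinAt

lemma abs_sub_le_mul_sq (h : HasContSecondDerivOn f f' f'' (Icc a b)) {K x y : ℝ}
    (hK : ∀ z ∈ Icc a b, |f'' z| ≤ K) (hx : x ∈ Icc a b) (hy : y ∈ Icc a b) (hx0 : f' x = 0) :
    |f y - f x| ≤ K * (y - x) ^ 2 := by
  have hsub : uIcc x y ⊆ Icc a b := ordConnected_Icc.uIcc_subset hx hy
  have hderiv : ∀ z ∈ uIcc x y, |f' z| ≤ K * |y - x| := fun z hz => by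
    have hz' := (convex_Icc a b).norm_image_sub_le_of_norm_hasDerivWithin_le
      h.hasDerivWithinAt_deriv hK hx (hsub hz)
    rw [hx0, sub_zero] at hz'
    exact hz'.trans (mul_le_mul_of_nonneg_left (abs_sub_left_of_mem_uIcc hz)
      ((abs_nonneg _).trans (hK x hx)))
  have hmvt := (convex_uIcc x y).norm_image_sub_le_of_norm_hasDerivWithin_le
    (h.mono hsub).hasDerivWithinAt hderiv left_mem_uIcc right_mem_uIcc
  simpa only [Real.norm_eq_abs, mul_assoc, ← sq, sq_abs] using hmvt

end HasContSecondDerivOn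

lemma exists_rat_mem_Icc_lt {g : ℝ → ℝ} {a b c t : ℝ} (hab : a < b)
    (hg : ContinuousOn g (Icc a b)) (ht : t ∈ Icc a b) (hc : c < g t) :
    ∃ q : ℚ, (q : ℝ) ∈ Icc a b ∧ c < g q := by
  obtain ⟨U, hUo, htU, hU⟩ := mem_nhdsWithin.1 ((hg t ht).eventually_const_lt hc)
  have hmeet : (U ∩ Ioo a b).Nonempty :=
    mem_closure_iff.1 (by rwa [closure_Ioo hab.ne]) U hUo htU
  obtain ⟨q, hqU, hq⟩ := Rat.denseRange_cast.exists_mem_open (hUo.inter isOpen_Ioo) hmeet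
  exact ⟨q, Ioo_subset_Icc_self hq, hU ⟨hqU, Ioo_subset_Icc_self hq⟩⟩

/-- Rolle between the crossings gives a zero of `f'`, from which `f'` has to increase again. -/
lemma HasContSecondDerivOn.exists_rat_secondDeriv_pos_of_two_upcrossings {f f' f'' : ℝ → ℝ}
    {a b s t : ℝ} (h : HasContSecondDerivOn f f' f'' (Icc a b)) (hs : s ∈ Icc a b)
    (ht : t ∈ Icc a b) (hst : s < t) (heq : f s = f t) (hpos : 0 < f' t) :
    ∃ q : ℚ, (q : ℝ) ∈ Icc a b ∧ 0 < f'' q := by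
  have hsub : Icc s t ⊆ Icc a b := Icc_subset_Icc hs.1 ht.2
  have hst' := h.mono hsub
  obtain ⟨r, hr, hr0⟩ := exists_hasDerivAt_eq_zero hst hst'.continuousOn heq fun x hx =>
    (hst'.hasDerivWithinAt x (Ioo_subset_Icc_self hx)).hasDerivAt (Icc_mem_nhds hx.1 hx.2)
  have hrt' := hst'.mono (Icc_subset_Icc_left hr.1.le)
  obtain ⟨x, hx, hslope⟩ := exists_hasDerivAt_eq_slope f' f'' hr.2 hrt'.continuousOn_deriv
    fun x hx => (hrt'.hasDerivWithinAt_deriv x (Ioo_subset_Icc_self hx)).hasDerivAt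
      (Icc_mem_nhds hx.1 hx.2)
  refine exists_rat_mem_Icc_lt (hs.1.trans_lt (hst.trans_le ht.2)) h.continuousOn_secondDeriv
    (hsub ⟨hr.1.le.trans hx.1.le, hx.2.le⟩) ?_
  rw [hslope, hr0, sub_zero]
  exact div_pos hpos (sub_pos.2 hr.2)

lemma nonneg_of_hasDerivWithinAt_of_forall_lt_left {f : ℝ → ℝ} {a d x u : ℝ} (hax : a < x)
    (hd : HasDerivWithinAt f d (Icc a x) x) (hfx : f x = u) (hlt : ∀ s ∈ Ico a x, f s < u) :
    0 ≤ d := by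
  have hslope := (hasDerivWithinAt_iff_tendsto_slope' (s := Ioo a x) (by simp)).1
    (hd.mono Ioo_subset_Icc_self)
  have : (𝓝[Ioo a x] x).NeBot := right_nhdsWithin_Ioo_neBot hax
  refine ge_of_tendsto hslope (eventually_mem_nhdsWithin.mono fun y hy => ?_)
  rw [slope_def_field, hfx]
  exact div_nonneg_of_nonpos (sub_nonpos.2 (hlt y ⟨hy.1.le, hy.2⟩).le) (sub_nonpos.2 hy.2.le)

lemma exists_upcrossing_of_exists_le {f f' : ℝ → ℝ} {a b u : ℝ}
    (hf : ∀ t ∈ Icc a b, HasDerivWithinAt f (f' t) (Icc a b) t) (ha : f a < u)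
    (hex : ∃ t ∈ Icc a b, u ≤ f t) (hnt : ∀ t ∈ Icc a b, f t = u → f' t ≠ 0) :
    ∃ t ∈ Icc a b, f t = u ∧ 0 < f' t := by
  have hcont : ContinuousOn f (Icc a b) := fun x hx => (hf x hx).continuousWithinAt
  obtain ⟨τ, ⟨hτ, hτu⟩, hmin⟩ := (isCompact_Icc.of_isClosed_subset
    (hcont.preimage_isClosed_of_isClosed isClosed_Icc isClosed_Ici)
    inter_subset_left).exists_isLeast hex
  have hlt : ∀ s ∈ Ico a τ, f s < u := fun s hs => by
    by_contra! hus
    exact hs.2.not_ge (hmin ⟨⟨hs.1, hs.2.le.trans hτ.2⟩, hus⟩)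
  have haτ : a < τ := hτ.1.lt_of_ne (by rintro rfl; exact ha.not_ge hτu)
  have hsub : Icc a τ ⊆ Icc a b := Icc_subset_Icc_right hτ.2
  have heq : f τ = u := by
    obtain ⟨s, hs, hsu⟩ := intermediate_value_Icc haτ.le (hcont.mono hsub) ⟨ha.le, hτu⟩
    have : s = τ := hs.2.eq_or_lt.resolve_right fun h => (hlt s ⟨hs.1, h⟩).ne hsu
    rwa [← this]
  exact ⟨τ, hτ, heq, (nonneg_of_hasDerivWithinAt_of_forall_lt_left haτ ((hf τ hτ).mono hsub) heq
    hlt).lt_of_ne (hnt τ hτ heq).symm⟩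

lemma secondDeriv_nonpos_of_isMaxOn {f f' : ℝ → ℝ} {a b c x : ℝ} (hx : x ∈ Ioc a b)
    (hf : ∀ t ∈ Icc a b, HasDerivWithinAt f (f' t) (Icc a b) t) (hmax : IsMaxOn f (Icc a b) x)
    (hx0 : f' x = 0) (hc : HasDerivWithinAt f' c (Icc a b) x) : c ≤ 0 := by
  by_contra! hpos
  have hsub : Ioo a x ⊆ Icc a b := fun y hy => ⟨hy.1.le, hy.2.le.trans hx.2⟩
  have hslope : ∀ᶠ y in 𝓝[<] x, 0 < slope f' x y := by
    rw [← nhdsWithin_Ioo_eq_nhdsLT hx.1]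
    exact ((hasDerivWithinAt_iff_tendsto_slope' (by simp)).1 (hc.mono hsub)).eventually_const_lt
      hpos
  obtain ⟨l, hl, hneg⟩ := (mem_nhdsLT_iff_exists_mem_Ico_Ioo_subset hx.1).1 hslope
  have hcont : ContinuousOn f (Icc l x) := fun y hy =>
    ((hf y ⟨hl.1.trans hy.1, hy.2.trans hx.2⟩).continuousWithinAt).mono
      (Icc_subset_Icc hl.1 hx.2)
  obtain ⟨y, hy, hyslope⟩ := exists_hasDerivAt_eq_slope f f' hl.2 hcont fun y hy =>
    (hf y (hsub ⟨hl.1.trans_lt hy.1, hy.2⟩)).hasDerivAt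
      (Icc_mem_nhds (hl.1.trans_lt hy.1) (hy.2.trans_le hx.2))
  have hy_neg : f' y < 0 := by
    have : 0 < slope f' x y := hneg hy
    rw [slope_def_field, hx0, sub_zero] at this
    by_contra! hy0
    exact this.not_ge (div_nonpos_of_nonneg_of_nonpos hy0 (sub_nonpos.2 hy.2.le))
  have hle : f l ≤ f x := hmax ⟨hl.1, hl.2.le.trans hx.2⟩
  rw [hyslope] at hy_neg
  exact hy_neg.not_ge (div_nonneg (sub_nonneg.2 hle) (sub_nonneg.2 hl.2.le))

/-! ### Time spent near a level -/

lemma ofReal_le_volume_Icc_inter_ball {a b d t : ℝ} (ht : t ∈ Icc a b) (hd : d ≤ (b - a) / 2) :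
    ENNReal.ofReal d ≤ volume (Icc a b ∩ ball t d) := by
  rw [Real.ball_eq_Ioo]
  rcases le_total t ((a + b) / 2) with h | h
  · calc ENNReal.ofReal d = volume (Ioo t (t + d)) := by simp
      _ ≤ volume (Icc a b ∩ Ioo (t - d) (t + d)) := measure_mono fun x hx =>
        ⟨⟨ht.1.trans hx.1.le, by linarith [hx.2]⟩, by linarith [hx.1, hx.2], hx.2⟩
  · calc ENNReal.ofReal d = volume (Ioo (t - d) t) := by simp
      _ ≤ volume (Icc a b ∩ Ioo (t - d) (t + d)) := measure_mono fun x hx =>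
        ⟨⟨by linarith [hx.1], hx.2.le.trans ht.2⟩, hx.1, by linarith [hx.1, hx.2]⟩

lemma HasContSecondDerivOn.ofReal_le_volume_of_tangency {f f' f'' : ℝ → ℝ} {a b K t d : ℝ}
    (h : HasContSecondDerivOn f f' f'' (Icc a b)) (hK0 : 0 < K)
    (hK : ∀ x ∈ Icc a b, |f'' x| ≤ K) (ht : t ∈ Icc a b) (h0 : f' t = 0)
    (hd : d ≤ (b - a) / 2) :
    ENNReal.ofReal d ≤ volume {s | s ∈ Icc a b ∧ |f s - f t| < K * d ^ 2} := by
  refine (ofReal_le_volume_Icc_inter_ball ht hd).trans (measure_mono fun s hs => ⟨hs.1, ?_⟩)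
  have hsd : (s - t) ^ 2 < d ^ 2 := sq_lt_sq' (abs_lt.1 hs.2).1 (abs_lt.1 hs.2).2
  exact (h.abs_sub_le_mul_sq hK ht hs.1 h0).trans_lt (mul_lt_mul_of_pos_left hsd hK0)

lemma eventually_pairwiseDisjoint_ball (F : Finset ℝ) :
    ∀ᶠ d in 𝓝[>] (0 : ℝ), (F : Set ℝ).PairwiseDisjoint fun t => ball t d := by
  have hpair : ∀ p ∈ F.offDiag, ∀ᶠ d in 𝓝[>] (0 : ℝ), Disjoint (ball p.1 d) (ball p.2 d) :=
    fun p hp => by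
      have hdist : 0 < dist p.1 p.2 := dist_pos.2 (Finset.mem_offDiag.1 hp).2.2
      filter_upwards [Ioo_mem_nhdsGT (half_pos hdist)] with d hd
      exact ball_disjoint_ball (by linarith [hd.2])
  filter_upwards [(Finset.eventually_all _).2 hpair] with d hd s hs t ht hst
  exact hd (s, t) (Finset.mem_offDiag.2 ⟨hs, ht, hst⟩)

lemma eventually_card_mul_le_volume {a b K u : ℝ} (hab : a < b) (hK : 0 < K) {g : ℝ → ℝ}
    (hg : ∀ x ∈ Icc a b, ∀ y ∈ Icc a b, |g y - g x| ≤ K * |y - x|)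
    {U : Set ℝ} (hU : IsOpen U) (F : Finset ℝ) (hF : ∀ t ∈ F, t ∈ Icc a b ∩ U ∧ g t = u) :
    ∀ᶠ ε in 𝓝[>] (0 : ℝ), (F.card : ℝ≥0∞) * ENNReal.ofReal (ε / K) ≤
      volume {t | t ∈ Icc a b ∩ U ∧ |g t - u| < ε} := by
  have hballs : ∀ᶠ d in 𝓝[>] (0 : ℝ), ∀ t ∈ F, ball t d ⊆ U :=
    (Finset.eventually_all F).2 fun t ht => by
      obtain ⟨η, hη, hηU⟩ := isOpen_iff.1 hU t (hF t ht).1.2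
      filter_upwards [Ioo_mem_nhdsGT hη] with d hd using (ball_subset_ball hd.2.le).trans hηU
  have hdiv : Tendsto (fun ε : ℝ => ε / K) (𝓝[>] 0) (𝓝[>] 0) := by
    refine tendsto_nhdsWithin_iff.2 ⟨?_, eventually_mem_nhdsWithin.mono fun ε hε => div_pos hε hK⟩
    exact ((continuous_id.div_const K).tendsto' 0 0 (zero_div K)).mono_left nhdsWithin_le_nhds
  have hradius : ∀ᶠ d in 𝓝[>] (0 : ℝ), d ∈ Ioo 0 ((b - a) / 2) :=
    Ioo_mem_nhdsGT (half_pos (sub_pos.2 hab))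
  filter_upwards [hdiv.eventually (hballs.and ((eventually_pairwiseDisjoint_ball F).and
    hradius))] with ε ⟨hεU, hdisj, hε⟩
  calc (F.card : ℝ≥0∞) * ENNReal.ofReal (ε / K)
      ≤ ∑ t ∈ F, volume (Icc a b ∩ ball t (ε / K)) := by
        rw [← nsmul_eq_mul]
        exact Finset.card_nsmul_le_sum _ _ _ fun t ht =>
          ofReal_le_volume_Icc_inter_ball (hF t ht).1.1 hε.2.le
    _ = volume (⋃ t ∈ F, Icc a b ∩ ball t (ε / K)) :=
        (measure_biUnion_finset (hdisj.mono fun _ => inter_subset_right)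
          fun _ _ => measurableSet_Icc.inter measurableSet_ball).symm
    _ ≤ _ := measure_mono <| iUnion₂_subset fun t ht x hx => by
        refine ⟨⟨hx.1, hεU t ht hx.2⟩, ?_⟩
        rw [← (hF t ht).2]
        exact (hg t (hF t ht).1.1 x hx.1).trans_lt ((lt_div_iff₀' hK).1 hx.2)

/-! ### Gaussian spaces -/

section FunctionSpace

variable {Ω : Type*} {V : Submodule ℝ (Ω → ℝ)}

lemma comp_dual_mem {ι : Type*} [Finite ι] {Y : ι → Ω → ℝ} (hY : ∀ i, Y i ∈ V)
    (L : StrongDual ℝ (ι → ℝ)) : (L ∘ fun ω i => Y i ω) ∈ V := by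
  classical
  have := Fintype.ofFinite ι
  have hL : (L ∘ fun ω i => Y i ω) = ∑ i, L (fun j => if i = j then 1 else 0) • Y i := by
    ext ω
    rw [Function.comp_apply, ← L.coe_coe, LinearMap.pi_apply_eq_sum_univ]
    simp only [ContinuousLinearMap.coe_coe, Finset.sum_apply, Pi.smul_apply, smul_eq_mul, mul_comm]
  exact hL ▸ V.sum_mem fun i _ => V.smul_mem _ (hY i)

/-- The variables that are everywhere limits of sequences in `V`. -/
def pointwiseClosure (V : Submodule ℝ (Ω → ℝ)) : Submodule ℝ (Ω → ℝ) where
  carrier := seqClosure V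
  zero_mem' := subset_seqClosure V.zero_mem
  add_mem' := by
    rintro _ _ ⟨x, hx, hxlim⟩ ⟨y, hy, hylim⟩
    exact ⟨x + y, fun n => V.add_mem (hx n) (hy n), hxlim.add hylim⟩
  smul_mem' := by
    rintro c _ ⟨x, hx, hxlim⟩
    exact ⟨c • x, fun n => V.smul_mem c (hx n), hxlim.const_smul c⟩

lemma le_pointwiseClosure (V : Submodule ℝ (Ω → ℝ)) : V ≤ pointwiseClosure V :=
  subset_seqClosure

lemma mem_pointwiseClosure_of_hasDerivWithinAt {X X' : ℝ → Ω → ℝ} {s : Set ℝ} {t : ℝ}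
    (hX : ∀ r ∈ s, X r ∈ V) (ht : t ∈ s) (hacc : AccPt t (𝓟 s))
    (hd : ∀ ω, HasDerivWithinAt (fun r => X r ω) (X' t ω) s t) : X' t ∈ pointwiseClosure V := by
  have : (𝓝[s \ {t}] t).NeBot := accPt_principal_iff_nhdsWithin.1 hacc
  obtain ⟨r, hr⟩ := exists_seq_tendsto (𝓝[s \ {t}] t)
  obtain ⟨N, hN⟩ := eventually_atTop.1 (hr.eventually eventually_mem_nhdsWithin)
  refine ⟨fun n => (r (n + N) - t)⁻¹ • (X (r (n + N)) - X t), fun n => ?_,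
    tendsto_pi_nhds.2 fun ω => ?_⟩
  · exact V.smul_mem _ (V.sub_mem (hX _ (hN _ (Nat.le_add_left N n)).1) (hX t ht))
  · exact (hasDerivWithinAt_iff_tendsto_slope.1 (hd ω)).comp (hr.comp (tendsto_add_atTop_nat N))

end FunctionSpace

section GaussianSpace

variable {Ω : Type*} [MeasurableSpace Ω] {P : Measure Ω} {V : Submodule ℝ (Ω → ℝ)}

/-- A linear space of centered Gaussian variables. The elements of `V` are honest functions rather
than classes modulo null sets, because pathwise and distributional properties of the same
variables are used side by side. -/
structure IsGaussianSpace (P : Measure Ω) (V : Submodule ℝ (Ω → ℝ)) : Prop where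
  measurable : ∀ f ∈ V, Measurable f
  hasGaussianLaw : ∀ f ∈ V, HasGaussianLaw f P
  integral_eq_zero : ∀ f ∈ V, ∫ ω, f ω ∂P = 0

namespace IsGaussianSpace

lemma of_map_eq_gaussianReal (hm : ∀ f ∈ V, Measurable f)
    (h : ∀ f ∈ V, ∃ v : ℝ≥0, P.map f = gaussianReal 0 v) : IsGaussianSpace P V where
  measurable := hm
  hasGaussianLaw f hf := by
    obtain ⟨v, hv⟩ := h f hf
    exact ⟨by rw [hv]; infer_instance⟩
  integral_eq_zero f hf := by
    obtain ⟨v, hv⟩ := h f hf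
    calc ∫ ω, f ω ∂P = ∫ x, x ∂(P.map f) :=
          (integral_map (hm f hf).aemeasurable aestronglyMeasurable_id).symm
      _ = 0 := by rw [hv]; exact integral_id_gaussianReal

lemma span_range {ι : Type*} {Y : ι → Ω → ℝ} (hm : ∀ i, Measurable (Y i))
    (h : ∀ (n : ℕ) (c : Fin n → ℝ) (i : Fin n → ι),
      ∃ v : ℝ≥0, P.map (fun ω => ∑ k, c k * Y (i k) ω) = gaussianReal 0 v) :
    IsGaussianSpace P (Submodule.span ℝ (range Y)) := by
  refine of_map_eq_gaussianReal (fun f hf => ?_) fun f hf => ?_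
  · exact Submodule.span_induction (by rintro _ ⟨i, rfl⟩; exact hm i) measurable_zero
      (fun _ _ _ _ => Measurable.add) (fun c _ _ hx => hx.const_smul c) hf
  · obtain ⟨n, c, g, rfl⟩ := Submodule.mem_span_set'.1 hf
    choose i hi using fun k => (g k).2
    obtain ⟨v, hv⟩ := h n c i
    refine ⟨v, hv ▸ congrArg P.map ?_⟩
    ext ω
    simp only [Finset.sum_apply, Pi.smul_apply, smul_eq_mul, hi]

variable {f g : Ω → ℝ}

lemma memLp_two (hV : IsGaussianSpace P V) (hf : f ∈ V) : MemLp f 2 P :=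
  (hV.hasGaussianLaw f hf).memLp_two

lemma integrable_mul (hV : IsGaussianSpace P V) (hf : f ∈ V) (hg : g ∈ V) :
    Integrable (fun ω => f ω * g ω) P :=
  (hV.memLp_two hf).integrable_mul (hV.memLp_two hg)

lemma map_eq (hV : IsGaussianSpace P V) (hf : f ∈ V) :
    P.map f = gaussianReal 0 (∫ ω, f ω * f ω ∂P).toNNReal := by
  rw [(hV.hasGaussianLaw f hf).map_eq_gaussianReal,
    variance_of_integral_eq_zero (hV.measurable f hf).aemeasurable (hV.integral_eq_zero f hf),
    hV.integral_eq_zero f hf]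
  simp only [sq]

variable {ι : Type*} {Y : ι → Ω → ℝ}

lemma measurable_pi (hV : IsGaussianSpace P V) (hY : ∀ i, Y i ∈ V) :
    Measurable fun ω i => Y i ω :=
  measurable_pi_iff.2 fun i => hV.measurable _ (hY i)

lemma isGaussian_map_pi [Finite ι] (hV : IsGaussianSpace P V) (hY : ∀ i, Y i ∈ V) :
    IsGaussian (P.map fun ω i => Y i ω) :=
  isGaussian_of_map_eq_gaussianReal fun L => ⟨0, _,
    (Measure.map_map L.continuous.measurable (hV.measurable_pi hY)).trans
      (hV.map_eq (comp_dual_mem hY L))⟩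

lemma integral_dual_map_pi [Finite ι] (hV : IsGaussianSpace P V) (hY : ∀ i, Y i ∈ V)
    (L : StrongDual ℝ (ι → ℝ)) : ∫ x, L x ∂(P.map fun ω i => Y i ω) = 0 :=
  (integral_map (hV.measurable_pi hY).aemeasurable
    L.continuous.measurable.aestronglyMeasurable).trans
      (hV.integral_eq_zero _ (comp_dual_mem hY L))

lemma isGaussianProcess (hV : IsGaussianSpace P V) (hY : ∀ i, Y i ∈ V) :
    IsGaussianProcess Y P :=
  ⟨fun I => ⟨hV.isGaussian_map_pi fun i : I => hY i⟩⟩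

lemma indepFun (hV : IsGaussianSpace P V) (hf : f ∈ V) (hY : ∀ i, Y i ∈ V)
    (h : ∀ i, ∫ ω, f ω * Y i ω ∂P = 0) : IndepFun f (fun ω i => Y i ω) P := by
  have hjoint : IsGaussianProcess (Sum.elim (fun _ : Unit => f) Y) P :=
    hV.isGaussianProcess (by rintro (_ | i); exacts [hf, hY i])
  have := (hV.hasGaussianLaw f hf).isProbabilityMeasure
  refine (hjoint.indepFun_of_covariance_eq_zero (fun _ => (hV.measurable f hf).aemeasurable)
    (fun i => (hV.measurable _ (hY i)).aemeasurable) fun _ i => ?_).comp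
    (φ := fun g : Unit → ℝ => g ()) (measurable_pi_apply _) measurable_id
  rw [covariance_eq_sub (hV.memLp_two hf) (hV.memLp_two (hY i)), hV.integral_eq_zero f hf,
    zero_mul, sub_zero]
  exact h i

lemma map_neg_eq [IsFiniteMeasure P] (hV : IsGaussianSpace P V) (hY : ∀ i, Y i ∈ V) :
    P.map (fun ω i => -Y i ω) = P.map fun ω i => Y i ω := by
  have hYneg : ∀ i, (fun ω => -Y i ω) ∈ V := fun i => V.neg_mem (hY i)
  rw [map_eq_iff_forall_finset_map_restrict_eq (hV.measurable_pi hYneg).aemeasurable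
    (hV.measurable_pi hY).aemeasurable]
  intro I
  refine Measure.ext_of_charFunDual (funext fun L => ?_)
  have hL := comp_dual_mem (fun i : I => hY i) L
  have hneg : (L ∘ fun ω (i : I) => -Y i ω) = -(L ∘ fun ω (i : I) => Y i ω) :=
    funext fun ω => map_neg L fun i : I => Y i ω
  have hmap : P.map (L ∘ fun ω (i : I) => -Y i ω) = P.map (L ∘ fun ω (i : I) => Y i ω) := by
    rw [hneg, hV.map_eq (V.neg_mem hL), hV.map_eq hL]
    simp only [Pi.neg_apply, neg_mul_neg]
  rw [charFunDual_eq_charFun_map_one, charFunDual_eq_charFun_map_one]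
  congr 1
  exact (Measure.map_map L.continuous.measurable (hV.measurable_pi fun i : I => hYneg i)).trans
    (hmap.trans (Measure.map_map L.continuous.measurable
      (hV.measurable_pi fun i : I => hY i)).symm)

end IsGaussianSpace

/-! ### Pointwise limits of Gaussian variables -/

/-- A logarithm at one point where the limit does not vanish turns convergence of the
characteristic functions into convergence of the variances. -/
lemma exists_tendsto_of_tendsto_exp_neg_mul {v : ℕ → ℝ≥0} {s : ℝ} (hs : 0 < s) {z : ℂ}
    (hz : z ≠ 0) (h : Tendsto (fun n => Complex.exp (-(v n * s))) atTop (𝓝 z)) :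
    ∃ w : ℝ≥0, Tendsto v atTop (𝓝 w) := by
  have hnorm : ∀ n, ‖Complex.exp (-(v n * s))‖ = Real.exp (-(v n * s)) := fun n => by
    rw [Complex.norm_exp]; norm_num
  have hlog : Tendsto (fun n => (v n : ℝ)) atTop (𝓝 (-Real.log ‖z‖ / s)) := by
    have := ((h.norm.log (norm_ne_zero_iff.2 hz)).neg).div_const s
    refine this.congr fun n => ?_
    rw [hnorm, Real.log_exp]
    field_simp
  have h0 : 0 ≤ -Real.log ‖z‖ / s := ge_of_tendsto' hlog fun n => (v n).2
  exact ⟨⟨_, h0⟩, NNReal.tendsto_coe.1 hlog⟩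

lemma exists_map_eq_gaussianReal_of_tendsto [IsProbabilityMeasure P] {f : ℕ → Ω → ℝ}
    {g : Ω → ℝ} (hf : ∀ n, Measurable (f n))
    (hlaw : ∀ n, ∃ v : ℝ≥0, P.map (f n) = gaussianReal 0 v) (hlim : Tendsto f atTop (𝓝 g)) :
    ∃ v : ℝ≥0, P.map g = gaussianReal 0 v := by
  have hg : Measurable g := measurable_of_tendsto_metrizable hf hlim
  choose v hv using hlaw
  have hprob : IsProbabilityMeasure (P.map g) := Measure.isProbabilityMeasure_map hg.aemeasurable
  have hchar : ∀ s : ℝ, Tendsto (fun n => Complex.exp (-(v n * (s ^ 2 / 2 : ℝ)))) atTop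
      (𝓝 (charFun (P.map g) s)) := fun s => by
    have hintegral : ∀ {h : Ω → ℝ}, Measurable h →
        charFun (P.map h) s = ∫ ω, Complex.exp (s * h ω * Complex.I) ∂P := fun hh => by
      rw [charFun_apply_real, integral_map hh.aemeasurable (by fun_prop)]
    have hexp : ∀ n, Complex.exp (-(v n * (s ^ 2 / 2 : ℝ))) =
        ∫ ω, Complex.exp (s * f n ω * Complex.I) ∂P := fun n => by
      rw [← hintegral (hf n), hv, charFun_gaussianReal]
      push_cast; ring_nf
    simp only [hexp, hintegral hg]
    refine tendsto_integral_of_dominated_convergence (fun _ => 1)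
      (fun n => by have := hf n; fun_prop) (integrable_const 1)
      (fun n => ae_of_all _ fun ω => ?_) (ae_of_all _ fun ω => ?_)
    · rw [← Complex.ofReal_mul, Complex.norm_exp_ofReal_mul_I]
    · have hcont : Continuous fun x : ℝ => Complex.exp (s * x * Complex.I) := by fun_prop
      exact (hcont.tendsto (g ω)).comp (tendsto_pi_nhds.1 hlim ω)
  obtain ⟨s, hs0, hs⟩ : ∃ s > 0, charFun (P.map g) s ≠ 0 := by
    have hone : ∀ᶠ s in 𝓝[>] (0 : ℝ), charFun (P.map g) s ≠ 0 :=
      nhdsWithin_le_nhds ((continuous_charFun.tendsto 0).eventually_ne (by simp))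
    exact (eventually_mem_nhdsWithin.and hone).exists
  obtain ⟨w, hw⟩ := exists_tendsto_of_tendsto_exp_neg_mul (by positivity) hs (hchar s)
  refine ⟨w, Measure.ext_of_charFun (funext fun s => ?_)⟩
  refine tendsto_nhds_unique (hchar s) ?_
  have hcont : Continuous fun x : ℝ≥0 => Complex.exp (-(x * (s ^ 2 / 2 : ℝ))) := by fun_prop
  have hgauss : charFun (gaussianReal 0 w) s = Complex.exp (-(w * (s ^ 2 / 2 : ℝ))) := by
    rw [charFun_gaussianReal]
    push_cast; ring_nf
  exact hgauss ▸ (hcont.tendsto w).comp hw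

lemma IsGaussianSpace.pointwiseClosure [IsProbabilityMeasure P] (hV : IsGaussianSpace P V) :
    IsGaussianSpace P (pointwiseClosure V) := by
  refine of_map_eq_gaussianReal ?_ ?_
  · rintro f ⟨x, hx, hlim⟩
    exact measurable_of_tendsto_metrizable (fun n => hV.measurable _ (hx n)) hlim
  · rintro f ⟨x, hx, hlim⟩
    exact exists_map_eq_gaussianReal_of_tendsto (fun n => hV.measurable _ (hx n))
      (fun n => ⟨_, hV.map_eq (hx n)⟩) hlim

end GaussianSpace

/-! ### Suprema of countable Gaussian families -/

section SupAbs

variable {Ω ι : Type*} {Y Z : ι → Ω → ℝ} {ω : Ω}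

/-- The pointwise supremum `⨆ i, |Y i ω|` of a family of random variables, with the junk value `0`
at those `ω` where the family is unbounded. -/
noncomputable def supAbs (Y : ι → Ω → ℝ) (ω : Ω) : ℝ := ⨆ i, |Y i ω|

lemma supAbs_nonneg (Y : ι → Ω → ℝ) (ω : Ω) : 0 ≤ supAbs Y ω :=
  Real.iSup_nonneg fun _ => abs_nonneg _

lemma abs_le_supAbs (hb : BddAbove (range fun i => |Y i ω|)) (i : ι) : |Y i ω| ≤ supAbs Y ω :=
  le_ciSup hb i

lemma supAbs_le_supAbs_add {c : ℝ} (hb : BddAbove (range fun i => |Z i ω|)) (hc : 0 ≤ c)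
    (h : ∀ i, |Y i ω| ≤ |Z i ω| + c) : supAbs Y ω ≤ supAbs Z ω + c :=
  Real.iSup_le (fun i => (h i).trans (by gcongr; exact abs_le_supAbs hb i))
    (add_nonneg (supAbs_nonneg Z ω) hc)

lemma measurable_supAbs [MeasurableSpace Ω] [Countable ι] (hY : ∀ i, Measurable (Y i)) :
    Measurable (supAbs Y) :=
  Measurable.iSup fun i => (hY i).abs

end SupAbs

lemma monotone_norm_fin_restrict (y : ℕ → ℝ) : Monotone fun n => ‖fun i : Fin n => y i‖ :=
  fun _ m hnm => (pi_norm_le_iff_of_nonneg (norm_nonneg _)).2 fun i =>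
    norm_le_pi_norm (fun i : Fin m => y i) (Fin.castLE hnm i)

lemma norm_fin_restrict_le_iSup_abs {y : ℕ → ℝ} (hb : BddAbove (range fun i => |y i|)) (n : ℕ) :
    ‖fun i : Fin n => y i‖ ≤ ⨆ i, |y i| :=
  (pi_norm_le_iff_of_nonneg (Real.iSup_nonneg fun _ => abs_nonneg _)).2 fun i => le_ciSup hb i

lemma tendsto_norm_fin_restrict {y : ℕ → ℝ} (hb : BddAbove (range fun i => |y i|)) :
    Tendsto (fun n => ‖fun i : Fin n => y i‖) atTop (𝓝 (⨆ i, |y i|)) := by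
  refine tendsto_atTop_isLUB (monotone_norm_fin_restrict y) ⟨?_, fun c hc => ciSup_le fun n => ?_⟩
  · rintro _ ⟨n, rfl⟩
    exact norm_fin_restrict_le_iSup_abs hb n
  · exact (norm_le_pi_norm (fun i : Fin (n + 1) => y i) (Fin.last n)).trans (hc ⟨n + 1, rfl⟩)

lemma ofReal_three_quarters_lt_one : ENNReal.ofReal (3 / 4) < 1 :=
  ENNReal.ofReal_lt_one.2 (by norm_num)

/-- Fernique's bound with constants that do not depend on the space, so that it survives a
passage to the limit in the dimension. -/
lemma exists_lintegral_exp_mul_norm_sq_le : ∃ c > 0, ∃ M < (⊤ : ℝ≥0∞),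
    ∀ {E : Type} [NormedAddCommGroup E] [NormedSpace ℝ E] [CompleteSpace E]
      [SecondCountableTopology E] [MeasurableSpace E] [BorelSpace E] (μ : Measure E) [IsGaussian μ],
      (∀ L : StrongDual ℝ E, ∫ x, L x ∂μ = 0) → ∀ a,
        ENNReal.ofReal (3 / 4) ≤ μ {x | ‖x‖ ≤ a} →
        ∫⁻ x, ENNReal.ofReal (Real.exp (c * a⁻¹ ^ 2 * ‖x‖ ^ 2)) ∂μ ≤ M := by
  have hhalf : (2 : ℝ≥0∞)⁻¹ < ENNReal.ofReal (3 / 4) := by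
    rw [← ENNReal.ofReal_ofNat, ← ENNReal.ofReal_inv_of_pos two_pos]
    exact (ENNReal.ofReal_lt_ofReal_iff (by norm_num)).2 (by norm_num)
  refine ⟨_, Fernique.logRatio_pos hhalf ofReal_three_quarters_lt_one, _, ?_,
    fun {E} _ _ _ _ _ _ μ _ hL a ha => lintegral_exp_mul_sq_norm_le_of_map_rotation_eq_self
      (IsGaussian.map_rotation_eq_self_of_forall_strongDual_eq_zero hL _) ha hhalf⟩
  refine ENNReal.add_lt_top.2 ⟨ENNReal.ofReal_lt_top, Summable.tsum_ofReal_lt_top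
    (Real.summable_exp_nat_mul_of_ge (mul_neg_of_neg_of_pos (by simp) (Real.log_pos ?_))
      fun i => mod_cast (Nat.lt_pow_self one_lt_two).le)⟩
  rw [← ENNReal.ofReal_one, ← ENNReal.ofReal_sub _ (by norm_num),
    ← ENNReal.ofReal_div_of_pos (by norm_num), ENNReal.toReal_ofReal (by norm_num)]
  norm_num

section GaussianSpace

variable {Ω : Type*} [MeasurableSpace Ω] {P : Measure Ω} {V : Submodule ℝ (Ω → ℝ)}

lemma exists_pos_lt_measure_le [IsProbabilityMeasure P] (H : Ω → ℝ) {p : ℝ≥0∞} (hp : p < 1) :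
    ∃ a > 0, p < P {ω | H ω ≤ a} := by
  have hlim : Tendsto (fun n : ℕ => P {ω | H ω ≤ n}) atTop (𝓝 (P (⋃ n : ℕ, {ω | H ω ≤ n}))) :=
    tendsto_measure_iUnion_atTop fun n m hnm ω (hω : H ω ≤ n) => hω.trans (Nat.cast_le.2 hnm)
  have huniv : (⋃ n : ℕ, {ω | H ω ≤ n}) = univ :=
    eq_univ_of_forall fun ω => mem_iUnion.2 (exists_nat_ge (H ω))
  rw [huniv, measure_univ] at hlim
  obtain ⟨n, hn, hn0⟩ := ((hlim.eventually_const_lt hp).and (eventually_gt_atTop 0)).exists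
  exact ⟨n, Nat.cast_pos.2 hn0, hn⟩

namespace IsGaussianSpace

variable {ι : Type*} {Y : ι → Ω → ℝ}

theorem exists_lintegral_exp_mul_supAbs_sq_lt_top [IsProbabilityMeasure P] [Countable ι]
    [Nonempty ι] (hV : IsGaussianSpace P V) (hY : ∀ i, Y i ∈ V)
    (hb : ∀ ω, BddAbove (range fun i => |Y i ω|)) :
    ∃ c > 0, ∫⁻ ω, ENNReal.ofReal (Real.exp (c * supAbs Y ω ^ 2)) ∂P < ⊤ := by
  obtain ⟨e, he⟩ := exists_surjective_nat ι
  obtain ⟨c, hc, M, hM, hfernique⟩ := exists_lintegral_exp_mul_norm_sq_le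
  obtain ⟨a, ha, hPa⟩ := exists_pos_lt_measure_le (P := P) (supAbs Y) ofReal_three_quarters_lt_one
  have hsup : ∀ ω, ⨆ n, |Y (e n) ω| = supAbs Y ω := fun ω => he.iSup_comp (fun i => |Y i ω|)
  have hbe : ∀ ω, BddAbove (range fun n => |Y (e n) ω|) := fun ω =>
    (hb ω).mono (range_comp_subset_range e fun i => |Y i ω|)
  have hvec : ∀ n, Measurable fun ω (i : Fin n) => Y (e i) ω := fun n =>
    hV.measurable_pi fun i => hY (e i)
  have hfinite : ∀ n : ℕ, ∫⁻ ω, ENNReal.ofReal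
      (Real.exp (c * a⁻¹ ^ 2 * ‖fun i : Fin n => Y (e i) ω‖ ^ 2)) ∂P ≤ M := fun n => by
    have := hV.isGaussian_map_pi (Y := fun i : Fin n => Y (e i)) fun i => hY (e i)
    rw [← lintegral_map (f := fun x : Fin n → ℝ =>
      ENNReal.ofReal (Real.exp (c * a⁻¹ ^ 2 * ‖x‖ ^ 2))) (by fun_prop) (hvec n)]
    refine hfernique _ (hV.integral_dual_map_pi fun i : Fin n => hY (e i)) a ?_
    rw [Measure.map_apply (hvec n) (measurableSet_le measurable_norm measurable_const)]
    exact hPa.le.trans (measure_mono fun ω hω =>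
      (norm_fin_restrict_le_iSup_abs (hbe ω) n).trans ((hsup ω).trans_le hω))
  refine ⟨c * a⁻¹ ^ 2, by positivity, lt_of_le_of_lt ?_ hM⟩
  refine le_of_tendsto' (lintegral_tendsto_of_tendsto_of_monotone (fun n => ?_)
    (ae_of_all _ fun ω n m hnm => ?_) (ae_of_all _ fun ω => ?_)) hfinite
  · exact (((hvec n).norm.pow_const 2).const_mul _).exp.ennreal_ofReal.aemeasurable
  · have := monotone_norm_fin_restrict (fun k => Y (e k) ω) hnm
    dsimp only at this ⊢
    gcongr
  · have hcont : Continuous fun x => ENNReal.ofReal (Real.exp (c * a⁻¹ ^ 2 * x ^ 2)) :=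
      ENNReal.continuous_ofReal.comp (by fun_prop)
    exact (hcont.tendsto _).comp (hsup ω ▸ tendsto_norm_fin_restrict (hbe ω))

end IsGaussianSpace

/-! ### Gaussian tails and small balls -/

/-- The constant `C` in the bound `P (|f - u| < ε) ≤ ε C exp (-u² / (2s))` for centered Gaussian
variables `f` of variance between `v₀` and `s`. -/
noncomputable def smallBallConst (v₀ : ℝ) : ℝ := 2 * ((√(2 * Real.pi * v₀))⁻¹ * Real.exp (1 / v₀))

lemma smallBallConst_nonneg (v₀ : ℝ) : 0 ≤ smallBallConst v₀ := by
  unfold smallBallConst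
  positivity

lemma neg_sq_div_le_of_abs_sub_lt {v₀ v s u x ε : ℝ} (hv₀ : 0 < v₀) (hv : v₀ ≤ v) (hs : v ≤ s)
    (hu : 0 ≤ u) (hεu : ε * u ≤ 1) (hx : |x - u| < ε) :
    -x ^ 2 / (2 * v) ≤ 1 / v₀ + -u ^ 2 / (2 * s) := by
  have hvpos : 0 < v := hv₀.trans_le hv
  have hx2 : u ^ 2 - 2 ≤ x ^ 2 := by
    nlinarith [sq_nonneg (x - u), mul_le_mul_of_nonneg_left (neg_lt_of_abs_lt hx).le hu]
  calc -x ^ 2 / (2 * v) ≤ (2 - u ^ 2) / (2 * v) := by gcongr; linarith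
    _ = 1 / v + -(u ^ 2 / (2 * v)) := by field_simp; ring
    _ ≤ 1 / v₀ + -(u ^ 2 / (2 * s)) := by gcongr
    _ = 1 / v₀ + -u ^ 2 / (2 * s) := by rw [neg_div]

lemma gaussianReal_Ioo_le {v : ℝ≥0} {v₀ s u ε : ℝ} (hv₀ : 0 < v₀) (hv : v₀ ≤ v) (hs : v ≤ s)
    (hu : 0 ≤ u) (hεu : ε * u ≤ 1) :
    gaussianReal 0 v (Ioo (u - ε) (u + ε)) ≤
      ENNReal.ofReal (ε * (smallBallConst v₀ * Real.exp (-u ^ 2 / (2 * s)))) := by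
  set D := (√(2 * Real.pi * v₀))⁻¹ * Real.exp (1 / v₀) * Real.exp (-u ^ 2 / (2 * s)) with hD
  have hdensity : ∀ x ∈ Ioo (u - ε) (u + ε), gaussianPDF 0 v x ≤ ENNReal.ofReal D := fun x hx => by
    have hxu : |x - u| < ε := abs_sub_lt_iff.2 ⟨by linarith [hx.2], by linarith [hx.1]⟩
    rw [hD, gaussianPDF, gaussianPDFReal, mul_assoc _ (Real.exp (1 / v₀)), ← Real.exp_add, sub_zero]
    gcongr
    exact neg_sq_div_le_of_abs_sub_lt hv₀ hv hs hu hεu hxu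
  have hvne : v ≠ 0 := fun h => by rw [h, NNReal.coe_zero] at hv; exact hv.not_gt hv₀
  calc gaussianReal 0 v (Ioo (u - ε) (u + ε))
      = ∫⁻ x in Ioo (u - ε) (u + ε), gaussianPDF 0 v x := gaussianReal_apply _ hvne _
    _ ≤ ∫⁻ _ in Ioo (u - ε) (u + ε), ENNReal.ofReal D := setLIntegral_mono measurable_const hdensity
    _ = ENNReal.ofReal (D * (u + ε - (u - ε))) := by
        rw [setLIntegral_const, Real.volume_Ioo, ← ENNReal.ofReal_mul (by positivity)]
    _ = _ := by rw [hD, smallBallConst]; ring_nf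

namespace IsGaussianSpace

variable {f : Ω → ℝ}

lemma measure_abs_sub_lt_le (hV : IsGaussianSpace P V) (hf : f ∈ V) {v₀ s u ε : ℝ} (hv₀ : 0 < v₀)
    (hv : v₀ ≤ ∫ ω, f ω * f ω ∂P) (hs : ∫ ω, f ω * f ω ∂P ≤ s) (hu : 0 ≤ u)
    (hεu : ε * u ≤ 1) : P {ω | |f ω - u| < ε} ≤
      ENNReal.ofReal (ε * (smallBallConst v₀ * Real.exp (-u ^ 2 / (2 * s)))) := by
  have hset : {ω | |f ω - u| < ε} = f ⁻¹' Ioo (u - ε) (u + ε) := by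
    ext ω
    simp only [mem_ofPred_eq, mem_preimage, mem_Ioo, abs_sub_lt_iff]
    constructor <;> rintro ⟨h₁, h₂⟩ <;> constructor <;> linarith
  have hcoe := Real.coe_toNNReal _ (hv₀.le.trans hv)
  rw [hset, ← Measure.map_apply (hV.measurable f hf) measurableSet_Ioo, hV.map_eq hf]
  exact gaussianReal_Ioo_le hv₀ (hcoe.symm ▸ hv) (hcoe.symm ▸ hs) hu hεu

variable [IsFiniteMeasure P]

lemma measure_ge_le (hV : IsGaussianSpace P V) (hf : f ∈ V) {s u : ℝ} (hs0 : 0 < s)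
    (hs : ∫ ω, f ω * f ω ∂P ≤ s) (hu : 0 ≤ u) :
    P {ω | u ≤ f ω} ≤ ENNReal.ofReal (Real.exp (-u ^ 2 / (2 * s))) := by
  have hmap := hV.map_eq hf
  have hintegral : Integrable (fun ω => Real.exp (u / s * f ω)) P :=
    (integrable_map_measure (g := fun x => Real.exp (u / s * x)) (by fun_prop)
      (hV.measurable f hf).aemeasurable).1
      (hmap ▸ integrable_exp_mul_gaussianReal (u / s))
  have hchernoff := measure_ge_le_exp_mul_mgf (μ := P) (X := f) u (div_nonneg hu hs0.le) hintegral
  rw [mgf_gaussianReal hmap, ← Real.exp_add,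
    Real.coe_toNNReal _ (integral_nonneg fun ω => mul_self_nonneg _)] at hchernoff
  rw [← ofReal_measureReal]
  refine ENNReal.ofReal_le_ofReal (hchernoff.trans (Real.exp_le_exp.2 ?_))
  calc -(u / s) * u + (0 * (u / s) + (∫ ω, f ω * f ω ∂P) * (u / s) ^ 2 / 2)
      ≤ -(u / s) * u + (0 * (u / s) + s * (u / s) ^ 2 / 2) := by gcongr
    _ = -u ^ 2 / (2 * s) := by field_simp; ring

lemma measure_abs_ge_le (hV : IsGaussianSpace P V) (hf : f ∈ V) {s u : ℝ} (hs0 : 0 < s)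
    (hs : ∫ ω, f ω * f ω ∂P ≤ s) (hu : 0 ≤ u) :
    P {ω | u ≤ |f ω|} ≤ ENNReal.ofReal (2 * Real.exp (-u ^ 2 / (2 * s))) := by
  have hneg := hV.measure_ge_le (V.neg_mem hf) hs0
    (by simpa only [Pi.neg_apply, neg_mul_neg] using hs) hu
  have hset : {ω | u ≤ |f ω|} = {ω | u ≤ f ω} ∪ {ω | u ≤ (-f) ω} :=
    ext fun ω => le_abs (a := u) (b := f ω)
  rw [hset, two_mul, ENNReal.ofReal_add (by positivity) (by positivity)]
  exact (measure_union_le _ _).trans (add_le_add (hV.measure_ge_le hf hs0 hs hu) hneg)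

end IsGaussianSpace

/-! ### Decoupling from one coordinate -/

variable {ι : Type*} {f : Ω → ℝ} {Y : ι → Ω → ℝ} {K : ℝ}

/-- The part of the family `Y` that is orthogonal to `f` in `L²`; in a Gaussian space it is
independent of `f`. -/
noncomputable def orthResidual (P : Measure Ω) (f : Ω → ℝ) (Y : ι → Ω → ℝ) (i : ι) : Ω → ℝ :=
  Y i - ((∫ ω, f ω * Y i ω ∂P) / ∫ ω, f ω * f ω ∂P) • f

lemma abs_abs_sub_abs_orthResidual_le (hf0 : 0 < ∫ ω, f ω * f ω ∂P) {i : ι}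
    (hK : |∫ ω, f ω * Y i ω ∂P| ≤ K * ∫ ω, f ω * f ω ∂P) (ω : Ω) :
    |(|Y i ω| - |orthResidual P f Y i ω|)| ≤ K * |f ω| := by
  have hcoeff : |(∫ ω, f ω * Y i ω ∂P) / ∫ ω, f ω * f ω ∂P| ≤ K := by
    rwa [abs_div, abs_of_pos hf0, div_le_iff₀ hf0]
  refine (abs_abs_sub_abs_le_abs_sub _ _).trans ?_
  simp only [orthResidual, Pi.sub_apply, Pi.smul_apply, smul_eq_mul, sub_sub_cancel, abs_mul]
  gcongr

section Residual

variable (hf0 : 0 < ∫ ω, f ω * f ω ∂P)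
  (hK : ∀ i, |∫ ω, f ω * Y i ω ∂P| ≤ K * ∫ ω, f ω * f ω ∂P) {ω : Ω}
  (hb : BddAbove (range fun i => |Y i ω|))
include hf0 hK hb

lemma bddAbove_orthResidual : BddAbove (range fun i => |orthResidual P f Y i ω|) := by
  refine ⟨supAbs Y ω + K * |f ω|, ?_⟩
  rintro _ ⟨i, rfl⟩
  have := abs_sub_le_iff.1 (abs_abs_sub_abs_orthResidual_le hf0 (hK i) ω)
  dsimp only
  linarith [abs_le_supAbs hb i]

lemma supAbs_orthResidual_le [Nonempty ι] :
    supAbs (orthResidual P f Y) ω ≤ supAbs Y ω + K * |f ω| := by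
  inhabit ι
  refine supAbs_le_supAbs_add hb
    ((abs_nonneg _).trans (abs_abs_sub_abs_orthResidual_le hf0 (hK default) ω)) fun i => ?_
  have := abs_sub_le_iff.1 (abs_abs_sub_abs_orthResidual_le hf0 (hK i) ω)
  linarith

lemma supAbs_le_supAbs_orthResidual_add [Nonempty ι] :
    supAbs Y ω ≤ supAbs (orthResidual P f Y) ω + K * |f ω| := by
  inhabit ι
  refine supAbs_le_supAbs_add (bddAbove_orthResidual hf0 hK hb)
    ((abs_nonneg _).trans (abs_abs_sub_abs_orthResidual_le hf0 (hK default) ω)) fun i => ?_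
  have := abs_sub_le_iff.1 (abs_abs_sub_abs_orthResidual_le hf0 (hK i) ω)
  linarith

/-- If `f` and `Y i` are negatively correlated, then a positive `Y i` in spite of a large `f` has to
come from a large residual. -/
lemma mul_le_supAbs_orthResidual {i : ι} {c : ℝ}
    (hc : ∫ ω, f ω * Y i ω ∂P ≤ -c * ∫ ω, f ω * f ω ∂P) (hfω : 0 ≤ f ω) (hYω : 0 ≤ Y i ω) :
    c * f ω ≤ supAbs (orthResidual P f Y) ω := by
  calc c * f ω ≤ Y i ω - (∫ ω, f ω * Y i ω ∂P) / (∫ ω, f ω * f ω ∂P) * f ω := by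
        nlinarith [(div_le_iff₀ hf0).2 hc]
    _ ≤ |orthResidual P f Y i ω| := le_abs_self _
    _ ≤ _ := abs_le_supAbs (bddAbove_orthResidual hf0 hK hb) i

end Residual

namespace IsGaussianSpace

lemma orthResidual_mem (hf : f ∈ V) (hY : ∀ i, Y i ∈ V) (i : ι) : orthResidual P f Y i ∈ V :=
  V.sub_mem (hY i) (V.smul_mem _ hf)

lemma indepFun_supAbs_orthResidual [Countable ι] (hV : IsGaussianSpace P V) (hf : f ∈ V)
    (hf0 : 0 < ∫ ω, f ω * f ω ∂P) (hY : ∀ i, Y i ∈ V) :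
    IndepFun f (supAbs (orthResidual P f Y)) P := by
  refine (hV.indepFun hf (orthResidual_mem hf hY) fun i => ?_).comp
    (φ := id) (ψ := fun g : ι → ℝ => ⨆ i, |g i|) measurable_id
    (Measurable.iSup fun i => (measurable_pi_apply i).abs)
  set l := (∫ ω, f ω * Y i ω ∂P) / ∫ ω, f ω * f ω ∂P with hl
  calc ∫ ω, f ω * orthResidual P f Y i ω ∂P = ∫ ω, (f ω * Y i ω - l * (f ω * f ω)) ∂P :=
        integral_congr_ae (ae_of_all _ fun ω => by
          simp only [orthResidual, ← hl, Pi.sub_apply, Pi.smul_apply, smul_eq_mul]; ring)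
    _ = (∫ ω, f ω * Y i ω ∂P) - l * ∫ ω, f ω * f ω ∂P := by
        rw [integral_sub (hV.integrable_mul hf (hY i)) ((hV.integrable_mul hf hf).const_mul _),
          integral_const_mul]
    _ = 0 := by rw [hl, div_mul_cancel₀ _ hf0.ne', sub_self]

end IsGaussianSpace

end GaussianSpace

/-! ### Processes with twice differentiable paths -/

section DominatedDeriv

variable {Ω : Type*} [MeasurableSpace Ω] {P : Measure Ω} {F : ℝ → Ω → ℝ} {F' bound : Ω → ℝ}
  {s : Set ℝ} {t : ℝ}

lemma hasDerivWithinAt_integral_of_lipschitz (ht : t ∈ s) (hF : ∀ x ∈ s, Integrable (F x) P)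
    (hbound : Integrable bound P) (hlip : ∀ x ∈ s, ∀ ω, |F x ω - F t ω| ≤ bound ω * |x - t|)
    (hd : ∀ ω, HasDerivWithinAt (fun x => F x ω) (F' ω) s t) :
    HasDerivWithinAt (fun x => ∫ ω, F x ω ∂P) (∫ ω, F' ω ∂P) s t := by
  rw [hasDerivWithinAt_iff_tendsto_slope]
  have hslope : ∀ x ∈ s \ {t}, slope (fun x => ∫ ω, F x ω ∂P) t x =
      ∫ ω, slope (fun x => F x ω) t x ∂P := fun x hx => by
    simp only [slope_def_module, integral_smul, integral_sub (hF x hx.1) (hF t ht)]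
  refine Tendsto.congr' (eventually_mem_nhdsWithin.mono fun x hx => (hslope x hx).symm) ?_
  refine tendsto_integral_filter_of_dominated_convergence bound
    (eventually_mem_nhdsWithin.mono fun x hx => ?_)
    (eventually_mem_nhdsWithin.mono fun x hx => ae_of_all _ fun ω => ?_) hbound
    (ae_of_all _ fun ω => hasDerivWithinAt_iff_tendsto_slope.1 (hd ω))
  · simp only [slope_def_module]
    exact ((hF x hx.1).sub (hF t ht)).aestronglyMeasurable.const_smul (x - t)⁻¹
  · rw [slope_def_field, Real.norm_eq_abs, abs_div, div_le_iff₀ (abs_pos.2 (sub_ne_zero.2 hx.2))]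
    exact hlip x hx.1 ω

end DominatedDeriv

section RandomPaths

variable {Ω : Type*} {X X' X'' : ℝ → Ω → ℝ} {A B : ℝ}

/-- The family `X, X', X''`, indexed by the order of differentiation, for statements that treat a
process and its derivatives alike. -/
def jet (X X' X'' : ℝ → Ω → ℝ) : Fin 3 → ℝ → Ω → ℝ := ![X, X', X'']

/-- The values of `X, X', X''` at the rational points of `[A, B]`. -/
def ratJet (X X' X'' : ℝ → Ω → ℝ) (A B : ℝ) (i : Fin 3 × {q : ℚ // (q : ℝ) ∈ Icc A B}) : Ω → ℝ :=
  jet X X' X'' i.1 (i.2 : ℚ)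

/-- The largest absolute value of `X, X', X''` on `[A, B]`, taken over rational points so that it
is a countable supremum of Gaussian variables. -/
noncomputable def envelope (X X' X'' : ℝ → Ω → ℝ) (A B : ℝ) : Ω → ℝ := supAbs (ratJet X X' X'' A B)

lemma envelope_nonneg (ω : Ω) : 0 ≤ envelope X X' X'' A B ω :=
  supAbs_nonneg _ ω

variable [MeasurableSpace Ω] {P : Measure Ω} {V : Submodule ℝ (Ω → ℝ)}

/-- A centered Gaussian process `X` on `[A, B]`, all of whose paths are twice continuously
differentiable with derivatives `X'` and `X''`. The Gaussian space `V` holds `X` and the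
derivatives, which makes all of them jointly Gaussian. -/
structure IsC2GaussianProcess (P : Measure Ω) (V : Submodule ℝ (Ω → ℝ)) (X X' X'' : ℝ → Ω → ℝ)
    (A B : ℝ) : Prop where
  lt : A < B
  measurable_uncurry : Measurable (Function.uncurry X)
  isGaussianSpace : IsGaussianSpace P V
  jet_mem : ∀ k, ∀ t ∈ Icc A B, jet X X' X'' k t ∈ V
  path : ∀ ω, HasContSecondDerivOn (X · ω) (X' · ω) (X'' · ω) (Icc A B)

namespace IsC2GaussianProcess

variable {s t : ℝ}

lemma nonempty_rat (h : IsC2GaussianProcess P V X X' X'' A B) :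
    Nonempty (Fin 3 × {q : ℚ // (q : ℝ) ∈ Icc A B}) := by
  obtain ⟨q, hAq, hqB⟩ := exists_rat_btwn h.lt
  exact ⟨0, q, hAq.le, hqB.le⟩

lemma measurable_apply (h : IsC2GaussianProcess P V X X' X'' A B) (t : ℝ) : Measurable (X t) :=
  h.measurable_uncurry.comp measurable_prodMk_left

lemma measurable_jet (h : IsC2GaussianProcess P V X X' X'' A B) (k : Fin 3) (ht : t ∈ Icc A B) :
    Measurable (jet X X' X'' k t) :=
  h.isGaussianSpace.measurable _ (h.jet_mem k t ht)

lemma ratJet_mem (h : IsC2GaussianProcess P V X X' X'' A B)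
    (i : Fin 3 × {q : ℚ // (q : ℝ) ∈ Icc A B}) : ratJet X X' X'' A B i ∈ V :=
  h.jet_mem i.1 _ i.2.2

lemma continuousOn_jet (h : IsC2GaussianProcess P V X X' X'' A B) (k : Fin 3) (ω : Ω) :
    ContinuousOn (fun t => jet X X' X'' k t ω) (Icc A B) := by
  fin_cases k
  exacts [(h.path ω).continuousOn, (h.path ω).continuousOn_deriv,
    (h.path ω).continuousOn_secondDeriv]

lemma hasDerivWithinAt_jet (h : IsC2GaussianProcess P V X X' X'' A B) (k : Fin 2) (ω : Ω)
    (ht : t ∈ Icc A B) : HasDerivWithinAt (fun t => jet X X' X'' k.castSucc t ω)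
      (jet X X' X'' k.succ t ω) (Icc A B) t := by
  fin_cases k
  exacts [(h.path ω).hasDerivWithinAt t ht, (h.path ω).hasDerivWithinAt_deriv t ht]

lemma bddAbove_ratJet (h : IsC2GaussianProcess P V X X' X'' A B) (ω : Ω) :
    BddAbove (range fun i => |ratJet X X' X'' A B i ω|) := by
  choose K hK using fun k => isCompact_Icc.bddAbove_image (h.continuousOn_jet k ω).abs
  refine ⟨∑ k, |K k|, ?_⟩
  rintro _ ⟨⟨k, q⟩, rfl⟩
  calc |jet X X' X'' k (q : ℚ) ω| ≤ K k := hK k (mem_image_of_mem _ q.2)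
    _ ≤ |K k| := le_abs_self _
    _ ≤ ∑ k, |K k| := Finset.single_le_sum (fun k _ => abs_nonneg (K k)) (Finset.mem_univ k)

lemma abs_jet_le_envelope (h : IsC2GaussianProcess P V X X' X'' A B) (k : Fin 3)
    (ht : t ∈ Icc A B) (ω : Ω) : |jet X X' X'' k t ω| ≤ envelope X X' X'' A B ω := by
  by_contra! hlt
  obtain ⟨q, hq, hlt'⟩ := exists_rat_mem_Icc_lt h.lt (h.continuousOn_jet k ω).abs ht hlt
  exact (abs_le_supAbs (h.bddAbove_ratJet ω) (k, ⟨q, hq⟩)).not_gt hlt'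

lemma abs_jet_sub_le (h : IsC2GaussianProcess P V X X' X'' A B) (k : Fin 2) (hs : s ∈ Icc A B)
    (ht : t ∈ Icc A B) (ω : Ω) : |jet X X' X'' k.castSucc t ω - jet X X' X'' k.castSucc s ω| ≤
      envelope X X' X'' A B ω * |t - s| :=
  (convex_Icc A B).norm_image_sub_le_of_norm_hasDerivWithin_le
    (fun _ hx => h.hasDerivWithinAt_jet k ω hx) (fun _ hx => h.abs_jet_le_envelope _ hx ω) hs ht

lemma measurable_envelope (h : IsC2GaussianProcess P V X X' X'' A B) :
    Measurable (envelope X X' X'' A B) :=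
  measurable_supAbs fun i => h.isGaussianSpace.measurable _ (h.ratJet_mem i)

lemma abs_jet_mul_jet_le (h : IsC2GaussianProcess P V X X' X'' A B) (k l : Fin 3) (hs : s ∈ Icc A B)
    (ht : t ∈ Icc A B) (ω : Ω) :
    |jet X X' X'' k s ω * jet X X' X'' l t ω| ≤ envelope X X' X'' A B ω ^ 2 := by
  rw [abs_mul, sq]
  exact mul_le_mul (h.abs_jet_le_envelope k hs ω) (h.abs_jet_le_envelope l ht ω) (abs_nonneg _)
    (envelope_nonneg ω)

lemma integrable_jet_mul_jet (h : IsC2GaussianProcess P V X X' X'' A B) (k l : Fin 3)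
    (hs : s ∈ Icc A B) (ht : t ∈ Icc A B) :
    Integrable (fun ω => jet X X' X'' k s ω * jet X X' X'' l t ω) P :=
  h.isGaussianSpace.integrable_mul (h.jet_mem k s hs) (h.jet_mem l t ht)

lemma abs_jet_mul_jet_sub_le (h : IsC2GaussianProcess P V X X' X'' A B) (k l : Fin 2)
    (hs : s ∈ Icc A B) (ht : t ∈ Icc A B) (ω : Ω) :
    |jet X X' X'' k.castSucc t ω * jet X X' X'' l.castSucc t ω -
      jet X X' X'' k.castSucc s ω * jet X X' X'' l.castSucc s ω| ≤
        2 * envelope X X' X'' A B ω ^ 2 * |t - s| := by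
  set H := envelope X X' X'' A B ω
  have hH : 0 ≤ H := envelope_nonneg ω
  rw [show ∀ a b c d : ℝ, a * b - c * d = a * (b - d) + (a - c) * d by intros; ring]
  calc _ ≤ H * (H * |t - s|) + H * |t - s| * H := by
        refine (abs_add_le _ _).trans ?_
        rw [abs_mul, abs_mul]
        gcongr
        exacts [h.abs_jet_le_envelope _ ht ω, h.abs_jet_sub_le l hs ht ω,
          h.abs_jet_sub_le k hs ht ω, h.abs_jet_le_envelope _ hs ω]
    _ = 2 * H ^ 2 * |t - s| := by ring

variable [IsProbabilityMeasure P]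

lemma exists_lintegral_exp_envelope_lt_top (h : IsC2GaussianProcess P V X X' X'' A B) :
    ∃ c > 0, ∫⁻ ω, ENNReal.ofReal (Real.exp (c * envelope X X' X'' A B ω ^ 2)) ∂P < ⊤ := by
  have := h.nonempty_rat
  exact h.isGaussianSpace.exists_lintegral_exp_mul_supAbs_sq_lt_top h.ratJet_mem h.bddAbove_ratJet

lemma integrable_envelope_sq (h : IsC2GaussianProcess P V X X' X'' A B) :
    Integrable (fun ω => envelope X X' X'' A B ω ^ 2) P := by
  obtain ⟨c, hc, hfin⟩ := h.exists_lintegral_exp_envelope_lt_top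
  have hm := h.measurable_envelope
  have hexp : Integrable (fun ω => Real.exp (c * envelope X X' X'' A B ω ^ 2)) P :=
    ⟨by fun_prop, (hasFiniteIntegral_iff_ofReal (ae_of_all _ fun _ => (Real.exp_pos _).le)).2 hfin⟩
  refine (hexp.const_mul c⁻¹).mono' (by fun_prop) (ae_of_all _ fun ω => ?_)
  rw [Real.norm_of_nonneg (sq_nonneg _), ← div_eq_inv_mul, le_div_iff₀ hc]
  linarith [Real.add_one_le_exp (c * envelope X X' X'' A B ω ^ 2)]

lemma hasDerivWithinAt_integral_jet_mul_jet (h : IsC2GaussianProcess P V X X' X'' A B)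
    (k l : Fin 2) (ht : t ∈ Icc A B) :
    HasDerivWithinAt (fun t => ∫ ω, jet X X' X'' k.castSucc t ω * jet X X' X'' l.castSucc t ω ∂P)
      (∫ ω, (jet X X' X'' k.succ t ω * jet X X' X'' l.castSucc t ω +
        jet X X' X'' k.castSucc t ω * jet X X' X'' l.succ t ω) ∂P) (Icc A B) t :=
  hasDerivWithinAt_integral_of_lipschitz ht (fun _ hx => h.integrable_jet_mul_jet _ _ hx hx)
    (h.integrable_envelope_sq.const_mul 2) (fun _ hx ω => h.abs_jet_mul_jet_sub_le k l ht hx ω)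
    fun ω => (h.hasDerivWithinAt_jet k ω ht).mul (h.hasDerivWithinAt_jet l ω ht)

lemma continuousOn_integral_jet_mul_jet (h : IsC2GaussianProcess P V X X' X'' A B) (k l : Fin 3) :
    ContinuousOn (fun p : ℝ × ℝ => ∫ ω, jet X X' X'' k p.1 ω * jet X X' X'' l p.2 ω ∂P)
      (Icc A B ×ˢ Icc A B) :=
  continuousOn_of_dominated
    (fun _ hp => (h.integrable_jet_mul_jet k l hp.1 hp.2).aestronglyMeasurable)
    (fun _ hp => ae_of_all _ fun ω => h.abs_jet_mul_jet_le k l hp.1 hp.2 ω) h.integrable_envelope_sq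
    (ae_of_all _ fun ω => ((h.continuousOn_jet k ω).comp continuousOn_fst fun _ hp => hp.1).mul
      ((h.continuousOn_jet l ω).comp continuousOn_snd fun _ hp => hp.2))

lemma continuousOn_variance (h : IsC2GaussianProcess P V X X' X'' A B) :
    ContinuousOn (fun t => ∫ ω, X t ω * X t ω ∂P) (Icc A B) :=
  (h.continuousOn_integral_jet_mul_jet 0 0).comp (f := fun t : ℝ => (t, t)) (by fun_prop)
    fun _ ht => ⟨ht, ht⟩

lemma integral_mul_secondDeriv_neg (h : IsC2GaussianProcess P V X X' X'' A B) {t₀ : ℝ}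
    (ht₀ : t₀ ∈ Ioc A B) (hmax : IsMaxOn (fun t => ∫ ω, X t ω * X t ω ∂P) (Icc A B) t₀)
    (hder0 : derivWithin (fun t => ∫ ω, X t ω * X t ω ∂P) (Icc A B) t₀ = 0)
    (hnd : P {ω | X' t₀ ω = 0} < 1) : ∫ ω, X t₀ ω * X'' t₀ ω ∂P < 0 := by
  have ht : t₀ ∈ Icc A B := Ioc_subset_Icc_self ht₀
  have hvar : ∀ t ∈ Icc A B, HasDerivWithinAt (fun t => ∫ ω, X t ω * X t ω ∂P)
      (2 * ∫ ω, X t ω * X' t ω ∂P) (Icc A B) t := fun t ht => by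
    rw [← integral_const_mul]
    refine (h.hasDerivWithinAt_integral_jet_mul_jet 0 0 ht).congr_deriv (integral_congr_ae ?_)
    refine ae_of_all _ fun ω => ?_
    change X' t ω * X t ω + X t ω * X' t ω = 2 * (X t ω * X' t ω)
    ring
  have hcross : HasDerivWithinAt (fun t => 2 * ∫ ω, X t ω * X' t ω ∂P)
      (2 * (∫ ω, X' t₀ ω * X' t₀ ω ∂P + ∫ ω, X t₀ ω * X'' t₀ ω ∂P)) (Icc A B) t₀ := by
    refine ((h.hasDerivWithinAt_integral_jet_mul_jet 0 1 ht).const_mul 2).congr_deriv ?_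
    exact congrArg (2 * ·) (integral_add (h.integrable_jet_mul_jet 1 1 ht ht)
      (h.integrable_jet_mul_jet 0 2 ht ht))
  have hle := secondDeriv_nonpos_of_isMaxOn ht₀ hvar hmax
    (((hvar t₀ ht).derivWithin (uniqueDiffOn_Icc h.lt t₀ ht)).symm.trans hder0) hcross
  have hpos : 0 < ∫ ω, X' t₀ ω * X' t₀ ω ∂P := by
    refine (integral_nonneg fun ω => mul_self_nonneg _).lt_of_ne' fun hzero => hnd.ne ?_
    have hae := (integral_eq_zero_iff_of_nonneg (fun ω => mul_self_nonneg (X' t₀ ω))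
      (h.integrable_jet_mul_jet 1 1 ht ht)).1 hzero
    exact (mem_ae_iff_prob_eq_one (measurableSet_eq_fun (h.measurable_jet 1 ht)
      measurable_const)).1 (hae.mono fun ω hω => mul_self_eq_zero.1 hω)
  linarith

lemma exists_integral_mul_secondDeriv_le (h : IsC2GaussianProcess P V X X' X'' A B) {t₀ : ℝ}
    (ht₀ : t₀ ∈ Icc A B) (hneg : ∫ ω, X t₀ ω * X'' t₀ ω ∂P < 0) :
    ∃ ρ > 0, ∃ c > 0, ∀ s ∈ Icc A B, ∀ t ∈ Icc A B, |s - t₀| < ρ → |t - t₀| < ρ →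
      ∫ ω, X s ω * X'' t ω ∂P ≤ -c := by
  obtain ⟨c, hc, hc0⟩ := exists_between hneg
  obtain ⟨ρ, hρ, hball⟩ := Metric.mem_nhdsWithin_iff.1
    ((h.continuousOn_integral_jet_mul_jet 0 2 (t₀, t₀) ⟨ht₀, ht₀⟩).eventually_lt_const hc)
  refine ⟨ρ, hρ, -c, neg_pos.2 hc0, fun s hs t ht hsρ htρ => ?_⟩
  have hst : (s, t) ∈ ball (t₀, t₀) ρ := max_lt hsρ htρ
  have hlt : ∫ ω, X s ω * X'' t ω ∂P < c := hball ⟨hst, hs, ht⟩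
  linarith

end IsC2GaussianProcess

end RandomPaths

/-! ### Measurability of level events -/

section Measurability

variable {Ω α : Type*} [MeasurableSpace Ω] [TopologicalSpace α] [SecondCountableTopology α]

lemma exists_measurableSet_exists_nonpos_iff {K : Set α} (hK : IsCompact K) :
    ∃ W : Set (K → ℝ), MeasurableSet W ∧
      ∀ x : α → ℝ, ContinuousOn x K → ((∃ t ∈ K, x t ≤ 0) ↔ K.domRestrict x ∈ W) := by
  obtain ⟨S, hS, hSd⟩ := TopologicalSpace.exists_countable_dense K
  refine ⟨⋂ k : ℕ, ⋃ s ∈ S, {y | y s < 1 / ((k : ℝ) + 1)},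
    .iInter fun k => .biUnion hS fun s _ =>
      measurableSet_lt (measurable_pi_apply s) measurable_const, fun x hx => ?_⟩
  simp only [mem_iInter, mem_iUnion, mem_ofPred_eq, domRestrict_apply, exists_prop]
  constructor
  · rintro ⟨t, ht, hxt⟩ k
    have ho : IsOpen {s : K | x s < 1 / ((k : ℝ) + 1)} :=
      isOpen_lt (continuousOn_iff_continuous_domRestrict.1 hx) continuous_const
    exact hSd.exists_mem_open ho ⟨⟨t, ht⟩, hxt.trans_lt Nat.one_div_pos_of_nat⟩
  · intro h
    obtain ⟨s₀, -, -⟩ := h 0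
    obtain ⟨t, ht, hmin⟩ := hK.exists_isMinOn ⟨s₀, s₀.2⟩ hx
    refine ⟨t, ht, ge_of_tendsto' tendsto_one_div_add_atTop_nhds_zero_nat fun k => ?_⟩
    obtain ⟨s, -, hs⟩ := h k
    exact (hmin s.2).trans hs.le

lemma measurableSet_exists_nonpos {K : Set α} (hK : IsCompact K) {Y : α → Ω → ℝ}
    (hc : ∀ ω, ContinuousOn (Y · ω) K) (hm : ∀ t ∈ K, Measurable (Y t)) :
    MeasurableSet {ω | ∃ t ∈ K, Y t ω ≤ 0} := by
  obtain ⟨W, hW, hiff⟩ := exists_measurableSet_exists_nonpos_iff hK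
  simp_rw [fun ω => hiff (Y · ω) (hc ω)]
  exact measurable_pi_iff.2 (fun t : K => hm t t.2) hW

lemma measurableSet_exists_eq_and_pos {K : Set α} (hK : IsCompact K) {Y Z : α → Ω → ℝ}
    (hYc : ∀ ω, ContinuousOn (Y · ω) K) (hZc : ∀ ω, ContinuousOn (Z · ω) K)
    (hYm : ∀ t ∈ K, Measurable (Y t)) (hZm : ∀ t ∈ K, Measurable (Z t)) (u : ℝ) :
    MeasurableSet {ω | ∃ t ∈ K, Y t ω = u ∧ 0 < Z t ω} := by
  have hunion : {ω | ∃ t ∈ K, Y t ω = u ∧ 0 < Z t ω} =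
      ⋃ m : ℕ, {ω | ∃ t ∈ K, max |Y t ω - u| (1 / ((m : ℝ) + 1) - Z t ω) ≤ 0} := by
    ext ω
    simp only [mem_ofPred_eq, mem_iUnion, max_le_iff, abs_nonpos_iff, sub_nonpos, sub_eq_zero]
    refine ⟨fun ⟨t, ht, hY, hZ⟩ => ?_,
      fun ⟨m, t, ht, hY, hZ⟩ => ⟨t, ht, hY, Nat.one_div_pos_of_nat.trans_le hZ⟩⟩
    obtain ⟨m, hm⟩ := exists_nat_one_div_lt hZ
    exact ⟨m, t, ht, hY, hm.le⟩
  rw [hunion]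
  refine .iUnion fun m => measurableSet_exists_nonpos hK
    (fun ω => ((hYc ω).sub continuousOn_const).abs.sup (continuousOn_const.sub (hZc ω)))
    fun t ht => ?_
  exact ((hYm t ht).sub_const u).abs.max ((hZm t ht).const_sub _)

end Measurability

section Count

lemma natCast_le_encard_iff_exists_disjoint_Icc {T : Set ℝ} {n : ℕ} : (n : ℕ∞) ≤ T.encard ↔
    ∃ q : Fin n → ℚ × ℚ,
      Pairwise (fun i j => Disjoint (Icc ((q i).1 : ℝ) (q i).2) (Icc ((q j).1 : ℝ) (q j).2)) ∧
      ∀ i, ∃ t ∈ T, t ∈ Icc ((q i).1 : ℝ) (q i).2 := by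
  constructor
  · intro h
    obtain ⟨F, hFT, hF⟩ := exists_subset_encard_eq h
    have hfin : F.Finite := finite_of_encard_eq_coe hF
    obtain ⟨U, hU, hUd⟩ := hfin.t2_separation
    have hq : ∀ t : ℝ, ∃ q : ℚ × ℚ, t ∈ Icc (q.1 : ℝ) q.2 ∧ Icc (q.1 : ℝ) q.2 ⊆ U t := fun t => by
      obtain ⟨l, r, ⟨hlt, htr⟩, hlr⟩ :=
        mem_nhds_iff_exists_Ioo_subset.1 ((hU t).2.mem_nhds (hU t).1)
      obtain ⟨p, hlp, hpt⟩ := exists_rat_btwn hlt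
      obtain ⟨q, htq, hqr⟩ := exists_rat_btwn htr
      exact ⟨(p, q), ⟨hpt.le, htq.le⟩, fun x hx => hlr ⟨hlp.trans_le hx.1, hx.2.trans_lt hqr⟩⟩
    choose q hqmem hqU using hq
    have : Finite F := hfin
    let e : F ≃ Fin n := Finite.equivFinOfCardEq (by
      simpa only [encard, ENat.card_eq_coe_natCard, Nat.cast_inj] using hF)
    refine ⟨fun i => q (e.symm i), fun i j hij => ?_,
      fun i => ⟨e.symm i, hFT (e.symm i).2, hqmem _⟩⟩
    refine (hUd (e.symm i).2 (e.symm j).2 fun h => hij ?_).mono (hqU _) (hqU _)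
    exact e.symm.injective (Subtype.ext h)
  · rintro ⟨q, hq, hT⟩
    choose t htT htq using hT
    have hinj : Function.Injective t := fun i j hij => by
      by_contra hne
      exact disjoint_left.1 (hq hne) (htq i) (hij ▸ htq j)
    calc (n : ℕ∞) = (range t).encard := by
          rw [← image_univ, hinj.encard_image, encard_univ, ENat.card_eq_coe_fintype_card,
            Fintype.card_fin]
      _ ≤ T.encard := encard_le_encard (range_subset_iff.2 htT)

lemma toENNReal_encard_le_of_forall_finset {α : Type*} {T : Set α} {x : ℝ≥0∞}
    (hx : ∀ F : Finset α, (F : Set α) ⊆ T → (F.card : ℝ≥0∞) ≤ x) : (T.encard : ℝ≥0∞) ≤ x := by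
  rcases T.finite_or_infinite with hT | hT
  · simpa [hT.encard_eq_coe_toFinset_card] using hx hT.toFinset hT.coe_toFinset.subset
  · suffices x = ⊤ from this ▸ le_top
    refine ENNReal.eq_top_of_forall_nnreal_le fun r => ?_
    obtain ⟨n, hn⟩ := exists_nat_ge r
    obtain ⟨F, hFT, rfl⟩ := hT.exists_subset_card_eq n
    exact (ENNReal.coe_le_coe.2 hn).trans (hx F hFT)

variable {Ω : Type*} {X X' : ℝ → Ω → ℝ} {K : Set ℝ}

/-- The up-crossings of the level `u` in `M` by the path `X · ω` with derivative `X' · ω`. -/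
def upcrossingSet (X X' : ℝ → Ω → ℝ) (M : Set ℝ) (u : ℝ) (ω : Ω) : Set ℝ :=
  {t ∈ M | X t ω = u ∧ 0 < X' t ω}

/-- The number of up-crossings, with value `∞` if there are infinitely many. -/
noncomputable def upcrossingCount (X X' : ℝ → Ω → ℝ) (M : Set ℝ) (u : ℝ) (ω : Ω) : ℝ≥0∞ :=
  (upcrossingSet X X' M u ω).encard

lemma toReal_upcrossingCount (M : Set ℝ) (u : ℝ) (ω : Ω) :
    (upcrossingCount X X' M u ω).toReal = (upcrossingSet X X' M u ω).ncard := by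
  unfold upcrossingCount ncard
  induction (upcrossingSet X X' M u ω).encard using ENat.recTopCoe with
  | top => simp
  | coe m => simp

variable [MeasurableSpace Ω]

lemma measurable_upcrossingCount (hK : IsCompact K) (hXc : ∀ ω, ContinuousOn (X · ω) K)
    (hXc' : ∀ ω, ContinuousOn (X' · ω) K) (hX : ∀ t ∈ K, Measurable (X t))
    (hX' : ∀ t ∈ K, Measurable (X' t)) (u : ℝ) : Measurable (upcrossingCount X X' K u) := by
  have hle : ∀ n : ℕ, MeasurableSet {ω | (n : ℕ∞) ≤ (upcrossingSet X X' K u ω).encard} :=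
      fun n => by
    simp_rw [natCast_le_encard_iff_exists_disjoint_Icc, ofPred_exists, ofPred_and, ofPred_forall]
    refine .iUnion fun q => (MeasurableSet.const _).inter (.iInter fun i => ?_)
    convert measurableSet_exists_eq_and_pos (hK.inter_right isClosed_Icc)
      (fun ω => (hXc ω).mono inter_subset_left) (fun ω => (hXc' ω).mono inter_subset_left)
      (fun t ht => hX t ht.1) (fun t ht => hX' t ht.1) u using 3
    exact exists_congr fun t => and_right_comm
  have hencard : Measurable fun ω => (upcrossingSet X X' K u ω).encard :=
    ENat.measurable_iff.2 fun n => by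
      convert (hle n).diff (hle (n + 1)) using 1
      ext ω
      simp only [mem_preimage, mem_singleton_iff, Set.mem_sdiff, mem_ofPred_eq, Nat.cast_add,
        Nat.cast_one, ENat.add_one_le_iff (ENat.natCast_ne_top n), not_lt, le_antisymm_iff,
        and_comm]
  exact (measurable_of_countable _).comp hencard

end Count

section Symmetry

variable {Ω : Type*} [MeasurableSpace Ω] {P : Measure Ω} [IsFiniteMeasure P]
  {V : Submodule ℝ (Ω → ℝ)} {α : Type*} [TopologicalSpace α] [SecondCountableTopology α]
  {K : Set α} {X : α → Ω → ℝ}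

lemma IsGaussianSpace.measure_exists_le_neg_eq (hV : IsGaussianSpace P V) (hK : IsCompact K)
    (hX : ∀ t ∈ K, X t ∈ V) (hc : ∀ ω, ContinuousOn (X · ω) K) (u : ℝ) :
    P {ω | ∃ t ∈ K, u ≤ -X t ω} = P {ω | ∃ t ∈ K, u ≤ X t ω} := by
  obtain ⟨W, hW, hiff⟩ := exists_measurableSet_exists_nonpos_iff hK
  have hshift : Measurable fun (x : K → ℝ) t => u - x t := by fun_prop
  have hmeas : Measurable fun ω (t : K) => X t ω := hV.measurable_pi fun t : K => hX t t.2
  have hmeas_neg : Measurable fun ω (t : K) => -X t ω := hmeas.neg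
  have heq : ∀ x : α → ℝ, ContinuousOn x K →
      ((∃ t ∈ K, u ≤ x t) ↔ K.domRestrict x ∈ (fun x t => u - x t) ⁻¹' W) := fun x hx =>
    (exists_congr fun t => and_congr_right fun _ => sub_nonpos.symm).trans
      (hiff (fun t => u - x t) (continuousOn_const.sub hx))
  have hlaw := congrArg (· ((fun x t => u - x t) ⁻¹' W))
    (hV.map_neg_eq (Y := fun t : K => X t) fun t => hX t t.2)
  beta_reduce at hlaw
  rw [Measure.map_apply hmeas (hshift hW), Measure.map_apply hmeas_neg (hshift hW)] at hlaw
  simp_rw [fun ω => heq (fun t => -X t ω) (hc ω).neg, fun ω => heq (X · ω) (hc ω)]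
  exact hlaw

end Symmetry

/-! ### Occupation times and crossings -/

section Occupation

variable {Ω : Type*} [MeasurableSpace Ω] {P : Measure Ω}

lemma lintegral_mul_measure_section {α : Type*} [MeasurableSpace α] [SFinite P] {ν : Measure α}
    [SFinite ν] {w : Ω → ℝ≥0∞} (hw : Measurable w) {G : Set (Ω × α)} (hG : MeasurableSet G) :
    ∫⁻ ω, w ω * ν {t | (ω, t) ∈ G} ∂P = ∫⁻ t, ∫⁻ ω in {ω | (ω, t) ∈ G}, w ω ∂P ∂ν := by
  have hω : ∀ ω, w ω * ν {t | (ω, t) ∈ G} = ∫⁻ t, G.indicator (fun q => w q.1) (ω, t) ∂ν :=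
    fun ω => (lintegral_indicator_const (measurable_prodMk_left hG) (w ω)).symm
  have ht : ∀ t, ∫⁻ ω in {ω | (ω, t) ∈ G}, w ω ∂P =
      ∫⁻ ω, G.indicator (fun q => w q.1) (ω, t) ∂P :=
    fun t => (lintegral_indicator (measurable_prodMk_right hG) w).symm
  simp_rw [hω, ht]
  exact lintegral_lintegral_swap ((hw.comp measurable_fst).indicator hG).aemeasurable

/-- The time that the path `X · ω` spends in `I` at distance less than `ε` from the level `u`. -/
noncomputable def occupationTime (X : ℝ → Ω → ℝ) (I : Set ℝ) (u ε : ℝ) (ω : Ω) : ℝ≥0∞ :=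
  volume {t | t ∈ I ∧ |X t ω - u| < ε}

variable {X : ℝ → Ω → ℝ} {I : Set ℝ} {u ε : ℝ} (hX : Measurable (Function.uncurry X))
include hX

lemma measurableSet_occupation (hI : MeasurableSet I) :
    MeasurableSet {q : Ω × ℝ | q.2 ∈ I ∧ |X q.2 q.1 - u| < ε} :=
  (measurable_snd hI).inter
    (measurableSet_lt ((hX.comp measurable_swap).sub_const u).abs measurable_const)

lemma measurable_occupationTime (hI : MeasurableSet I) : Measurable (occupationTime X I u ε) :=
  measurable_measure_prodMk_left (measurableSet_occupation hX hI)

variable [SFinite P]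

lemma lintegral_mul_occupationTime_le (hI : MeasurableSet I) {w : Ω → ℝ≥0∞} (hw : Measurable w)
    {C : ℝ≥0∞} (hC : ∀ t ∈ I, ∫⁻ ω in {ω | |X t ω - u| < ε}, w ω ∂P ≤ C) :
    ∫⁻ ω, w ω * occupationTime X I u ε ω ∂P ≤ C * volume I := by
  refine (lintegral_mul_measure_section hw (measurableSet_occupation hX hI)).trans_le ?_
  rw [← lintegral_indicator_const hI]
  refine lintegral_mono fun t => ?_
  by_cases ht : t ∈ I
  · simpa only [mem_ofPred_eq, ht, true_and, indicator_of_mem] using hC t ht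
  · simp [ht]

/-- The expected number of crossings is at most the density at level zero of the time spent near
`u`, weighted by the speed `H`: a path of speed at most `H` spends time `ε / H` within distance `ε`
of `u` around each crossing. -/
lemma lintegral_upcrossingCount_le {X' : ℝ → Ω → ℝ} {a b : ℝ} (hab : a < b) {U : Set ℝ}
    (hU : IsOpen U) {H : Ω → ℝ} (hH : Measurable H) (hHpos : ∀ ω, 0 < H ω)
    (hlip : ∀ ω, ∀ x ∈ Icc a b, ∀ y ∈ Icc a b, |X y ω - X x ω| ≤ H ω * |y - x|) {C : ℝ≥0∞}
    (hC : ∀ᶠ ε in 𝓝[>] (0 : ℝ), ∀ t ∈ Icc a b ∩ U,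
      ∫⁻ ω in {ω | |X t ω - u| < ε}, ENNReal.ofReal (H ω) ∂P ≤ ENNReal.ofReal ε * C) :
    ∫⁻ ω, upcrossingCount X X' (Icc a b ∩ U) u ω ∂P ≤ C * ENNReal.ofReal (b - a) := by
  have hI : MeasurableSet (Icc a b ∩ U) := measurableSet_Icc.inter hU.measurableSet
  set w : ℝ → Ω → ℝ≥0∞ := fun ε ω => (ENNReal.ofReal ε)⁻¹ *
    (ENNReal.ofReal (H ω) * occupationTime X (Icc a b ∩ U) u ε ω) with hw
  have hwm : ∀ ε, Measurable fun ω => ENNReal.ofReal (H ω) *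
    occupationTime X (Icc a b ∩ U) u ε ω := fun ε => hH.ennreal_ofReal.mul
      (measurable_occupationTime hX hI)
  have hcount : ∀ ω, upcrossingCount X X' (Icc a b ∩ U) u ω ≤ liminf (w · ω) (𝓝[>] 0) := fun ω => by
    refine toENNReal_encard_le_of_forall_finset fun F hF => le_liminf_of_le isCobounded_ge_of_top ?_
    filter_upwards [self_mem_nhdsWithin, eventually_card_mul_le_volume hab (hHpos ω) (hlip ω) hU F
      fun t ht => ⟨(hF ht).1, (hF ht).2.1⟩] with ε (hε : 0 < ε) hFε
    have hH0 : ENNReal.ofReal (H ω) ≠ 0 := (ENNReal.ofReal_pos.2 (hHpos ω)).ne'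
    rw [ENNReal.ofReal_div_of_pos (hHpos ω), div_eq_mul_inv] at hFε
    calc (F.card : ℝ≥0∞) = (ENNReal.ofReal ε)⁻¹ * (ENNReal.ofReal (H ω) *
          (F.card * (ENNReal.ofReal ε * (ENNReal.ofReal (H ω))⁻¹))) := by
          rw [mul_left_comm (F.card : ℝ≥0∞), mul_left_comm _ (ENNReal.ofReal ε),
            mul_left_comm _ (F.card : ℝ≥0∞), ENNReal.mul_inv_cancel hH0 ENNReal.ofReal_ne_top,
            mul_one,
            ENNReal.inv_mul_cancel_left (ENNReal.ofReal_pos.2 hε).ne' ENNReal.ofReal_ne_top]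
      _ ≤ w ε ω := mul_le_mul_right (mul_le_mul_right hFε _) _
  have hintegral : ∀ᶠ ε in 𝓝[>] (0 : ℝ), ∫⁻ ω, w ε ω ∂P ≤ C * ENNReal.ofReal (b - a) := by
    filter_upwards [self_mem_nhdsWithin, hC] with ε (hε : 0 < ε) hCε
    have hocc := lintegral_mul_occupationTime_le hX hI hH.ennreal_ofReal hCε
    calc ∫⁻ ω, w ε ω ∂P
        ≤ (ENNReal.ofReal ε)⁻¹ * (ENNReal.ofReal ε * C * volume (Icc a b ∩ U)) := by
          rw [hw, lintegral_const_mul _ (hwm ε)]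
          gcongr
      _ = C * volume (Icc a b ∩ U) := by
          rw [mul_assoc, ENNReal.inv_mul_cancel_left (ENNReal.ofReal_pos.2 hε).ne'
            ENNReal.ofReal_ne_top]
      _ ≤ C * ENNReal.ofReal (b - a) := by
          rw [← Real.volume_Icc]
          gcongr
          exact inter_subset_left
  calc ∫⁻ ω, upcrossingCount X X' (Icc a b ∩ U) u ω ∂P
      ≤ ∫⁻ ω, liminf (w · ω) (𝓝[>] 0) ∂P := lintegral_mono hcount
    _ ≤ liminf (fun ε => ∫⁻ ω, w ε ω ∂P) (𝓝[>] 0) :=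
        lintegral_liminf_le fun ε => (hwm ε).const_mul _
    _ ≤ C * ENNReal.ofReal (b - a) := (liminf_le_liminf hintegral).trans_eq (liminf_const _)

/-- **Bulinskaya's lemma**. A path that touches `u` with zero derivative stays within `K d²` of `u`
for a time `d`, while the expected time spent there is of order `d²`. -/
lemma measure_exists_tangency_eq_zero {X' X'' : ℝ → Ω → ℝ} {a b : ℝ} (hab : a < b)
    (hpath : ∀ ω, HasContSecondDerivOn (X · ω) (X' · ω) (X'' · ω) (Icc a b)) {C : ℝ≥0∞}
    (hCtop : C ≠ ⊤) (hC : ∀ᶠ ε in 𝓝[>] (0 : ℝ), ∀ t ∈ Icc a b,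
      P {ω | |X t ω - u| < ε} ≤ ENNReal.ofReal ε * C) :
    P {ω | ∃ t ∈ Icc a b, X t ω = u ∧ X' t ω = 0} = 0 := by
  set T : ℕ → Set Ω := fun m =>
    {ω | (∃ t ∈ Icc a b, X t ω = u ∧ X' t ω = 0) ∧ ∀ t ∈ Icc a b, |X'' t ω| ≤ m + 1}
  have hcover : {ω | ∃ t ∈ Icc a b, X t ω = u ∧ X' t ω = 0} ⊆ ⋃ m, T m := fun ω hω => by
    obtain ⟨K, hK⟩ := isCompact_Icc.bddAbove_image (hpath ω).continuousOn_secondDeriv.abs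
    obtain ⟨m, hm⟩ := exists_nat_ge K
    exact mem_iUnion.2 ⟨m, hω, fun t ht => (hK (mem_image_of_mem _ ht)).trans (by linarith)⟩
  refine measure_mono_null hcover (measure_iUnion_null fun m => ?_)
  have hsmall : Tendsto (fun d : ℝ => (m + 1) * d ^ 2) (𝓝[>] 0) (𝓝[>] 0) := by
    refine tendsto_nhdsWithin_iff.2 ⟨?_, eventually_mem_nhdsWithin.mono fun d (hd : 0 < d) =>
      mem_Ioi.2 (by positivity)⟩
    exact (Continuous.tendsto' (by fun_prop) 0 0 (by simp)).mono_left nhdsWithin_le_nhds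
  have hbound : ∀ᶠ d in 𝓝[>] (0 : ℝ),
      P (T m) ≤ ENNReal.ofReal d * (ENNReal.ofReal (m + 1) * C * volume (Icc a b)) := by
    filter_upwards [self_mem_nhdsWithin, hsmall.eventually hC,
      nhdsWithin_le_nhds (gt_mem_nhds (show 0 < (b - a) / 2 by linarith))]
      with d (hd : 0 < d) hCd hdb
    have hocc := lintegral_mul_occupationTime_le hX measurableSet_Icc measurable_one
      (fun t ht => (setLIntegral_one _).trans_le (hCd t ht))
    simp only [Pi.one_apply, one_mul] at hocc
    have hsub : T m ⊆
        {ω | ENNReal.ofReal d ≤ occupationTime X (Icc a b) u ((m + 1) * d ^ 2) ω} := by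
      rintro ω ⟨⟨t, ht, rfl, hX't⟩, hKω⟩
      exact (hpath ω).ofReal_le_volume_of_tangency (by positivity) hKω ht hX't hdb.le
    have hmarkov : ENNReal.ofReal d * P (T m) ≤
        ENNReal.ofReal ((m + 1) * d ^ 2) * C * volume (Icc a b) :=
      (mul_le_mul_right (measure_mono hsub) _).trans
        ((mul_meas_ge_le_lintegral (measurable_occupationTime hX measurableSet_Icc) _).trans hocc)
    refine (ENNReal.mul_le_mul_iff_right (ENNReal.ofReal_pos.2 hd).ne' ENNReal.ofReal_ne_top).1
      (hmarkov.trans_eq ?_)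
    rw [ENNReal.ofReal_mul (by positivity), ENNReal.ofReal_pow hd.le]
    ring
  have hzero : Tendsto (fun d : ℝ => ENNReal.ofReal d *
      (ENNReal.ofReal (m + 1) * C * volume (Icc a b))) (𝓝[>] 0) (𝓝 0) := by
    refine Tendsto.mono_left ?_ nhdsWithin_le_nhds
    simpa only [ENNReal.ofReal_zero, zero_mul] using ENNReal.Tendsto.mul_const
      (ENNReal.continuous_ofReal.tendsto (0 : ℝ))
      (.inr (ENNReal.mul_ne_top (ENNReal.mul_ne_top ENNReal.ofReal_ne_top hCtop)
        measure_Icc_lt_top.ne))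
  exact nonpos_iff_eq_zero.1 (ge_of_tendsto hzero hbound)

end Occupation

/-! ### Crossings on an event that forces a large residual -/

lemma one_add_le_exp_mul_exp {c L z : ℝ} (hc : 0 < c) (hL : 0 ≤ L) (hz : L ≤ z) :
    1 + z ≤ Real.exp (1 / (2 * c) - c * L ^ 2 / 2) * Real.exp (c * z ^ 2) := by
  have hsq : 0 ≤ (c * z - 1) ^ 2 / (2 * c) := by positivity
  have hexpand : (c * z - 1) ^ 2 / (2 * c) = 1 / (2 * c) + c * z ^ 2 / 2 - z := by
    field_simp
    ring
  have hLz : c * L ^ 2 ≤ c * z ^ 2 := by gcongr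
  calc 1 + z ≤ Real.exp z := by linarith [Real.add_one_le_exp z]
    _ ≤ Real.exp (1 / (2 * c) - c * L ^ 2 / 2 + c * z ^ 2) := Real.exp_le_exp.2 (by linarith)
    _ = _ := Real.exp_add _ _

lemma eventually_nhdsGT_mul_lt (u : ℝ) {d : ℝ} (hd : 0 < d) :
    ∀ᶠ ε in 𝓝[>] (0 : ℝ), ε * u < d :=
  nhdsWithin_le_nhds (((continuous_mul_const u).tendsto' 0 0 (zero_mul u)).eventually_lt_const hd)

section Decoupling

variable {Ω : Type*} [MeasurableSpace Ω] {P : Measure Ω} {V : Submodule ℝ (Ω → ℝ)} {ι : Type*}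
  [Nonempty ι] {f : Ω → ℝ} {Y : ι → Ω → ℝ} {K c u ε L : ℝ}

lemma lintegral_exp_supAbs_orthResidual_le (hf0 : 0 < ∫ ω, f ω * f ω ∂P) (hK0 : 0 ≤ K)
    (hK : ∀ i, |∫ ω, f ω * Y i ω ∂P| ≤ K * ∫ ω, f ω * f ω ∂P)
    (hb : ∀ ω, BddAbove (range fun i => |Y i ω|)) (hfY : ∀ ω, |f ω| ≤ supAbs Y ω) (hc : 0 ≤ c) :
    ∫⁻ ω, ENNReal.ofReal (Real.exp (c / (1 + K) ^ 2 * supAbs (orthResidual P f Y) ω ^ 2)) ∂P ≤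
      ∫⁻ ω, ENNReal.ofReal (Real.exp (c * supAbs Y ω ^ 2)) ∂P := by
  refine lintegral_mono fun ω => ENNReal.ofReal_le_ofReal (Real.exp_le_exp.2 ?_)
  calc c / (1 + K) ^ 2 * supAbs (orthResidual P f Y) ω ^ 2
      ≤ c / (1 + K) ^ 2 * (supAbs Y ω + K * supAbs Y ω) ^ 2 := by
        gcongr
        · exact supAbs_nonneg _ ω
        · exact (supAbs_orthResidual_le hf0 hK (hb ω)).trans (by gcongr; exact hfY ω)
    _ = c * supAbs Y ω ^ 2 := by field_simp

lemma supAbs_add_one_le (hf0 : 0 < ∫ ω, f ω * f ω ∂P) (hK0 : 0 ≤ K)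
    (hK : ∀ i, |∫ ω, f ω * Y i ω ∂P| ≤ K * ∫ ω, f ω * f ω ∂P) {ω : Ω}
    (hb : BddAbove (range fun i => |Y i ω|)) (hu : 0 ≤ u) (hfω : |f ω| ≤ 1 + u) (hc : 0 < c)
    (hL : 0 ≤ L) (hLω : L ≤ supAbs (orthResidual P f Y) ω) :
    supAbs Y ω + 1 ≤ (1 + K) * (1 + u) * Real.exp (1 / (2 * c) - c * L ^ 2 / 2) *
      Real.exp (c * supAbs (orthResidual P f Y) ω ^ 2) := by
  set Z := supAbs (orthResidual P f Y) ω
  have hZ : 0 ≤ Z := supAbs_nonneg _ ω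
  calc supAbs Y ω + 1 ≤ Z + K * (1 + u) + 1 := by
        gcongr
        exact (supAbs_le_supAbs_orthResidual_add hf0 hK hb).trans (by gcongr)
    _ ≤ (1 + K) * (1 + u) * (1 + Z) := by
        nlinarith [mul_nonneg hu hZ, mul_nonneg hK0 hZ, mul_nonneg (mul_nonneg hK0 hZ) hu]
    _ ≤ _ := by
        rw [mul_assoc ((1 + K) * (1 + u))]
        gcongr
        exact one_add_le_exp_mul_exp hc hL hLω

namespace IsGaussianSpace

/-- Conditionally on `f` being close to `u`, the residual of `Y` keeps its law, so that forcing it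
to exceed `L` costs a Gaussian factor in `L` on top of the probability that `f` is close to `u`. -/
lemma setLIntegral_supAbs_add_one_le [Countable ι] (hV : IsGaussianSpace P V) (hf : f ∈ V)
    (hY : ∀ i, Y i ∈ V) (hf0 : 0 < ∫ ω, f ω * f ω ∂P) (hK0 : 0 ≤ K)
    (hK : ∀ i, |∫ ω, f ω * Y i ω ∂P| ≤ K * ∫ ω, f ω * f ω ∂P)
    (hb : ∀ ω, BddAbove (range fun i => |Y i ω|)) (hc : 0 < c) (hL : 0 ≤ L) (hu : 0 ≤ u)
    (hε : ε ≤ 1) {E : Set Ω}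
    (hE : ∀ ω ∈ E, |f ω - u| < ε → L ≤ supAbs (orthResidual P f Y) ω) :
    ∫⁻ ω in {ω | |f ω - u| < ε} ∩ E, ENNReal.ofReal (supAbs Y ω + 1) ∂P ≤
      P {ω | |f ω - u| < ε} *
        (ENNReal.ofReal ((1 + K) * (1 + u) * Real.exp (1 / (2 * c) - c * L ^ 2 / 2)) *
          ∫⁻ ω, ENNReal.ofReal (Real.exp (c * supAbs (orthResidual P f Y) ω ^ 2)) ∂P) := by
  set D := (1 + K) * (1 + u) * Real.exp (1 / (2 * c) - c * L ^ 2 / 2)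
  set g : ℝ → ℝ≥0∞ := fun z => ENNReal.ofReal D * ENNReal.ofReal (Real.exp (c * z ^ 2)) with hg
  set Z := supAbs (orthResidual P f Y)
  have hfm := hV.measurable f hf
  have hZm : Measurable Z := measurable_supAbs fun i => hV.measurable _ (orthResidual_mem hf hY i)
  have hgm : Measurable g := by fun_prop
  have hball : MeasurableSet (ball u ε) := measurableSet_ball
  have hpoint : ∀ ω ∈ {ω | |f ω - u| < ε} ∩ E, ENNReal.ofReal (supAbs Y ω + 1) ≤ g (Z ω) := by
    rintro ω ⟨hω, hωE⟩
    have hfω : |f ω| ≤ 1 + u := by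
      linarith [abs_sub_abs_le_abs_sub (f ω) u, abs_of_nonneg hu, mem_ofPred_eq ▸ hω]
    simp only [hg, ← ENNReal.ofReal_mul (show 0 ≤ D by positivity)]
    exact ENNReal.ofReal_le_ofReal (supAbs_add_one_le hf0 hK0 hK (hb ω) hu hfω hc hL (hE ω hωE hω))
  have hindep : IndepFun ((ball u ε).indicator 1 ∘ f : Ω → ℝ≥0∞) (g ∘ Z) P :=
    (hV.indepFun_supAbs_orthResidual hf hf0 hY).comp (measurable_one.indicator hball) hgm
  calc ∫⁻ ω in {ω | |f ω - u| < ε} ∩ E, ENNReal.ofReal (supAbs Y ω + 1) ∂P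
      ≤ ∫⁻ ω in {ω | |f ω - u| < ε} ∩ E, g (Z ω) ∂P := setLIntegral_mono (hgm.comp hZm) hpoint
    _ ≤ ∫⁻ ω in f ⁻¹' ball u ε, g (Z ω) ∂P := lintegral_mono_set inter_subset_left
    _ = ∫⁻ ω, (((ball u ε).indicator 1 ∘ f : Ω → ℝ≥0∞) * (g ∘ Z)) ω ∂P := by
        rw [← lintegral_indicator (hfm hball)]
        congr with ω
        by_cases hω : f ω ∈ ball u ε <;> simp [hω]
    _ = P (f ⁻¹' ball u ε) * (ENNReal.ofReal D *
          ∫⁻ ω, ENNReal.ofReal (Real.exp (c * Z ω ^ 2)) ∂P) := by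
        rw [lintegral_mul_eq_lintegral_mul_lintegral_of_indepFun
          ((measurable_one.indicator hball).comp hfm) (hgm.comp hZm) hindep]
        congr 1
        · exact lintegral_indicator_one (hfm hball)
        · exact lintegral_const_mul _ (by fun_prop)

end IsGaussianSpace

end Decoupling

section RandomPaths

variable {Ω : Type*} {X X' X'' : ℝ → Ω → ℝ} {A B : ℝ}
variable [MeasurableSpace Ω] {P : Measure Ω} {V : Submodule ℝ (Ω → ℝ)}

namespace IsC2GaussianProcess

variable [IsProbabilityMeasure P] {t a b v₀ s u : ℝ}

lemma abs_integral_mul_ratJet_le (h : IsC2GaussianProcess P V X X' X'' A B) (ht : t ∈ Icc A B)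
    (hv₀ : 0 < v₀) (hv : v₀ ≤ ∫ ω, X t ω * X t ω ∂P) (i : Fin 3 × {q : ℚ // (q : ℝ) ∈ Icc A B}) :
    |∫ ω, X t ω * ratJet X X' X'' A B i ω ∂P| ≤
      (∫ ω, envelope X X' X'' A B ω ^ 2 ∂P) / v₀ * ∫ ω, X t ω * X t ω ∂P :=
  calc |∫ ω, X t ω * ratJet X X' X'' A B i ω ∂P| ≤ ∫ ω, envelope X X' X'' A B ω ^ 2 ∂P :=
        (Real.norm_eq_abs _).symm.trans_le (norm_integral_le_of_norm_le h.integrable_envelope_sq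
          (ae_of_all _ fun ω => h.abs_jet_mul_jet_le 0 i.1 ht i.2.2 ω))
    _ = (∫ ω, envelope X X' X'' A B ω ^ 2 ∂P) / v₀ * v₀ := (div_mul_cancel₀ _ hv₀.ne').symm
    _ ≤ _ := by gcongr

lemma exists_setLIntegral_envelope_add_one_le (h : IsC2GaussianProcess P V X X' X'' A B)
    (hv₀ : 0 < v₀) : ∃ D : ℝ≥0, ∃ κ > 0, ∀ t ∈ Icc A B, v₀ ≤ ∫ ω, X t ω * X t ω ∂P →
      ∀ {s u ε L : ℝ} {E : Set Ω}, ∫ ω, X t ω * X t ω ∂P ≤ s → 0 ≤ u → 0 ≤ L → 0 ≤ ε → ε ≤ 1 →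
      ε * u ≤ 1 → (∀ ω ∈ E, |X t ω - u| < ε →
        L ≤ supAbs (orthResidual P (X t) (ratJet X X' X'' A B)) ω) →
      ∫⁻ ω in {ω | |X t ω - u| < ε} ∩ E, ENNReal.ofReal (envelope X X' X'' A B ω + 1) ∂P ≤
        ENNReal.ofReal ε * (D * ENNReal.ofReal
          ((1 + u) * Real.exp (-(κ * L ^ 2)) * Real.exp (-u ^ 2 / (2 * s)))) := by
  have := h.nonempty_rat
  obtain ⟨c, hc, hfin⟩ := h.exists_lintegral_exp_envelope_lt_top
  lift ∫⁻ ω, ENNReal.ofReal (Real.exp (c * envelope X X' X'' A B ω ^ 2)) ∂P to ℝ≥0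
    using hfin.ne with M hM
  set K := (∫ ω, envelope X X' X'' A B ω ^ 2 ∂P) / v₀
  have hK0 : 0 ≤ K := div_nonneg (integral_nonneg fun ω => sq_nonneg _) hv₀.le
  set c₁ := c / (1 + K) ^ 2
  have hc₁ : 0 < c₁ := by positivity
  refine ⟨(smallBallConst v₀ * ((1 + K) * Real.exp (1 / (2 * c₁)))).toNNReal * M, c₁ / 2,
    by positivity, fun t ht hv s u ε L E hs hu hL hε0 hε hεu hE => ?_⟩
  have hXt : X t ∈ V := h.jet_mem 0 t ht
  have hK := h.abs_integral_mul_ratJet_le ht hv₀ hv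
  have hdecoupled := h.isGaussianSpace.setLIntegral_supAbs_add_one_le hXt h.ratJet_mem
    (hv₀.trans_le hv) hK0 hK h.bddAbove_ratJet hc₁ hL hu hε hE
  have hexp := (lintegral_exp_supAbs_orthResidual_le (hv₀.trans_le hv) hK0 hK h.bddAbove_ratJet
    (h.abs_jet_le_envelope 0 ht) hc.le).trans_eq hM.symm
  have hsb := smallBallConst_nonneg v₀
  calc _ ≤ ENNReal.ofReal (ε * (smallBallConst v₀ * Real.exp (-u ^ 2 / (2 * s)))) *
        (ENNReal.ofReal ((1 + K) * (1 + u) * Real.exp (1 / (2 * c₁) - c₁ * L ^ 2 / 2)) * M) :=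
        hdecoupled.trans (mul_le_mul' (h.isGaussianSpace.measure_abs_sub_lt_le hXt hv₀ hv hs hu hεu)
          (mul_le_mul_right hexp _))
    _ = _ := by
        rw [← mul_assoc, ← ENNReal.ofReal_mul (by positivity), ENNReal.coe_mul, ← ENNReal.ofReal,
          mul_right_comm _ (M : ℝ≥0∞), ← ENNReal.ofReal_mul (by positivity),
          ← mul_assoc (ENNReal.ofReal ε), ← ENNReal.ofReal_mul hε0, sub_eq_add_neg, Real.exp_add]
        ring_nf

lemma exists_setLIntegral_upcrossingCount_le (h : IsC2GaussianProcess P V X X' X'' A B)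
    (hab : a < b) (hsub : Icc a b ⊆ Icc A B) (hv₀ : 0 < v₀)
    (hvar : ∀ t ∈ Icc a b, v₀ ≤ ∫ ω, X t ω * X t ω ∂P) : ∃ D : ℝ≥0, ∃ κ > 0,
      ∀ {U : Set ℝ} {s u L : ℝ} {E : Set Ω}, IsOpen U →
      (∀ t ∈ Icc a b ∩ U, ∫ ω, X t ω * X t ω ∂P ≤ s) → 0 < u → 0 ≤ L →
      (∀ t ∈ Icc a b ∩ U, ∀ ω ∈ E, u / 2 ≤ X t ω →
        L ≤ supAbs (orthResidual P (X t) (ratJet X X' X'' A B)) ω) →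
      ∫⁻ ω in E, upcrossingCount X X' (Icc a b ∩ U) u ω ∂P ≤
        D * ENNReal.ofReal ((1 + u) * Real.exp (-(κ * L ^ 2)) * Real.exp (-u ^ 2 / (2 * s))) := by
  obtain ⟨D, κ, hκ, hD⟩ := h.exists_setLIntegral_envelope_add_one_le hv₀
  refine ⟨D * (b - a).toNNReal, κ, hκ, fun {U s u L E} hU hs hu hL hE => ?_⟩
  have hspeed : ∀ᶠ ε in 𝓝[>] (0 : ℝ), ∀ t ∈ Icc a b ∩ U, ∫⁻ ω in {ω | |X t ω - u| < ε},
      ENNReal.ofReal (envelope X X' X'' A B ω + 1) ∂(P.restrict E) ≤ ENNReal.ofReal ε *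
        (D * ENNReal.ofReal
          ((1 + u) * Real.exp (-(κ * L ^ 2)) * Real.exp (-u ^ 2 / (2 * s)))) := by
    filter_upwards [self_mem_nhdsWithin, eventually_nhdsGT_mul_lt u one_pos,
      eventually_nhdsGT_mul_lt 1 (lt_min one_pos (half_pos hu))]
      with ε (hε : 0 < ε) hεu hε1 t ht
    rw [mul_one] at hε1
    have hlevel : MeasurableSet {ω | |X t ω - u| < ε} :=
      measurableSet_lt ((h.measurable_apply t).sub_const u).abs measurable_const
    rw [Measure.restrict_restrict hlevel]
    refine hD t (hsub ht.1) (hvar t ht.1) (hs t ht) hu.le hL hε.le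
      (hε1.le.trans (min_le_left _ _)) hεu.le fun ω hω hlt => hE t ht ω hω ?_
    linarith [(abs_lt.1 hlt).1, min_le_right 1 (u / 2)]
  refine (lintegral_upcrossingCount_le h.measurable_uncurry hab hU
    (h.measurable_envelope.add_const 1)
    (fun ω => add_pos_of_nonneg_of_pos (envelope_nonneg ω) one_pos)
    (fun ω x hx y hy => ?_) hspeed).trans_eq (mul_right_comm _ _ _)
  refine (h.abs_jet_sub_le 0 (hsub hx) (hsub hy) ω).trans ?_
  gcongr
  exact le_add_of_nonneg_right zero_le_one

lemma measure_exists_tangency_eq_zero (h : IsC2GaussianProcess P V X X' X'' A B) (hab : a < b)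
    (hsub : Icc a b ⊆ Icc A B) (hv₀ : 0 < v₀)
    (hvar : ∀ t ∈ Icc a b, v₀ ≤ ∫ ω, X t ω * X t ω ∂P) (hu : 0 ≤ u) :
    P {ω | ∃ t ∈ Icc a b, X t ω = u ∧ X' t ω = 0} = 0 := by
  refine _root_.measure_exists_tangency_eq_zero h.measurable_uncurry hab
    (fun ω => (h.path ω).mono hsub) (ENNReal.ofReal_ne_top (r := smallBallConst v₀)) ?_
  filter_upwards [self_mem_nhdsWithin, eventually_nhdsGT_mul_lt u one_pos]
    with ε (hε : 0 < ε) hεu t ht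
  refine (h.isGaussianSpace.measure_abs_sub_lt_le (h.jet_mem 0 t (hsub ht)) hv₀ (hvar t ht) le_rfl
    hu hεu.le).trans ?_
  rw [← ENNReal.ofReal_mul hε.le]
  refine ENNReal.ofReal_le_ofReal ?_
  have hexp : Real.exp (-u ^ 2 / (2 * ∫ ω, X t ω * X t ω ∂P)) ≤ 1 := Real.exp_le_one_iff.2
    (div_nonpos_of_nonpos_of_nonneg (neg_nonpos.2 (sq_nonneg u)) (by linarith [hvar t ht]))
  have hsb := smallBallConst_nonneg v₀
  gcongr
  exact mul_le_of_le_one_right hsb hexp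

end IsC2GaussianProcess

end RandomPaths

/-! ### Negligible tails -/

/-- Quantities that decay exponentially faster than `exp (-u ^ 2 / (2 * S))`, the order of magnitude
of the tail of a centered Gaussian variable of variance `S`. -/
def IsTailNegligible (S : ℝ) (q : ℝ → ℝ≥0∞) : Prop :=
  ∃ χ > 0, ∃ C : ℝ≥0, ∀ u ≥ 1,
    q u ≤ C * ENNReal.ofReal (Real.exp (-(u ^ 2) * (1 + χ) / (2 * S)))

namespace IsTailNegligible

variable {S κ : ℝ} {p q : ℝ → ℝ≥0∞}

lemma mono (hq : IsTailNegligible S q) (hpq : ∀ u ≥ 1, p u ≤ q u) : IsTailNegligible S p := by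
  obtain ⟨χ, hχ, C, hC⟩ := hq
  exact ⟨χ, hχ, C, fun u hu => (hpq u hu).trans (hC u hu)⟩

lemma of_le_mul_exp (hS : 0 < S) (hκ : 1 / (2 * S) < κ) (C : ℝ≥0)
    (hq : ∀ u ≥ 1, q u ≤ C * ENNReal.ofReal (Real.exp (-(κ * u ^ 2)))) : IsTailNegligible S q := by
  refine ⟨2 * S * κ - 1, ?_, C, fun u hu => (hq u hu).trans_eq ?_⟩
  · linarith [(div_lt_iff₀' (by positivity)).1 hκ]
  · congr 3
    field_simp
    ring

lemma of_le_mul_one_add_mul_exp (hS : 0 < S) (hκ : 1 / (2 * S) < κ) (C : ℝ≥0)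
    (hq : ∀ u ≥ 1, q u ≤ C * ENNReal.ofReal ((1 + u) * Real.exp (-(κ * u ^ 2)))) :
    IsTailNegligible S q := by
  obtain ⟨κ', hκ', hκκ'⟩ := exists_between hκ
  have hd : 0 < κ - κ' := sub_pos.2 hκκ'
  refine of_le_mul_exp hS hκ' (C * (Real.exp (1 / (2 * (κ - κ')))).toNNReal) fun u hu =>
    (hq u hu).trans ?_
  rw [ENNReal.coe_mul, mul_assoc, ← ENNReal.ofReal, ← ENNReal.ofReal_mul (Real.exp_pos _).le]
  refine mul_le_mul_right (ENNReal.ofReal_le_ofReal ?_) _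
  calc (1 + u) * Real.exp (-(κ * u ^ 2))
      ≤ Real.exp (1 / (2 * (κ - κ')) - (κ - κ') * 0 ^ 2 / 2) * Real.exp ((κ - κ') * u ^ 2) *
          Real.exp (-(κ * u ^ 2)) := by
        gcongr
        exact one_add_le_exp_mul_exp hd le_rfl (zero_le_one.trans hu)
    _ = Real.exp (1 / (2 * (κ - κ'))) * Real.exp (-(κ' * u ^ 2)) := by
        simp only [← Real.exp_add]
        ring_nf

lemma ne_top (hq : IsTailNegligible S q) {u : ℝ} (hu : 1 ≤ u) : q u ≠ ⊤ := by
  obtain ⟨χ, -, C, hC⟩ := hq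
  exact ne_top_of_le_ne_top (ENNReal.mul_ne_top ENNReal.coe_ne_top ENNReal.ofReal_ne_top) (hC u hu)

lemma add (hS : 0 < S) (hp : IsTailNegligible S p) (hq : IsTailNegligible S q) :
    IsTailNegligible S fun u => p u + q u := by
  obtain ⟨χ, hχ, C, hC⟩ := hp
  obtain ⟨η, hη, D, hD⟩ := hq
  refine ⟨min χ η, lt_min hχ hη, C + D, fun u hu => (add_le_add (hC u hu) (hD u hu)).trans ?_⟩
  rw [ENNReal.coe_add, add_mul]
  simp only [neg_mul]
  gcongr
  exacts [min_le_left _ _, min_le_right _ _]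

lemma finset_sum {ι : Type*} {F : Finset ι} {q : ι → ℝ → ℝ≥0∞} (hS : 0 < S)
    (hq : ∀ i ∈ F, IsTailNegligible S (q i)) : IsTailNegligible S fun u => ∑ i ∈ F, q i u := by
  classical
  induction F using Finset.induction_on with
  | empty => exact ⟨1, one_pos, 0, fun u _ => by simp⟩
  | insert i F hi ih =>
    simp only [Finset.sum_insert hi]
    exact (hq i (Finset.mem_insert_self i F)).add hS
      (ih fun j hj => hq j (Finset.mem_insert_of_mem hj))

lemma const_mul (hq : IsTailNegligible S q) (D : ℝ≥0) : IsTailNegligible S fun u => D * q u := by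
  obtain ⟨χ, hχ, C, hC⟩ := hq
  exact ⟨χ, hχ, D * C, fun u hu => (mul_le_mul_right (hC u hu) _).trans_eq
    (by rw [ENNReal.coe_mul, mul_assoc])⟩

lemma exists_le_mul_exp {f : ℝ → ℝ} (hf : IsTailNegligible S fun u => ENNReal.ofReal (f u)) :
    ∃ χ > (0 : ℝ), ∃ C > (0 : ℝ), ∃ u₀ > (0 : ℝ), ∀ u ≥ u₀,
      f u ≤ C * Real.exp (-(u ^ 2) * (1 + χ) / (2 * S)) := by
  obtain ⟨χ, hχ, C, hC⟩ := hf
  refine ⟨χ, hχ, C + 1, by positivity, 1, one_pos, fun u hu => ?_⟩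
  have hfu : f u ≤ C * Real.exp (-(u ^ 2) * (1 + χ) / (2 * S)) := by
    rw [← ENNReal.ofReal_le_ofReal_iff (by positivity), ENNReal.ofReal_mul C.coe_nonneg,
      ENNReal.ofReal_coe_nnreal]
    exact hC u hu
  refine hfu.trans ?_
  gcongr
  exact le_add_of_nonneg_right zero_le_one

end IsTailNegligible

section RandomPaths

variable {Ω : Type*} {X X' X'' : ℝ → Ω → ℝ} {A B : ℝ}
variable [MeasurableSpace Ω] {P : Measure Ω} {V : Submodule ℝ (Ω → ℝ)} {S s : ℝ}

lemma measure_ge_le_exp_mul_lintegral_exp {Z : Ω → ℝ} (hZ : Measurable Z) {c x : ℝ} (hc : 0 ≤ c)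
    (hx : 0 ≤ x) : P {ω | x ≤ Z ω} ≤
      (∫⁻ ω, ENNReal.ofReal (Real.exp (c * Z ω ^ 2)) ∂P) *
        ENNReal.ofReal (Real.exp (-(c * x ^ 2))) := by
  rw [Real.exp_neg, ENNReal.ofReal_inv_of_pos (Real.exp_pos _), ← div_eq_mul_inv]
  refine (measure_mono fun ω (hω : x ≤ Z ω) => ?_).trans
    (meas_ge_le_lintegral_div (by fun_prop)
      (ENNReal.ofReal_pos.2 (Real.exp_pos (c * x ^ 2))).ne' ENNReal.ofReal_ne_top)
  exact ENNReal.ofReal_le_ofReal (Real.exp_le_exp.2 (by gcongr))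

lemma IsGaussianSpace.isTailNegligible_measure_mul_le_abs [IsFiniteMeasure P]
    (hV : IsGaussianSpace P V) {f : Ω → ℝ} (hf : f ∈ V) {θ : ℝ} (hs0 : 0 < s) (hS : 0 < S)
    (hs : ∫ ω, f ω * f ω ∂P ≤ s) (hθ : 0 ≤ θ) (hθS : s < θ ^ 2 * S) :
    IsTailNegligible S fun u => P {ω | θ * u ≤ |f ω|} := by
  refine .of_le_mul_exp (κ := θ ^ 2 / (2 * s)) hS ?_ 2 fun u hu =>
    (hV.measure_abs_ge_le hf hs0 hs (by positivity)).trans_eq ?_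
  · rw [div_lt_div_iff₀ (by positivity) (by positivity)]
    linarith
  · rw [ENNReal.ofReal_mul zero_le_two]
    congr 3
    · simp
    · ring

/-- The event that the second derivative is positive somewhere on `[a, b]`, in a form that exhibits
a countable set of times. -/
def convexityEvent (X'' : ℝ → Ω → ℝ) (a b : ℝ) : Set Ω :=
  {ω | ∃ q : ℚ, (q : ℝ) ∈ Icc a b ∧ 0 < X'' q ω}

namespace IsC2GaussianProcess

variable [IsProbabilityMeasure P]

lemma exists_isTailNegligible_measure_le_mul_envelope (h : IsC2GaussianProcess P V X X' X'' A B)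
    (hS : 0 < S) :
    ∃ ρ > 0, IsTailNegligible S fun u => P {ω | u ≤ ρ * envelope X X' X'' A B ω} := by
  obtain ⟨c, hc, hfin⟩ := h.exists_lintegral_exp_envelope_lt_top
  lift ∫⁻ ω, ENNReal.ofReal (Real.exp (c * envelope X X' X'' A B ω ^ 2)) ∂P to ℝ≥0
    using hfin.ne with M hM
  have hρ : 0 < √(c * S) := by positivity
  refine ⟨√(c * S), hρ, .of_le_mul_exp (κ := 1 / S) hS (by gcongr; linarith) M fun u hu => ?_⟩
  simp only [← div_le_iff₀' hρ]
  refine (measure_ge_le_exp_mul_lintegral_exp h.measurable_envelope hc.le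
    (by positivity)).trans_eq ?_
  rw [← hM, div_pow, Real.sq_sqrt (by positivity)]
  congr 4
  field_simp

lemma isTailNegligible_measure_exists_le_abs (h : IsC2GaussianProcess P V X X' X'' A B)
    {K : Set ℝ} (hK : K ⊆ Icc A B) (hs0 : 0 < s) (hsS : s < S)
    (hvar : ∀ t ∈ K, ∫ ω, X t ω * X t ω ∂P ≤ s) :
    IsTailNegligible S fun u => P {ω | ∃ t ∈ K, u ≤ |X t ω|} := by
  have hS : 0 < S := hs0.trans hsS
  obtain ⟨ρ, hρ, henv⟩ := h.exists_isTailNegligible_measure_le_mul_envelope hS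
  obtain ⟨θ, hθS, hθ1⟩ := exists_between
    ((Real.sqrt_lt' one_pos).2 (show s / S < 1 ^ 2 by rwa [one_pow, div_lt_one hS]))
  have hθ : 0 < θ := (Real.sqrt_nonneg _).trans_lt hθS
  rw [Real.sqrt_lt' hθ, div_lt_iff₀ hS] at hθS
  obtain ⟨F, hFK, hF, hcover⟩ := finite_approx_of_totallyBounded
    (isCompact_Icc.totallyBounded.subset hK) _ (mul_pos hρ (sub_pos.2 hθ1))
  lift F to Finset ℝ using hF
  have hgrid := IsTailNegligible.finset_sum hS fun y hy =>
    h.isGaussianSpace.isTailNegligible_measure_mul_le_abs (h.jet_mem 0 y (hK (hFK hy))) hs0 hS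
      (hvar y (hFK hy)) hθ.le hθS
  refine (hgrid.add hS henv).mono fun u _ => ?_
  refine (measure_mono ?_).trans ((measure_union_le (⋃ y ∈ F, {ω | θ * u ≤ |X y ω|}) _).trans
    (add_le_add_left (measure_biUnion_finset_le _ _) _))
  rintro ω ⟨t, ht, hut⟩
  obtain ⟨y, hy, hyt⟩ := mem_iUnion₂.1 (hcover ht)
  refine or_iff_not_imp_left.2 fun hlow => ?_
  have hlow' : |X y ω| < θ * u := not_le.1 fun hle => hlow (mem_biUnion hy hle)
  have hincr := h.abs_jet_sub_le 0 (hK (hFK hy)) (hK ht) ω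
  have hgap : u * (1 - θ) ≤ ρ * envelope X X' X'' A B ω * (1 - θ) :=
    calc u * (1 - θ) ≤ |X t ω - X y ω| := by linarith [abs_sub_abs_le_abs_sub (X t ω) (X y ω)]
      _ ≤ envelope X X' X'' A B ω * |t - y| := hincr
      _ ≤ envelope X X' X'' A B ω * (ρ * (1 - θ)) := by
          have := envelope_nonneg (X := X) (X' := X') (X'' := X'') (A := A) (B := B) ω
          gcongr
          exact (mem_ball.1 hyt).le
      _ = _ := by ring
  exact le_of_mul_le_mul_right hgap (sub_pos.2 hθ1)

lemma exists_isTailNegligible_measure_both_signs (h : IsC2GaussianProcess P V X X' X'' A B)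
    (hS : 0 < S) : ∃ ρ > 0, ∀ {t₀ : ℝ} {I : Set ℝ}, I ⊆ Icc A B → I ⊆ ball t₀ ρ →
      IsTailNegligible S fun u =>
        P ({ω | ∃ t ∈ I, u ≤ X t ω} ∩ {ω | ∃ t ∈ I, u ≤ -X t ω}) := by
  obtain ⟨ρ, hρ, henv⟩ := h.exists_isTailNegligible_measure_le_mul_envelope hS
  refine ⟨ρ, hρ, fun {t₀ I} hI hball => henv.mono fun u _ => measure_mono ?_⟩
  rintro ω ⟨⟨t, ht, hut⟩, s, hs, hus⟩
  have hincr : |X t ω - X s ω| ≤ envelope X X' X'' A B ω * |t - s| :=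
    h.abs_jet_sub_le 0 (hI hs) (hI ht) ω
  have hts : |t - s| ≤ 2 * ρ :=
    (dist_triangle_right t s t₀).trans (by linarith [mem_ball.1 (hball ht), mem_ball.1 (hball hs)])
  have := mul_le_mul_of_nonneg_left hts
    (envelope_nonneg (X := X) (X' := X') (X'' := X'') (A := A) (B := B) ω)
  change u ≤ ρ * envelope X X' X'' A B ω
  linarith [le_abs_self (X t ω - X s ω)]

variable {a b v₀ c : ℝ}

lemma isTailNegligible_setLIntegral_upcrossingCount (h : IsC2GaussianProcess P V X X' X'' A B)
    (hab : a < b) (hsub : Icc a b ⊆ Icc A B) (hv₀ : 0 < v₀)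
    (hvar : ∀ t ∈ Icc a b, ∫ ω, X t ω * X t ω ∂P ∈ Icc v₀ S) (hc : 0 < c)
    (hcov : ∀ s ∈ Icc a b, ∀ t ∈ Icc a b, ∫ ω, X s ω * X'' t ω ∂P ≤ -c) :
    IsTailNegligible S fun u =>
      ∫⁻ ω in convexityEvent X'' a b, upcrossingCount X X' (Icc a b) u ω ∂P := by
  have hS : 0 < S := hv₀.trans_le ((hvar a (left_mem_Icc.2 hab.le)).1.trans
    (hvar a (left_mem_Icc.2 hab.le)).2)
  obtain ⟨D, κ, hκ, hD⟩ := h.exists_setLIntegral_upcrossingCount_le hab hsub hv₀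
    fun t ht => (hvar t ht).1
  refine .of_le_mul_one_add_mul_exp (κ := κ * (c / S / 2) ^ 2 + 1 / (2 * S)) hS
    (lt_add_of_pos_left _ (by positivity)) D fun u hu => ?_
  have hu0 : 0 < u := one_pos.trans_le hu
  have hcount := hD (s := S) (u := u) (L := c / S * (u / 2)) (E := convexityEvent X'' a b)
    isOpen_univ (fun t ht => (hvar t ht.1).2) hu0 (by positivity) ?_
  · rw [inter_univ] at hcount
    refine hcount.trans_eq ?_
    rw [mul_assoc (1 + u), ← Real.exp_add]
    ring_nf
  · rintro t ⟨ht, -⟩ ω ⟨q, hq, hpos⟩ hut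
    have hcorr : ∫ ω, X t ω * ratJet X X' X'' A B (2, ⟨q, hsub hq⟩) ω ∂P ≤
        -(c / S) * ∫ ω, X t ω * X t ω ∂P :=
      calc _ ≤ -c := hcov t ht q hq
        _ = -(c / S) * S := by field_simp
        _ ≤ -(c / S) * ∫ ω, X t ω * X t ω ∂P :=
          mul_le_mul_of_nonpos_left (hvar t ht).2 (neg_nonpos.2 (by positivity))
    calc c / S * (u / 2) ≤ c / S * X t ω := by gcongr
      _ ≤ _ := mul_le_supAbs_orthResidual (hv₀.trans_le (hvar t ht).1)
        (h.abs_integral_mul_ratJet_le (hsub ht) hv₀ (hvar t ht).1) (h.bddAbove_ratJet ω) hcorr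
        ((half_pos hu0).le.trans hut) hpos.le

lemma isTailNegligible_lintegral_upcrossingCount (h : IsC2GaussianProcess P V X X' X'' A B)
    (hab : a < b) (hsub : Icc a b ⊆ Icc A B) (hv₀ : 0 < v₀)
    (hvar : ∀ t ∈ Icc a b, v₀ ≤ ∫ ω, X t ω * X t ω ∂P) {U : Set ℝ} (hU : IsOpen U)
    (hs0 : 0 < s) (hsS : s < S) (hvarU : ∀ t ∈ Icc a b ∩ U, ∫ ω, X t ω * X t ω ∂P ≤ s) :
    IsTailNegligible S fun u => ∫⁻ ω, upcrossingCount X X' (Icc a b ∩ U) u ω ∂P := by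
  obtain ⟨D, κ, -, hD⟩ := h.exists_setLIntegral_upcrossingCount_le hab hsub hv₀ hvar
  refine .of_le_mul_one_add_mul_exp (κ := 1 / (2 * s)) (hs0.trans hsS) (by gcongr) D fun u hu => ?_
  rw [← setLIntegral_univ]
  refine (hD hU hvarU (one_pos.trans_le hu) le_rfl fun t _ ω _ _ => supAbs_nonneg _ ω).trans_eq ?_
  simp
  ring_nf

end IsC2GaussianProcess

end RandomPaths

/-! ### Excursions near the variance maximum -/

lemma exists_Icc_of_unique_max {f : ℝ → ℝ} {A B t₀ : ℝ} {p : ℝ → Prop}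
    (hf : ContinuousOn f (Icc A B)) (ht₀ : t₀ ∈ Ioc A B)
    (hlt : ∀ t ∈ Icc A B, t ≠ t₀ → f t < f t₀) (hp : ∀ᶠ t in 𝓝[Icc A B] t₀, p t) :
    ∃ a b m, a < b ∧ Icc a b ⊆ Icc A B ∧ (∀ t ∈ Icc a b, p t) ∧ m < f t₀ ∧ f a ≤ m ∧
      ∀ t ∈ Icc A B, m < f t → t ∈ Icc a b := by
  obtain ⟨ρ, hρ, hball⟩ := Metric.mem_nhdsWithin_iff.1 hp
  obtain ⟨a, ha, hat₀⟩ := exists_between (max_lt ht₀.1 (sub_lt_self t₀ hρ))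
  obtain ⟨b, ht₀b, hb⟩ := exists_between (lt_add_of_pos_right t₀ hρ)
  rw [max_lt_iff] at ha
  have haK : a ∈ Icc A B \ Ioo a b := ⟨⟨ha.1.le, hat₀.le.trans ht₀.2⟩, fun h => h.1.false⟩
  obtain ⟨y, hy, hmax⟩ := (isCompact_Icc.diff isOpen_Ioo).exists_isMaxOn ⟨a, haK⟩
    (hf.mono sdiff_subset)
  have hyt₀ : y ≠ t₀ := fun h => hy.2 (h ▸ ⟨hat₀, ht₀b⟩)
  have hsub : Icc a (min B b) ⊆ Icc A B := Icc_subset_Icc ha.1.le (min_le_left B b)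
  refine ⟨a, min B b, f y, lt_min (hat₀.trans_le ht₀.2) (hat₀.trans ht₀b), hsub,
    fun t ht => hball ⟨?_, hsub ht⟩, hlt y hy.1 hyt₀, hmax haK, fun t ht hyt => ?_⟩
  · rw [Real.ball_eq_Ioo]
    exact ⟨ha.2.trans_le ht.1, (ht.2.trans (min_le_right B b)).trans_lt hb⟩
  · have htab : t ∈ Ioo a b := of_not_not fun hnot => (hmax ⟨ht, hnot⟩).not_gt hyt
    exact ⟨htab.1.le, le_min ht.2 htab.2.le⟩

lemma ofReal_abs_toReal_sub_two_mul_le {p q n r : ℝ≥0∞} (hp : p ≠ ⊤) (hq : q ≠ ⊤)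
    (hpq : p ≤ 2 * q + r) (hqp : 2 * q ≤ p + r) (hqn : q ≤ n + r) (hnq : n ≤ q + r) :
    ENNReal.ofReal |p.toReal - 2 * n.toReal| ≤ 3 * r := by
  rcases eq_or_ne r ⊤ with rfl | hr
  · simp
  have hn : n ≠ ⊤ := ne_top_of_le_ne_top (ENNReal.add_ne_top.2 ⟨hq, hr⟩) hnq
  lift p to ℝ≥0 using hp
  lift q to ℝ≥0 using hq
  lift r to ℝ≥0 using hr
  lift n to ℝ≥0 using hn
  norm_cast at hpq hqp hqn hnq
  rw [← NNReal.coe_le_coe] at hpq hqp hqn hnq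
  push_cast at hpq hqp hqn hnq
  rw [← ENNReal.ofReal_coe_nnreal (p := r), ← ENNReal.ofReal_ofNat 3,
    ← ENNReal.ofReal_mul (by norm_num)]
  refine ENNReal.ofReal_le_ofReal (abs_le.2 ⟨?_, ?_⟩) <;>
    simp only [ENNReal.coe_toReal] <;> linarith

section Count

variable {Ω : Type*} {X X' : ℝ → Ω → ℝ} {M M' : Set ℝ} {u : ℝ} {ω : Ω}

lemma upcrossingCount_mono (hM : M ⊆ M') :
    upcrossingCount X X' M u ω ≤ upcrossingCount X X' M' u ω :=
  ENat.toENNReal_le.2 (encard_le_encard fun _ ht => ⟨hM ht.1, ht.2⟩)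

lemma upcrossingCount_union_le :
    upcrossingCount X X' (M ∪ M') u ω ≤
      upcrossingCount X X' M u ω + upcrossingCount X X' M' u ω := by
  unfold upcrossingCount
  rw [← ENat.toENNReal_add, ENat.toENNReal_le]
  exact (encard_le_encard fun t ht => ht.1.imp (⟨·, ht.2⟩) (⟨·, ht.2⟩)).trans (encard_union_le _ _)

lemma one_le_upcrossingCount (h : ∃ t ∈ M, X t ω = u ∧ 0 < X' t ω) :
    1 ≤ upcrossingCount X X' M u ω := by
  unfold upcrossingCount
  exact_mod_cast one_le_encard_iff_nonempty.2 h

end Count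

namespace IsC2GaussianProcess

variable {Ω : Type*} {X X' X'' : ℝ → Ω → ℝ} {A B : ℝ}
variable [MeasurableSpace Ω] {P : Measure Ω} {V : Submodule ℝ (Ω → ℝ)} {a b v₀ u : ℝ}

lemma measurableSet_exists_le (h : IsC2GaussianProcess P V X X' X'' A B) {K : Set ℝ}
    (hK : IsCompact K) (hsub : K ⊆ Icc A B) (u : ℝ) :
    MeasurableSet {ω | ∃ t ∈ K, u ≤ X t ω} := by
  simpa only [sub_nonpos] using measurableSet_exists_nonpos (Y := fun t ω => u - X t ω) hK
    (fun ω => continuousOn_const.sub ((h.path ω).continuousOn.mono hsub))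
    fun t _ => (h.measurable_apply t).const_sub u

lemma measurable_upcrossingCount (h : IsC2GaussianProcess P V X X' X'' A B) {K : Set ℝ}
    (hK : IsCompact K) (hsub : K ⊆ Icc A B) (u : ℝ) : Measurable (upcrossingCount X X' K u) :=
  _root_.measurable_upcrossingCount hK (fun ω => (h.path ω).continuousOn.mono hsub)
    (fun ω => (h.path ω).continuousOn_deriv.mono hsub) (fun t _ => h.measurable_apply t)
    (fun _ ht => h.measurable_jet 1 (hsub ht)) u

lemma integral_ncard_upcrossingSet (h : IsC2GaussianProcess P V X X' X'' A B) {K : Set ℝ}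
    (hK : IsCompact K) (hsub : K ⊆ Icc A B) (hfin : ∫⁻ ω, upcrossingCount X X' K u ω ∂P ≠ ⊤) :
    ∫ ω, ((upcrossingSet X X' K u ω).ncard : ℝ) ∂P =
      (∫⁻ ω, upcrossingCount X X' K u ω ∂P).toReal := by
  have hm := h.measurable_upcrossingCount hK hsub u
  simp_rw [← toReal_upcrossingCount]
  exact integral_toReal hm.aemeasurable (ae_lt_top hm hfin)

lemma upcrossingCount_le_one (h : IsC2GaussianProcess P V X X' X'' A B)
    (hsub : Icc a b ⊆ Icc A B) {ω : Ω} (hω : ω ∉ convexityEvent X'' a b) :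
    upcrossingCount X X' (Icc a b) u ω ≤ 1 := by
  unfold upcrossingCount
  suffices (upcrossingSet X X' (Icc a b) u ω).encard ≤ 1 from mod_cast this
  rw [encard_le_one_iff]
  have hnot_lt : ∀ s ∈ upcrossingSet X X' (Icc a b) u ω,
      ∀ t ∈ upcrossingSet X X' (Icc a b) u ω, ¬s < t := fun s hs t ht hst =>
    hω (((h.path ω).mono hsub).exists_rat_secondDeriv_pos_of_two_upcrossings hs.1 ht.1 hst
      (hs.2.1.trans ht.2.1.symm) ht.2.2)
  exact fun s t hs ht => le_antisymm (not_lt.1 (hnot_lt t ht s hs)) (not_lt.1 (hnot_lt s hs t ht))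

lemma lintegral_upcrossingCount_le_add (h : IsC2GaussianProcess P V X X' X'' A B)
    (hsub : Icc a b ⊆ Icc A B) : ∫⁻ ω, upcrossingCount X X' (Icc a b) u ω ∂P ≤
      P {ω | ∃ t ∈ Icc a b, u ≤ X t ω} +
        ∫⁻ ω in convexityEvent X'' a b, upcrossingCount X X' (Icc a b) u ω ∂P := by
  set N := upcrossingCount X X' (Icc a b) u
  set E := convexityEvent X'' a b
  set H := {ω | ∃ t ∈ Icc a b, u ≤ X t ω}
  have hH : MeasurableSet H := h.measurableSet_exists_le isCompact_Icc hsub u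
  have hN : ∀ ω, N ω ≤ H.indicator 1 ω + E.indicator N ω := fun ω => by
    by_cases hE : ω ∈ E
    · simp [hE]
    by_cases hcross : (upcrossingSet X X' (Icc a b) u ω).Nonempty
    · obtain ⟨t, ht, htu, -⟩ := hcross
      have hωH : ω ∈ H := ⟨t, ht, htu.ge⟩
      simpa [hE, hωH] using h.upcrossingCount_le_one hsub hE
    · simp [N, upcrossingCount, not_nonempty_iff_eq_empty.1 hcross]
  calc ∫⁻ ω, N ω ∂P ≤ ∫⁻ ω, H.indicator 1 ω + E.indicator N ω ∂P := lintegral_mono hN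
    _ = P H + ∫⁻ ω, E.indicator N ω ∂P := by
        rw [lintegral_add_left (measurable_one.indicator hH), lintegral_indicator_one hH]
    _ ≤ P H + ∫⁻ ω in E, N ω ∂P := add_le_add_right (lintegral_indicator_le N E) _

variable [IsProbabilityMeasure P]

lemma measure_exists_le_le_add_lintegral_upcrossingCount
    (h : IsC2GaussianProcess P V X X' X'' A B) (hab : a < b) (hsub : Icc a b ⊆ Icc A B)
    (hv₀ : 0 < v₀) (hvar : ∀ t ∈ Icc a b, v₀ ≤ ∫ ω, X t ω * X t ω ∂P) (hu : 0 ≤ u) :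
    P {ω | ∃ t ∈ Icc a b, u ≤ X t ω} ≤
      P {ω | u ≤ X a ω} + ∫⁻ ω, upcrossingCount X X' (Icc a b) u ω ∂P := by
  have hcover : {ω | ∃ t ∈ Icc a b, u ≤ X t ω} ⊆ {ω | ∃ t ∈ Icc a b, X t ω = u ∧ X' t ω = 0} ∪
      ({ω | u ≤ X a ω} ∪ {ω | 1 ≤ upcrossingCount X X' (Icc a b) u ω}) := fun ω hex => by
    by_cases htan : ∃ t ∈ Icc a b, X t ω = u ∧ X' t ω = 0
    · exact .inl htan
    refine .inr ((le_or_gt u (X a ω)).imp_right fun ha => one_le_upcrossingCount ?_)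
    exact exists_upcrossing_of_exists_le ((h.path ω).mono hsub).hasDerivWithinAt ha hex
      fun t ht hXu hX' => htan ⟨t, ht, hXu, hX'⟩
  refine (measure_mono hcover).trans ((measure_union_le _ _).trans ?_)
  rw [h.measure_exists_tangency_eq_zero hab hsub hv₀ hvar hu, zero_add]
  refine (measure_union_le _ _).trans ?_
  gcongr
  simpa only [one_mul] using
    mul_meas_ge_le_lintegral (h.measurable_upcrossingCount isCompact_Icc hsub u) 1

lemma measure_exists_le_abs_add_measure_both_signs (h : IsC2GaussianProcess P V X X' X'' A B)
    {K : Set ℝ} (hK : IsCompact K) (hsub : K ⊆ Icc A B) (u : ℝ) :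
    P {ω | ∃ t ∈ K, u ≤ |X t ω|} +
        P ({ω | ∃ t ∈ K, u ≤ X t ω} ∩ {ω | ∃ t ∈ K, u ≤ -X t ω}) =
      2 * P {ω | ∃ t ∈ K, u ≤ X t ω} := by
  have hunion : {ω | ∃ t ∈ K, u ≤ |X t ω|} =
      {ω | ∃ t ∈ K, u ≤ X t ω} ∪ {ω | ∃ t ∈ K, u ≤ -X t ω} := by
    simp only [le_abs, and_or_left, exists_or, ofPred_or]
  rw [hunion, measure_union_add_inter' (h.measurableSet_exists_le hK hsub u),
    h.isGaussianSpace.measure_exists_le_neg_eq (X := X) hK (fun t ht => h.jet_mem 0 t (hsub ht))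
      (fun ω => (h.path ω).continuousOn.mono hsub), two_mul]

/-! ### Maxima and up-crossings -/

variable {S m m' : ℝ}

lemma ofReal_abs_measure_exists_sub_lintegral_upcrossingCount_le
    (h : IsC2GaussianProcess P V X X' X'' A B) (hab : a < b) (hsub : Icc a b ⊆ Icc A B)
    (hv₀ : 0 < v₀) (hvar : ∀ t ∈ Icc a b, v₀ ≤ ∫ ω, X t ω * X t ω ∂P) {M : Set ℝ}
    (hM : IsCompact M) (hMab : M ⊆ Icc a b) (hu : 0 ≤ u) :
    ENNReal.ofReal |(P {ω | ∃ t ∈ Icc A B, u ≤ |X t ω|}).toReal -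
        2 * (∫⁻ ω, upcrossingCount X X' M u ω ∂P).toReal| ≤
      3 * (P {ω | u ≤ X a ω} + ∫⁻ ω, upcrossingCount X X' (Icc a b ∩ Mᶜ) u ω ∂P +
        (P {ω | ∃ t ∈ Icc A B \ Icc a b, u ≤ |X t ω|} +
          P ({ω | ∃ t ∈ Icc a b, u ≤ X t ω} ∩ {ω | ∃ t ∈ Icc a b, u ≤ -X t ω}) +
          ∫⁻ ω in convexityEvent X'' a b, upcrossingCount X X' (Icc a b) u ω ∂P)) := by
  set p := P {ω | ∃ t ∈ Icc A B, u ≤ |X t ω|}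
  set p' := P {ω | ∃ t ∈ Icc a b, u ≤ |X t ω|}
  set q := P {ω | ∃ t ∈ Icc a b, u ≤ X t ω}
  set n := ∫⁻ ω, upcrossingCount X X' M u ω ∂P
  set start := P {ω | u ≤ X a ω}
  set out := ∫⁻ ω, upcrossingCount X X' (Icc a b ∩ Mᶜ) u ω ∂P
  set far := P {ω | ∃ t ∈ Icc A B \ Icc a b, u ≤ |X t ω|}
  set both := P ({ω | ∃ t ∈ Icc a b, u ≤ X t ω} ∩ {ω | ∃ t ∈ Icc a b, u ≤ -X t ω})
  set rare := ∫⁻ ω in convexityEvent X'' a b, upcrossingCount X X' (Icc a b) u ω ∂P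
  have hsigns : p' + both = 2 * q :=
    h.measure_exists_le_abs_add_measure_both_signs isCompact_Icc hsub u
  have hp'p : p' ≤ p := measure_mono fun ω ⟨t, ht, htu⟩ => ⟨t, hsub ht, htu⟩
  have hpp' : p ≤ p' + far := le_trans (measure_mono fun ω ⟨t, ht, htu⟩ =>
    (em (t ∈ Icc a b)).imp (⟨t, ·, htu⟩) (⟨t, ⟨ht, ·⟩, htu⟩)) (measure_union_le _ _)
  have hsplit : ∫⁻ ω, upcrossingCount X X' (Icc a b) u ω ∂P ≤ n + out := by
    rw [← lintegral_add_left (h.measurable_upcrossingCount hM (hMab.trans hsub) u)]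
    refine lintegral_mono fun ω => le_trans (upcrossingCount_mono fun t ht => ?_)
      upcrossingCount_union_le
    exact (em (t ∈ M)).imp_right (⟨ht, ·⟩)
  refine ofReal_abs_toReal_sub_two_mul_le (measure_ne_top _ _) (measure_ne_top P _ : q ≠ ⊤)
    ?_ ?_ ?_ ?_
  · calc p ≤ p' + far := hpp'
      _ ≤ 2 * q + far := add_le_add_left (hsigns ▸ le_self_add) _
      _ ≤ _ := add_le_add_right (le_add_left (le_add_right le_self_add)) _
  · calc 2 * q = p' + both := hsigns.symm
      _ ≤ p + both := add_le_add_left hp'p _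
      _ ≤ _ := add_le_add_right (le_add_left (le_add_right le_add_self)) _
  · calc q ≤ start + ∫⁻ ω, upcrossingCount X X' (Icc a b) u ω ∂P :=
          h.measure_exists_le_le_add_lintegral_upcrossingCount hab hsub hv₀ hvar hu
      _ ≤ start + (n + out) := add_le_add_right hsplit _
      _ = n + (start + out) := add_left_comm _ _ _
      _ ≤ _ := add_le_add_right le_self_add _
  · calc n ≤ ∫⁻ ω, upcrossingCount X X' (Icc a b) u ω ∂P :=
          lintegral_mono fun ω => upcrossingCount_mono hMab
      _ ≤ q + rare := h.lintegral_upcrossingCount_le_add hsub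
      _ ≤ _ := add_le_add_right (le_add_left le_add_self) _

lemma isTailNegligible_abs_sub_of_window (h : IsC2GaussianProcess P V X X' X'' A B) (hab : a < b)
    (hsub : Icc a b ⊆ Icc A B) (hv₀ : 0 < v₀)
    (hvar : ∀ t ∈ Icc a b, v₀ ≤ ∫ ω, X t ω * X t ω ∂P)
    (hrare : IsTailNegligible S fun u =>
      ∫⁻ ω in convexityEvent X'' a b, upcrossingCount X X' (Icc a b) u ω ∂P)
    (hboth : IsTailNegligible S fun u =>
      P ({ω | ∃ t ∈ Icc a b, u ≤ X t ω} ∩ {ω | ∃ t ∈ Icc a b, u ≤ -X t ω}))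
    (hm0 : 0 < m) (hmm' : m < m') (hm'S : m' < S) (ha : ∫ ω, X a ω * X a ω ∂P ≤ m)
    (hwin : ∀ t ∈ Icc A B, m < ∫ ω, X t ω * X t ω ∂P → t ∈ Icc a b) :
    IsTailNegligible S fun u => ENNReal.ofReal |(P {ω | ∃ t ∈ Icc A B, u ≤ |X t ω|}).toReal -
      2 * ∫ ω, ((upcrossingSet X X'
        {t ∈ Icc A B | m' ≤ ∫ ω, X t ω * X t ω ∂P} u ω).ncard : ℝ) ∂P| := by
  have hS : 0 < S := hm0.trans (hmm'.trans hm'S)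
  set M := {t ∈ Icc A B | m' ≤ ∫ ω, X t ω * X t ω ∂P}
  have hM : IsCompact M := isCompact_Icc.of_isClosed_subset
    (h.continuousOn_variance.preimage_isClosed_of_isClosed isClosed_Icc isClosed_Ici)
    inter_subset_left
  have hMab : M ⊆ Icc a b := fun t ht => hwin t ht.1 (hmm'.trans_le ht.2)
  have hstart : IsTailNegligible S fun u => P {ω | u ≤ X a ω} :=
    (h.isGaussianSpace.isTailNegligible_measure_mul_le_abs (θ := 1)
      (h.jet_mem 0 a (hsub (left_mem_Icc.2 hab.le))) hm0 hS ha zero_le_one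
      (by linarith)).mono fun u _ => measure_mono fun ω (hω : u ≤ X a ω) =>
        (one_mul u).trans_le (hω.trans (le_abs_self (X a ω)))
  have hout : IsTailNegligible S fun u => ∫⁻ ω, upcrossingCount X X' (Icc a b ∩ Mᶜ) u ω ∂P :=
    h.isTailNegligible_lintegral_upcrossingCount hab hsub hv₀ hvar
      hM.isClosed.isOpen_compl (hm0.trans hmm') hm'S fun t ht =>
        (not_le.1 fun hle => ht.2 ⟨hsub ht.1, hle⟩).le
  have hfar : IsTailNegligible S fun u => P {ω | ∃ t ∈ Icc A B \ Icc a b, u ≤ |X t ω|} :=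
    h.isTailNegligible_measure_exists_le_abs sdiff_subset hm0 (hmm'.trans hm'S) fun t ht =>
      not_lt.1 fun hlt => ht.2 (hwin t ht.1 hlt)
  refine (((hstart.add hS hout).add hS ((hfar.add hS hboth).add hS hrare)).const_mul 3).mono
    fun u hu => ?_
  have hfin : ∫⁻ ω, upcrossingCount X X' M u ω ∂P ≠ ⊤ := ne_top_of_le_ne_top
    (ENNReal.add_ne_top.2 ⟨measure_ne_top _ _, hrare.ne_top hu⟩)
    ((lintegral_mono fun ω => upcrossingCount_mono hMab).trans
      (h.lintegral_upcrossingCount_le_add hsub))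
  rw [h.integral_ncard_upcrossingSet hM (hMab.trans hsub) hfin]
  exact h.ofReal_abs_measure_exists_sub_lintegral_upcrossingCount_le hab hsub hv₀ hvar
    hM hMab (zero_le_one.trans hu)

theorem exists_isTailNegligible_abs_sub (h : IsC2GaussianProcess P V X X' X'' A B) {t₀ : ℝ}
    (ht₀ : t₀ ∈ Ioc A B)
    (hlt : ∀ t ∈ Icc A B, t ≠ t₀ → ∫ ω, X t ω * X t ω ∂P < ∫ ω, X t₀ ω * X t₀ ω ∂P)
    (hneg : ∫ ω, X t₀ ω * X'' t₀ ω ∂P < 0) :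
    ∃ δ > 0, IsTailNegligible (∫ ω, X t₀ ω * X t₀ ω ∂P) fun u =>
      ENNReal.ofReal |(P {ω | ∃ t ∈ Icc A B, u ≤ |X t ω|}).toReal -
        2 * ∫ ω, ((upcrossingSet X X' {t ∈ Icc A B | (∫ ω, X t₀ ω * X t₀ ω ∂P) / (1 + δ) ≤
          ∫ ω, X t ω * X t ω ∂P} u ω).ncard : ℝ) ∂P| := by
  have ht₀' : t₀ ∈ Icc A B := Ioc_subset_Icc_self ht₀
  set S := ∫ ω, X t₀ ω * X t₀ ω ∂P
  have hS : 0 < S := by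
    refine (integral_nonneg fun ω => mul_self_nonneg (X t₀ ω)).lt_of_ne' fun hS => hneg.ne ?_
    have hX := (integral_eq_zero_iff_of_nonneg (fun ω => mul_self_nonneg (X t₀ ω))
      (h.integrable_jet_mul_jet 0 0 ht₀' ht₀')).1 hS
    exact integral_eq_zero_of_ae (hX.mono fun ω hω => mul_eq_zero_of_left (mul_self_eq_zero.1 hω) _)
  obtain ⟨ρ, hρ, c, hc, hcov⟩ := h.exists_integral_mul_secondDeriv_le ht₀' hneg
  obtain ⟨ρ', hρ', hboth⟩ := h.exists_isTailNegligible_measure_both_signs hS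
  have hnear : ∀ᶠ t in 𝓝[Icc A B] t₀,
      (t ∈ ball t₀ ρ ∧ t ∈ ball t₀ ρ') ∧ S / 2 < ∫ ω, X t ω * X t ω ∂P :=
    Eventually.and (nhdsWithin_le_nhds (inter_mem (ball_mem_nhds t₀ hρ) (ball_mem_nhds t₀ hρ')))
      ((h.continuousOn_variance t₀ ht₀').eventually_const_lt (half_lt_self hS))
  obtain ⟨a, b, m, hab, hsub, hp, hmS, ha, hwin⟩ :=
    exists_Icc_of_unique_max h.continuousOn_variance ht₀ hlt hnear
  have hm0 : 0 < m := (half_pos hS).trans ((hp a (left_mem_Icc.2 hab.le)).2.trans_le ha)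
  obtain ⟨m', hmm', hm'S⟩ := exists_between hmS
  have hle : ∀ t ∈ Icc A B, ∫ ω, X t ω * X t ω ∂P ≤ S := fun t ht => by
    rcases eq_or_ne t t₀ with rfl | hne
    exacts [le_rfl, (hlt t ht hne).le]
  have hrare := h.isTailNegligible_setLIntegral_upcrossingCount hab hsub (half_pos hS)
    (fun t ht => ⟨(hp t ht).2.le, hle t (hsub ht)⟩) hc
    fun s hs t ht => hcov s (hsub hs) t (hsub ht) (hp s hs).1.1 (hp t ht).1.1
  have hm' : S / (1 + (S / m' - 1)) = m' := by
    rw [add_sub_cancel, div_div_cancel₀ hS.ne']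
  refine ⟨S / m' - 1, sub_pos.2 ((one_lt_div (hm0.trans hmm')).2 hm'S), ?_⟩
  rw [hm']
  exact h.isTailNegligible_abs_sub_of_window hab hsub (half_pos hS) (fun t ht => (hp t ht).2.le)
    hrare (hboth hsub fun t ht => (hp t ht).1.2) hm0 hmm' hm'S ha hwin

end IsC2GaussianProcess

section Modification

variable {Ω : Type*} [MeasurableSpace Ω] {P : Measure Ω} {X : ℝ → Ω → ℝ} {A B : ℝ}

lemma exists_measurable_modification {p : (ℝ → ℝ) → Prop} (hX : Measurable (Function.uncurry X))
    (hp0 : p fun _ => 0) (hp : ∀ᵐ ω ∂P, p fun t => X t ω) :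
    ∃ Y : ℝ → Ω → ℝ, Measurable (Function.uncurry Y) ∧ (∀ ω, p fun t => Y t ω) ∧
      (fun ω t => Y t ω) =ᵐ[P] fun ω t => X t ω := by
  obtain ⟨N, hsub, hN, hN0⟩ := exists_measurable_superset_of_null (ae_iff.1 hp)
  refine ⟨fun t => Nᶜ.indicator (X t), hX.indicator (measurable_snd hN.compl), fun ω => ?_, ?_⟩
  · by_cases hω : ω ∈ N
    · simpa [hω] using hp0
    · simpa [hω] using not_not.1 fun hnot => hω (hsub hnot)
  · filter_upwards [measure_eq_zero_iff_ae_notMem.1 hN0] with ω hω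
    exact funext fun t => indicator_of_mem hω _

lemma IsC2GaussianProcess.exists_of_contDiffOn (hAB : A < B)
    (hX : Measurable (Function.uncurry X))
    (hGauss : ∀ (n : ℕ) (c : Fin n → ℝ) (t : Fin n → ℝ), (∀ i, t i ∈ Icc A B) →
      ∃ v : ℝ≥0, P.map (fun ω => ∑ i, c i * X (t i) ω) = gaussianReal 0 v)
    (hpath : ∀ ω, ContDiffOn ℝ 2 (fun t => X t ω) (Icc A B)) [IsProbabilityMeasure P] :
    ∃ V X'', IsC2GaussianProcess P V X (fun t ω => derivWithin (fun s => X s ω) (Icc A B) t) X''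
      A B := by
  set X' : ℝ → Ω → ℝ := fun t ω => derivWithin (fun s => X s ω) (Icc A B) t
  let X'' : ℝ → Ω → ℝ := fun t ω => derivWithin (fun s => X' s ω) (Icc A B) t
  have hjet : ∀ ω, HasContSecondDerivOn (X · ω) (X' · ω) (X'' · ω) (Icc A B) := fun ω =>
    .of_contDiffOn (uniqueDiffOn_Icc hAB) (hpath ω)
  have hacc : ∀ t ∈ Icc A B, AccPt t (𝓟 (Icc A B)) := fun t ht =>
    (uniqueDiffOn_Icc hAB t ht).accPt
  set V := Submodule.span ℝ (range fun t : Icc A B => X t)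
  have hV : IsGaussianSpace P V :=
    .span_range (fun t => hX.comp measurable_prodMk_left) fun n c i =>
      hGauss n c (fun k => i k) fun k => (i k).2
  have hX_mem : ∀ t ∈ Icc A B, X t ∈ V := fun t ht => Submodule.subset_span ⟨⟨t, ht⟩, rfl⟩
  have hX'_mem : ∀ t ∈ Icc A B, X' t ∈ pointwiseClosure V := fun t ht =>
    mem_pointwiseClosure_of_hasDerivWithinAt hX_mem ht (hacc t ht) fun ω =>
      (hjet ω).hasDerivWithinAt t ht
  have hX''_mem : ∀ t ∈ Icc A B, X'' t ∈ pointwiseClosure (pointwiseClosure V) := fun t ht =>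
    mem_pointwiseClosure_of_hasDerivWithinAt hX'_mem ht (hacc t ht) fun ω =>
      (hjet ω).hasDerivWithinAt_deriv t ht
  refine ⟨pointwiseClosure (pointwiseClosure V), X'', hAB, hX,
    hV.pointwiseClosure.pointwiseClosure, fun k t ht => ?_, hjet⟩
  fin_cases k
  exacts [le_pointwiseClosure _ (le_pointwiseClosure _ (hX_mem t ht)),
    le_pointwiseClosure _ (hX'_mem t ht), hX''_mem t ht]

end Modification

end

/-- Centered Gaussian process on `[A,B]`, a.s. `C²` paths, `C²` covariance,
variance maximal at the unique point `t₀ ∈ (A,B]` with `(σ²)′(t₀) = 0` and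
`ℙ(∂ₜX(t₀) = 0) < 1`. Then there are `δ, χ, C, u₀ > 0` such that for `u ≥ u₀`,
`|ℙ(max_{[A,B]}|X| ≥ u) − 2E[N_u⁺(𝓜(δ))]| ≤ C e^{−u²(1+χ)/(2S)}`, where `N_u⁺(M)` is the
number of up-crossings of the level `u` on `M` and `𝓜(δ) = {t ∈ [A,B] : σ²(t) ≥ S/(1+δ)}`. -/
theorem statement2
    {Ω : Type*} [MeasurableSpace Ω] (P : Measure Ω) [IsProbabilityMeasure P]
    (A B : ℝ) (hAB : A < B)
    (X : ℝ → Ω → ℝ)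
    (hjm : Measurable (Function.uncurry X))
    (hGauss : ∀ (n : ℕ) (c : Fin n → ℝ) (t : Fin n → ℝ),
      (∀ i, t i ∈ Set.Icc A B) →
      ∃ v : ℝ≥0, Measure.map (fun ω => ∑ i, c i * X (t i) ω) P = gaussianReal 0 v)
    (hpaths : ∀ᵐ ω ∂P, ContDiffOn ℝ 2 (fun t => X t ω) (Set.Icc A B))
    (r : ℝ → ℝ → ℝ)
    (hr : ∀ s t, r s t = ∫ ω, X s ω * X t ω ∂P)
    (hrC2 : ContDiffOn ℝ 2 (fun q : ℝ × ℝ => r q.1 q.2) (Set.Icc A B ×ˢ Set.Icc A B))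
    (t₀ : ℝ) (ht₀ : t₀ ∈ Set.Ioc A B)
    (hmax : ∀ t ∈ Set.Icc A B, r t t ≤ r t₀ t₀)
    (huniq : ∀ t ∈ Set.Icc A B, r t t = r t₀ t₀ → t = t₀)
    (hder0 : derivWithin (fun t => r t t) (Set.Icc A B) t₀ = 0)
    (hnondeg : P {ω | derivWithin (fun s => X s ω) (Set.Icc A B) t₀ = 0} < 1) :
    ∃ δ > (0:ℝ), ∃ χ > (0:ℝ), ∃ C > (0:ℝ), ∃ u₀ > (0:ℝ), ∀ u ≥ u₀,
      |(P {ω | ∃ t ∈ Set.Icc A B, u ≤ |X t ω|}).toReal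
          - 2 * ∫ ω, ((Set.ncard {t ∈ {t ∈ Set.Icc A B | r t₀ t₀ / (1 + δ) ≤ r t t} |
              X t ω = u ∧ 0 < derivWithin (fun s => X s ω) (Set.Icc A B) t} : ℕ) : ℝ) ∂P|
        ≤ C * Real.exp (-(u ^ 2) * (1 + χ) / (2 * r t₀ t₀)) := by
  obtain ⟨Y, hYm, hYpath, hYX⟩ :=
    exists_measurable_modification hjm (p := (ContDiffOn ℝ 2 · (Icc A B))) contDiffOn_const hpaths
  have hYX' : ∀ {α : Type} (F : (ℝ → ℝ) → α), (fun ω => F (Y · ω)) =ᵐ[P] fun ω => F (X · ω) :=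
    fun F => hYX.fun_comp F
  obtain ⟨V, Y'', hY⟩ := IsC2GaussianProcess.exists_of_contDiffOn hAB hYm (fun n c t ht =>
    (Measure.map_congr (hYX' fun x => ∑ i, c i * x (t i))).symm ▸ hGauss n c t ht) hYpath
  have hvar : ∀ t, ∫ ω, Y t ω * Y t ω ∂P = r t t := fun t =>
    (integral_congr_ae (hYX' fun x => x t * x t)).trans (hr t t).symm
  have hnd : P {ω | derivWithin (fun s => Y s ω) (Icc A B) t₀ = 0} < 1 :=
    (measure_congr (hYX' fun x => derivWithin x (Icc A B) t₀ = 0)).trans_lt hnondeg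
  have hneg := hY.integral_mul_secondDeriv_neg ht₀ (by simpa only [hvar, isMaxOn_iff] using hmax)
    (by simpa only [hvar] using hder0) hnd
  obtain ⟨δ, hδ, htail⟩ := hY.exists_isTailNegligible_abs_sub ht₀ (fun t ht hne => by
    simpa only [hvar] using (hmax t ht).lt_of_ne fun heq => hne (huniq t ht heq)) hneg
  have hprob : ∀ u, P {ω | ∃ t ∈ Icc A B, u ≤ |Y t ω|} = P {ω | ∃ t ∈ Icc A B, u ≤ |X t ω|} :=
    fun u => measure_congr (hYX' fun x => ∃ t ∈ Icc A B, u ≤ |x t|)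
  have hcount : ∀ (M : Set ℝ) u,
      ∫ ω, ({t ∈ M | Y t ω = u ∧ 0 < derivWithin (Y · ω) (Icc A B) t}.ncard : ℝ) ∂P =
        ∫ ω, ({t ∈ M | X t ω = u ∧ 0 < derivWithin (X · ω) (Icc A B) t}.ncard : ℝ) ∂P := fun M u =>
    integral_congr_ae (hYX' fun x => ({t ∈ M | x t = u ∧ 0 < derivWithin x (Icc A B) t}.ncard : ℝ))
  simp only [hvar, hprob, upcrossingSet, hcount] at htail
  exact ⟨δ, hδ, htail.exists_le_mul_exp⟩
end
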